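/- arXiv:1207.1480 — 4 statements merged into one kernel-verified Lean document; each statement's English description precedes it below -/
import Mathlib

section
/- Let G be an infinite d-regular graph with spectral radius ρ < 1 and let p ∈ [0,1] satisfy p(d-1)ρ < 1. Then for vertices x, y at graph distance R, the two-point connection probability satisfies P_p(x ↔ y) ≤ C·(p(d-1)ρ)^R where C = d/((d-1)(1-ρ)(1 - p(d-1)ρ)). In particular P_p(x ↔ y) → 0 as R → ∞. -/
open MeasureTheory Filter Set
open scoped ENNReal

namespace SimpleGraph

variable {V : Type*}

/-- n-step transition kernel of the simple random walk. -/
noncomputable def srw (G : SimpleGraph V) [DecidableEq V] [∀ v, Fintype (G.neighborSet v)] :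
    ℕ → V → V → ℝ
  | 0, x, y => if x = y then 1 else 0
  | n + 1, x, y => ∑ z ∈ G.neighborFinset x, (G.degree x : ℝ)⁻¹ * srw G n z y

/-- auxiliary kernel of the non-backtracking walk: `nbwAux n prev cur y` is the probability that
the walk currently at `cur`, having just come from `prev`, is at `y` after `n` more steps. -/
noncomputable def nbwAux (G : SimpleGraph V) [DecidableEq V] [∀ v, Fintype (G.neighborSet v)] :
    ℕ → V → V → V → ℝ
  | 0, _, c, y => if c = y then 1 else 0
  | n + 1, prev, c, y =>
      ∑ z ∈ (G.neighborFinset c).erase prev, ((G.degree c : ℝ) - 1)⁻¹ * nbwAux G n c z y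

/-- n-step transition kernel of the non-backtracking random walk (first step uniform). -/
noncomputable def nbw (G : SimpleGraph V) [DecidableEq V] [∀ v, Fintype (G.neighborSet v)] :
    ℕ → V → V → ℝ
  | 0, x, y => if x = y then 1 else 0
  | n + 1, x, y => ∑ z ∈ G.neighborFinset x, (G.degree x : ℝ)⁻¹ * nbwAux G n x z y

/-- spectral radius of the simple random walk, `ρ = lim (p^{2n}(x,x))^{1/2n}`. -/
noncomputable def spectralRadius (G : SimpleGraph V) [DecidableEq V]
    [∀ v, Fintype (G.neighborSet v)] (x : V) : ℝ :=
  Filter.limsup (fun n : ℕ => (G.srw (2 * n) x x) ^ ((2 * n : ℝ))⁻¹) Filter.atTop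

/-- a walk all of whose edges are open in the percolation configuration `ω`. -/
def openWalk (G : SimpleGraph V) (ω : G.edgeSet → Bool) {x y : V} (w : G.Walk x y) : Prop :=
  ∀ e (he : e ∈ w.edges), ω ⟨e, w.edges_subset_edgeSet he⟩ = true

/-- `x` and `y` are connected by an open path. -/
def percConn (G : SimpleGraph V) (ω : G.edgeSet → Bool) (x y : V) : Prop :=
  ∃ w : G.Walk x y, G.openWalk ω w

/-- the open cluster of `x`. -/
def percCluster (G : SimpleGraph V) (ω : G.edgeSet → Bool) (x : V) : Set V :=
  {y | G.percConn ω x y}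

/-- the event that the shortest open path between `x` and `y` has length exactly `n`. -/
def shortestOpenConn (G : SimpleGraph V) (ω : G.edgeSet → Bool) (x y : V) (n : ℕ) : Prop :=
  (∃ w : G.Walk x y, w.IsPath ∧ w.length = n ∧ G.openWalk ω w) ∧
    ∀ w : G.Walk x y, G.openWalk ω w → n ≤ w.length

/-- `μ` is the Bernoulli(p) bond percolation measure: a probability measure under which the
states of edges are i.i.d., each open with probability `p`. -/
def IsBernoulliPercolation (G : SimpleGraph V) (p : ℝ)
    (μ : Measure (G.edgeSet → Bool)) : Prop :=
  IsProbabilityMeasure μ ∧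
    ∀ (s : Finset G.edgeSet) (b : G.edgeSet → Bool),
      μ {ω | ∀ e ∈ s, ω e = b e} = ∏ e ∈ s, ENNReal.ofReal (if b e then p else 1 - p)

/-- critical percolation probability, relative to a family `P p` of percolation measures. -/
noncomputable def percCritical (G : SimpleGraph V)
    (P : ℝ → Measure (G.edgeSet → Bool)) : ℝ :=
  sInf {p : ℝ | p ∈ Set.Icc (0:ℝ) 1 ∧ 0 < P p {ω | ∃ x, (G.percCluster ω x).Infinite}}

/-- `c_n(x)`: number of self-avoiding walks of length `n` from `x` to `y`. -/
noncomputable def sawCountTo (G : SimpleGraph V) (x y : V) (n : ℕ) : ℕ :=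
  Nat.card {w : G.Walk x y // w.IsPath ∧ w.length = n}

/-- `c_n`: number of self-avoiding walks of length `n` starting at `x`. -/
noncomputable def sawCount (G : SimpleGraph V) (x : V) (n : ℕ) : ℕ :=
  Nat.card {w : (y : V) × G.Walk x y // w.2.IsPath ∧ w.2.length = n}

/-- the connective constant `μ = inf_n c_n^{1/n}`. -/
noncomputable def connectiveConstant (G : SimpleGraph V) (x : V) : ℝ :=
  ⨅ n : ℕ+, (G.sawCount x n : ℝ) ^ (((n : ℕ) : ℝ))⁻¹

/-- the self-avoiding-walk two-point generating function `G_z(x)`. -/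
noncomputable def sawGen (G : SimpleGraph V) (x₀ : V) (z : ℝ) (x : V) : ℝ≥0∞ :=
  ∑' n : ℕ, (G.sawCountTo x₀ x n : ℝ≥0∞) * (ENNReal.ofReal z) ^ n

/-- vertex-transitivity. -/
def IsVertexTransitive (G : SimpleGraph V) : Prop :=
  ∀ x y : V, ∃ φ : G ≃g G, φ x = y

end SimpleGraph

namespace Stmt6
open SimpleGraph

variable {V : Type*} [DecidableEq V] (G : SimpleGraph V) [∀ v, Fintype (G.neighborSet v)]

/-- number of non-backtracking walks of length `n` from `c` to `y`, first step avoiding `prev` -/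
def cntB : ℕ → V → V → V → ℕ
  | 0, _, c, y => if c = y then 1 else 0
  | n + 1, prev, c, y => ∑ z ∈ (G.neighborFinset c).erase prev, cntB n c z y

/-- number of non-backtracking walks of length `n` -/
def cntN : ℕ → V → V → ℕ
  | 0, x, y => if x = y then 1 else 0
  | n + 1, x, y => ∑ z ∈ G.neighborFinset x, cntB G n x z y

theorem existsB (n : ℕ) : ∀ prev c y : V, ∃ F : Finset (G.Walk c y),
    (∀ w : G.Walk c y, w.IsPath → w.length = n → prev ∉ w.support → w ∈ F) ∧
      F.card ≤ cntB G n prev c y := by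
  classical
  induction n with
  | zero =>
    intro prev c y
    by_cases h : c = y
    · subst h
      refine ⟨{Walk.nil}, ?_, by simp [cntB]⟩
      intro w _ hl _
      rw [Finset.mem_singleton]
      exact Walk.eq_nil_iff_nil.2 (Walk.length_eq_zero_iff.1 hl)
    · refine ⟨∅, ?_, by simp⟩
      intro w _ hl _
      exact absurd (Walk.eq_of_length_eq_zero hl) h
  | succ n ih =>
    intro prev c y
    choose F hF hc using fun z => ih c z y
    refine ⟨((G.neighborFinset c).erase prev).attach.biUnion fun z =>
      (F z.1).image (Walk.cons ((G.mem_neighborFinset c z.1).1 (Finset.mem_of_mem_erase z.2))),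
      ?_, ?_⟩
    · intro w hp hl hs
      cases w with
      | nil => simp at hl
      | @cons _ z _ h w' =>
        rw [Walk.cons_isPath_iff] at hp
        simp only [Walk.length_cons, Nat.add_right_cancel_iff] at hl
        simp only [Walk.support_cons, List.mem_cons, not_or] at hs
        rw [Finset.mem_biUnion]
        have hz : z ≠ prev := by
          rintro rfl
          exact hs.2 w'.start_mem_support
        refine ⟨⟨z, ?_⟩, Finset.mem_attach _ _, ?_⟩
        · rw [Finset.mem_erase, G.mem_neighborFinset]
          exact ⟨hz, h⟩
        · exact Finset.mem_image_of_mem _ (hF z w' hp.1 hl hp.2)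
    · refine Finset.card_biUnion_le.trans ?_
      rw [cntB, ← Finset.sum_attach ((G.neighborFinset c).erase prev) fun z => cntB G n c z y]
      exact Finset.sum_le_sum fun z _ => Finset.card_image_le.trans (hc _)

theorem existsN (n : ℕ) (x y : V) : ∃ F : Finset (G.Walk x y),
    (∀ w : G.Walk x y, w.IsPath → w.length = n → w ∈ F) ∧ F.card ≤ cntN G n x y := by
  classical
  cases n with
  | zero =>
    by_cases h : x = y
    · subst h
      refine ⟨{Walk.nil}, ?_, by simp [cntN]⟩
      intro w _ hl
      rw [Finset.mem_singleton]
      exact Walk.eq_nil_iff_nil.2 (Walk.length_eq_zero_iff.1 hl)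
    · refine ⟨∅, ?_, by simp⟩
      intro w _ hl
      exact absurd (Walk.eq_of_length_eq_zero hl) h
  | succ n =>
    choose F hF hc using fun z => existsB G n x z y
    refine ⟨(G.neighborFinset x).attach.biUnion fun z =>
      (F z.1).image (Walk.cons ((G.mem_neighborFinset x z.1).1 z.2)), ?_, ?_⟩
    · intro w hp hl
      cases w with
      | nil => simp at hl
      | @cons _ z _ h w' =>
        rw [Walk.cons_isPath_iff] at hp
        simp only [Walk.length_cons, Nat.add_right_cancel_iff] at hl
        rw [Finset.mem_biUnion]
        refine ⟨⟨z, (G.mem_neighborFinset x z).2 h⟩, Finset.mem_attach _ _, ?_⟩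
        exact Finset.mem_image_of_mem _ (hF z w' hp.1 hl hp.2)
    · refine Finset.card_biUnion_le.trans ?_
      rw [cntN, ← Finset.sum_attach (G.neighborFinset x) fun z => cntB G n x z y]
      exact Finset.sum_le_sum fun z _ => Finset.card_image_le.trans (hc _)

theorem rec0 (x y : V) : ∑ z ∈ G.neighborFinset x, cntN G 0 z y = cntN G 1 x y := by
  simp [cntN, cntB]

theorem rec_aux (n : ℕ) (x y : V) : ∑ z ∈ G.neighborFinset x, cntN G (n + 1) z y =
    cntN G (n + 2) x y + ∑ z ∈ G.neighborFinset x, cntB G n z x y := by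
  rw [cntN, ← Finset.sum_add_distrib]
  refine Finset.sum_congr rfl fun z hz => ?_
  have hx : x ∈ G.neighborFinset z := by
    rw [G.mem_neighborFinset] at hz ⊢
    exact hz.symm
  rw [cntN, cntB, Finset.sum_erase_add _ _ hx]

variable {d : ℕ}
theorem rec1 (hreg : G.IsRegularOfDegree d) (x y : V) : ∑ z ∈ G.neighborFinset x, cntN G 1 z y =
    cntN G 2 x y + d * cntN G 0 x y := by
  rw [rec_aux]
  simp [cntB, cntN, hreg.degree_eq]

theorem rec2 (hreg : G.IsRegularOfDegree d) (hd : 2 ≤ d) (n : ℕ) (x y : V) : ∑ z ∈ G.neighborFinset x, cntN G (n + 2) z y =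
    cntN G (n + 3) x y + (d - 1) * cntN G (n + 1) x y := by
  rw [rec_aux]
  congr 1
  simp only [cntB, cntN]
  have h : ∀ z ∈ G.neighborFinset x,
      ∑ w ∈ (G.neighborFinset x).erase z, cntB G n x w y + cntB G n x z y =
        ∑ w ∈ G.neighborFinset x, cntB G n x w y := fun z hz => Finset.sum_erase_add _ _ hz
  have h2 := Finset.sum_congr rfl h
  rw [Finset.sum_add_distrib, Finset.sum_const, card_neighborFinset_eq_degree,
    hreg.degree_eq, smul_eq_mul] at h2
  obtain ⟨e, rfl⟩ : ∃ e, d = e + 1 := ⟨d - 1, by omega⟩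
  simp only [Nat.add_sub_cancel]
  linarith

theorem srw_succ (hreg : G.IsRegularOfDegree d) (n : ℕ) (x y : V) :
    G.srw (n + 1) x y = (d : ℝ)⁻¹ * ∑ z ∈ G.neighborFinset x, G.srw n z y := by
  rw [srw, Finset.mul_sum, hreg.degree_eq]

theorem srw_nonneg (n : ℕ) : ∀ x y : V, 0 ≤ G.srw n x y := by
  induction n with
  | zero => intro x y; rw [srw]; split_ifs <;> norm_num
  | succ n ih =>
    intro x y; rw [srw]
    exact Finset.sum_nonneg fun z _ => mul_nonneg (by positivity) (ih _ _)

theorem srw_le_one (hreg : G.IsRegularOfDegree d) (hd : 2 ≤ d) (n : ℕ) : ∀ x y : V, G.srw n x y ≤ 1 := by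
  induction n with
  | zero => intro x y; rw [srw]; split_ifs <;> norm_num
  | succ n ih =>
    intro x y; rw [srw_succ G hreg]
    have h : ∑ z ∈ G.neighborFinset x, G.srw n z y ≤ d := by
      refine (Finset.sum_le_card_nsmul _ _ 1 fun z _ => ih z y).trans ?_
      simp [hreg.degree_eq]
    have hd0 : (0:ℝ) < d := by exact_mod_cast (by omega : 0 < d)
    rw [inv_mul_le_iff₀ hd0]
    simpa using h

theorem srw_right (hreg : G.IsRegularOfDegree d) (n : ℕ) : ∀ x y : V,
    G.srw (n + 1) x y = (d : ℝ)⁻¹ * ∑ z ∈ G.neighborFinset y, G.srw n x z := by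
  induction n with
  | zero =>
    intro x y
    rw [srw_succ G hreg]
    congr 1
    simp only [srw, Finset.sum_ite_eq', Finset.sum_ite_eq]
    refine if_congr ?_ rfl rfl
    rw [G.mem_neighborFinset, G.mem_neighborFinset, G.adj_comm]
  | succ n ih =>
    intro x y
    rw [srw_succ G hreg]
    congr 1
    rw [Finset.sum_congr rfl fun z _ => ih z y,
      Finset.sum_congr rfl fun z _ => srw_succ G hreg n x z,
      ← Finset.mul_sum, ← Finset.mul_sum, Finset.sum_comm]

theorem srw_symm (hreg : G.IsRegularOfDegree d) (n : ℕ) : ∀ x y : V, G.srw n x y = G.srw n y x := by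
  induction n with
  | zero => intro x y; simp only [srw, eq_comm]
  | succ n ih =>
    intro x y
    rw [srw_succ G hreg, srw_right G hreg]
    congr 1
    exact Finset.sum_congr rfl fun z _ => ih _ _

theorem srw_add (hreg : G.IsRegularOfDegree d) (m n : ℕ) : ∀ x y z : V,
    G.srw m x y * G.srw n y z ≤ G.srw (m + n) x z := by
  induction m with
  | zero =>
    intro x y z
    rw [srw]
    split_ifs with h
    · subst h; simp
    · simpa using srw_nonneg G _ _ _
  | succ m ih =>
    intro x y z
    rw [show m + 1 + n = (m + n) + 1 by omega, srw_succ G hreg, srw_succ G hreg, mul_assoc,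
      Finset.sum_mul]
    exact mul_le_mul_of_nonneg_left (Finset.sum_le_sum fun w _ => ih _ _ _) (by positivity)

theorem srw_pow (hreg : G.IsRegularOfDegree d) (n m : ℕ) (x : V) : (G.srw n x x) ^ m ≤ G.srw (n * m) x x := by
  induction m with
  | zero => simp [srw]
  | succ m ih =>
    rw [pow_succ, Nat.mul_succ]
    exact (mul_le_mul_of_nonneg_right ih (srw_nonneg G _ _ _)).trans (srw_add G hreg _ _ _ _ _)

theorem srw_pos (hreg : G.IsRegularOfDegree d) (hd : 2 ≤ d) {x y : V} (w : G.Walk x y) : 0 < G.srw w.length x y := by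
  induction w with
  | nil => simp [srw]
  | @cons x z y h w ih =>
    rw [Walk.length_cons, srw_succ G hreg]
    have hd0 : (0:ℝ) < d := by exact_mod_cast (by omega : 0 < d)
    refine mul_pos (inv_pos.2 hd0) (ih.trans_le ?_)
    exact Finset.single_le_sum (f := fun z => G.srw w.length z y)
      (fun z _ => srw_nonneg G _ _ _) ((G.mem_neighborFinset x z).2 h)

theorem rho_nonneg (hreg : G.IsRegularOfDegree d) (hd : 2 ≤ d) (x : V) : 0 ≤ G.spectralRadius x := by
  have hb : ∀ n : ℕ, (G.srw (2 * n) x x) ^ ((2 * n : ℝ))⁻¹ ≤ 1 := fun n =>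
    Real.rpow_le_one (srw_nonneg G _ _ _) (srw_le_one G hreg hd _ _ _) (by positivity)
  refine Filter.le_limsup_of_frequently_le (Filter.Frequently.of_forall fun n => ?_)
    (Filter.isBoundedUnder_of ⟨1, hb⟩)
  exact Real.rpow_nonneg (srw_nonneg G _ _ _) _

theorem eventually_le (hreg : G.IsRegularOfDegree d) (hd : 2 ≤ d) (x : V) (r : ℝ) (hr : G.spectralRadius x < r) :
    ∀ᶠ n : ℕ in Filter.atTop, G.srw (2 * n) x x ≤ r ^ (2 * n) := by
  have hb : ∀ n : ℕ, (G.srw (2 * n) x x) ^ ((2 * n : ℝ))⁻¹ ≤ 1 := fun n =>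
    Real.rpow_le_one (srw_nonneg G _ _ _) (srw_le_one G hreg hd _ _ _) (by positivity)
  have h := Filter.eventually_lt_of_limsup_lt hr (Filter.isBoundedUnder_of ⟨1, hb⟩)
  filter_upwards [h, Filter.eventually_ge_atTop 1] with n hn h1
  have h0 := srw_nonneg G (2 * n) x x
  have := pow_le_pow_left₀ (Real.rpow_nonneg h0 _) hn.le (2 * n)
  refine le_trans (le_of_eq ?_) this
  have e : ((2 * n : ℝ))⁻¹ = (((2 * n : ℕ) : ℝ))⁻¹ := by push_cast; rfl
  rw [e, Real.rpow_inv_natCast_pow h0 (by omega)]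

theorem le_of_pow_bound {a b C : ℝ} (hb : 0 < b) (hC : 0 < C)
    (h : ∀ᶠ m : ℕ in Filter.atTop, C * a ^ m ≤ b ^ m) : a ≤ b := by
  by_contra! hlt
  have h1 : 1 < a / b := (one_lt_div hb).2 hlt
  have ht := tendsto_pow_atTop_atTop_of_one_lt h1
  obtain ⟨m, hm, hm2⟩ := (h.and (ht.eventually_gt_atTop (1 / C))).exists
  rw [div_pow, div_lt_div_iff₀ hC (by positivity)] at hm2
  linarith

theorem srw_diag_le (hreg : G.IsRegularOfDegree d) (hconn : G.Connected) (hd : 2 ≤ d) (x₀ x : V) (n : ℕ) :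
    G.srw (2 * n) x x ≤ (G.spectralRadius x₀) ^ (2 * n) := by
  rcases Nat.eq_zero_or_pos n with rfl | hn
  · simp [srw]
  have key : ∀ r, G.spectralRadius x₀ < r → G.srw (2 * n) x x ≤ r ^ (2 * n) := by
    intro r hr
    have hr0 : 0 < r := (rho_nonneg G hreg hd x₀).trans_lt hr
    obtain ⟨w⟩ := hconn.preconnected x₀ x
    have hj := srw_pos G hreg hd w
    set j := w.length
    have hc : 0 < G.srw j x₀ x * G.srw j x x₀ / r ^ (2 * j) := by
      rw [srw_symm G hreg j x x₀]; positivity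
    refine le_of_pow_bound (by positivity) hc ?_
    have hev := eventually_le G hreg hd x₀ r hr
    have ht : Filter.Tendsto (fun m : ℕ => n * m + j) Filter.atTop Filter.atTop :=
      Filter.tendsto_atTop_mono (fun m => (Nat.le_mul_of_pos_left m hn).trans
        (Nat.le_add_right _ _)) Filter.tendsto_id
    filter_upwards [ht.eventually hev] with m hm
    have h1 := srw_pow G hreg (2 * n) m x
    have h2 := srw_add G hreg j (2 * n * m) x₀ x x
    have h3 := srw_add G hreg (j + 2 * n * m) j x₀ x x₀
    rw [show j + 2 * n * m + j = 2 * (n * m + j) by ring] at h3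
    have a1 := srw_nonneg G j x₀ x
    have a2 := srw_nonneg G j x x₀
    rw [div_mul_eq_mul_div, div_le_iff₀ (by positivity)]
    calc G.srw j x₀ x * G.srw j x x₀ * G.srw (2 * n) x x ^ m
        = G.srw j x₀ x * G.srw (2 * n) x x ^ m * G.srw j x x₀ := by ring
      _ ≤ G.srw j x₀ x * G.srw (2 * n * m) x x * G.srw j x x₀ := by gcongr
      _ ≤ G.srw (j + 2 * n * m) x₀ x * G.srw j x x₀ := by gcongr
      _ ≤ r ^ (2 * (n * m + j)) := h3.trans hm
      _ = _ := by rw [← pow_mul, ← pow_add]; congr 1; ring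
  have hcont : Filter.Tendsto (fun r : ℝ => r ^ (2 * n)) (nhdsWithin (G.spectralRadius x₀)
      (Set.Ioi (G.spectralRadius x₀))) (nhds ((G.spectralRadius x₀) ^ (2 * n))) :=
    ((continuous_pow (2 * n)).tendsto _).mono_left nhdsWithin_le_nhds
  exact ge_of_tendsto hcont (Filter.eventually_of_mem self_mem_nhdsWithin key)

theorem srw_le (hreg : G.IsRegularOfDegree d) (hconn : G.Connected) (hd : 2 ≤ d) (x₀ x y : V) (n : ℕ) :
    G.srw n x y ≤ (G.spectralRadius x₀) ^ n := by
  have h1 := srw_add G hreg n n x y x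
  rw [← srw_symm G hreg n x y, ← two_mul] at h1
  have h2 := h1.trans (srw_diag_le G hreg hconn hd x₀ x n)
  have h3 : (0:ℝ) ≤ (G.spectralRadius x₀) ^ n := pow_nonneg (rho_nonneg G hreg hd x₀) n
  rw [two_mul, pow_add] at h2
  exact (mul_self_le_mul_self_iff (srw_nonneg G _ _ _) h3).2 h2



/-- coefficients of the simple random walk in terms of non-backtracking walks -/
noncomputable def cf (d : ℕ) : ℕ → ℕ → ℝ
  | 0, 0 => 1
  | 0, _ + 1 => 0
  | k + 1, 0 => cf d k 1
  | k + 1, m + 1 => (d : ℝ)⁻¹ * (cf d k m + ((d : ℝ) - 1) * cf d k (m + 2))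

theorem cf_nonneg (hd : 2 ≤ d) (k : ℕ) : ∀ m, 0 ≤ cf d k m := by
  have : (2:ℝ) ≤ d := by exact_mod_cast hd
  induction k with
  | zero => intro m; cases m <;> simp [cf]
  | succ k ih =>
    intro m
    cases m with
    | zero => rw [cf]; exact ih _
    | succ m =>
      rw [cf]
      have := ih m
      have := ih (m + 2)
      have : (0:ℝ) ≤ d - 1 := by linarith
      positivity

theorem cf_zero (k : ℕ) : ∀ m, k < m → cf d k m = 0 := by
  induction k with
  | zero => intro m hm; cases m <;> simp_all [cf]
  | succ k ih =>
    intro m hm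
    cases m with
    | zero => omega
    | succ m => rw [cf, ih m (by omega), ih (m + 2) (by omega)]; simp

theorem tele (hd : 2 ≤ d) (k : ℕ) (N T : ℕ → ℝ) (h0 : T 0 = N 1) (h1 : T 1 = N 2 + d * N 0)
    (h2 : ∀ m, T (m + 2) = N (m + 3) + ((d : ℝ) - 1) * N (m + 1)) (K : ℕ) :
    (d : ℝ)⁻¹ * (∑ m ∈ Finset.range (K + 2), cf d k m * T m
      + ((d : ℝ) - 1) * cf d k (K + 2) * N (K + 1) + ((d : ℝ) - 1) * cf d k (K + 3) * N (K + 2))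
      = ∑ m ∈ Finset.range (K + 3), cf d (k + 1) m * N m := by
  have : (d:ℝ) ≠ 0 := by exact_mod_cast (by omega : d ≠ 0)
  induction K with
  | zero =>
    simp only [Finset.sum_range_succ, Finset.sum_range_zero, cf, h0, h1]
    field_simp
    ring
  | succ K ih =>
    rw [Finset.sum_range_succ _ (K + 3), ← ih, Finset.sum_range_succ _ (K + 2), h2,
      show K + 3 = (K + 2) + 1 from rfl, cf]
    ring

theorem srw_eq (hreg : G.IsRegularOfDegree d)
    (hd : 2 ≤ d) (k : ℕ) : ∀ x y : V,
    G.srw k x y = ∑ m ∈ Finset.range (k + 2), cf d k m * (cntN G m x y : ℝ) := by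
  induction k with
  | zero => intro x y; simp [srw, Finset.sum_range_succ, cf, cntN]
  | succ k ih =>
    intro x y
    have h := tele hd k (fun m => (cntN G m x y : ℝ))
      (fun m => ∑ z ∈ G.neighborFinset x, (cntN G m z y : ℝ))
      (by exact_mod_cast rec0 G x y) (by exact_mod_cast rec1 G hreg x y)
      (by
        intro m
        have := rec2 G hreg hd m x y
        have e : ((d - 1 : ℕ) : ℝ) = (d : ℝ) - 1 := by
          rw [Nat.cast_sub (by omega)]; simp
        rw [← e]
        exact_mod_cast this) k
    rw [cf_zero k (k + 2) (by omega), cf_zero k (k + 3) (by omega)] at h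
    rw [srw_succ G hreg, ← h]
    simp only [mul_zero, zero_mul, add_zero]
    simp_rw [ih, Finset.mul_sum]
    rw [Finset.sum_comm]

theorem cf_summable (hd : 2 ≤ d) (h : Summable fun k => cf d k 0) (m : ℕ) :
    Summable fun k => cf d k m := by
  have hd' : (2:ℝ) ≤ d := by exact_mod_cast hd
  have h1 : Summable fun k => cf d k 1 := ((summable_nat_add_iff 1).2 h)
  have key : ∀ m, (Summable fun k => cf d k m) ∧ (Summable fun k => cf d k (m + 1)) := by
    intro m
    induction m with
    | zero => exact ⟨h, h1⟩
    | succ m ih =>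
      refine ⟨ih.2, ?_⟩
      have hs : Summable fun k => cf d (k + 1) (m + 1) := (summable_nat_add_iff 1).2 ih.2
      have : (d:ℝ) - 1 ≠ 0 := by linarith
      have : (d:ℝ) ≠ 0 := by linarith
      refine ((hs.mul_left (d : ℝ)).sub ih.1).mul_left ((d:ℝ) - 1)⁻¹ |>.congr fun k => ?_
      rw [cf]
      field_simp
      ring
  exact (key m).1

theorem cf_tsum (hd : 2 ≤ d) (h : Summable fun k => cf d k 0) (m : ℕ) :
    (∑' k, cf d k m) - ∑' k, cf d k (m + 1) = (((d : ℝ) - 1)⁻¹) ^ m := by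
  have hd' : (2:ℝ) ≤ d := by exact_mod_cast hd
  have hs := cf_summable hd h
  induction m with
  | zero =>
    rw [(hs 0).tsum_eq_zero_add]
    simp [cf]
  | succ m ih =>
    have e : ∑' k, cf d k (m + 1) =
        (d : ℝ)⁻¹ * (∑' k, cf d k m + ((d : ℝ) - 1) * ∑' k, cf d k (m + 2)) := by
      rw [(hs (m + 1)).tsum_eq_zero_add]
      simp only [cf]
      rw [tsum_mul_left, (hs m).tsum_add ((hs (m + 2)).mul_left _), tsum_mul_left, zero_add]
    rw [pow_succ, ← ih]
    have : (d:ℝ) - 1 ≠ 0 := by linarith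
    have : (d:ℝ) ≠ 0 := by linarith
    field_simp at e ⊢
    linarith

theorem cntN_le (hreg : G.IsRegularOfDegree d)
    (hconn : G.Connected) (hd : 2 ≤ d) (x₀ : V) (hρ : G.spectralRadius x₀ < 1) (n : ℕ) (x y : V) :
    (cntN G n x y : ℝ) ≤ (((d : ℝ) - 1) * G.spectralRadius x₀) ^ n / (1 - G.spectralRadius x₀) := by
  have hd' : (2:ℝ) ≤ d := by exact_mod_cast hd
  set ρ := G.spectralRadius x₀ with hρdef
  have hρ0 : 0 ≤ ρ := rho_nonneg G hreg hd x₀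
  have hle : ∀ k m x y, m ≤ k → cf d k m * (cntN G m x y : ℝ) ≤ ρ ^ k := by
    intro k m x y hm
    refine le_trans ?_ (srw_le G hreg hconn hd x₀ x y k)
    rw [srw_eq G hreg hd]
    exact Finset.single_le_sum (f := fun m => cf d k m * (cntN G m x y : ℝ))
      (fun i _ => mul_nonneg (cf_nonneg hd _ _) (by positivity)) (Finset.mem_range.2 (by omega))
  have hgeo : Summable fun k : ℕ => ρ ^ k := summable_geometric_of_lt_one hρ0 hρ
  have h0 : Summable fun k => cf d k 0 := by
    refine hgeo.of_nonneg_of_le (fun k => cf_nonneg hd _ _) fun k => ?_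
    simpa [cntN] using hle k 0 x x (by omega)
  have hs := cf_summable hd h0 n
  have hS : (((d : ℝ) - 1)⁻¹) ^ n ≤ ∑' k, cf d k n := by
    have := cf_tsum hd h0 n
    have : 0 ≤ ∑' k, cf d k (n + 1) := tsum_nonneg fun k => cf_nonneg hd _ _
    linarith
  have hshift : ∑' k, cf d k n = ∑' k, cf d (k + n) n := by
    rw [← hs.sum_add_tsum_nat_add n, Finset.sum_eq_zero, zero_add]
    intro k hk
    exact cf_zero k n (Finset.mem_range.1 hk)
  have hs2 : Summable fun k => cf d (k + n) n := (summable_nat_add_iff n).2 hs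
  have hfin : (∑' k, cf d (k + n) n) * (cntN G n x y : ℝ) ≤ ρ ^ n / (1 - ρ) := by
    rw [← tsum_mul_right]
    have hg2 : HasSum (fun k : ℕ => ρ ^ (k + n)) (ρ ^ n / (1 - ρ)) := by
      have := (hasSum_geometric_of_lt_one hρ0 hρ).mul_left (ρ ^ n)
      rw [← div_eq_mul_inv] at this
      refine this.congr_fun ?_
      intro k; rw [pow_add, mul_comm]
    rw [← hg2.tsum_eq]
    exact (hs2.mul_right _).tsum_le_tsum (fun k => hle (k + n) n x y (by omega)) hg2.summable
  have hpos : (0:ℝ) < ((d:ℝ) - 1) ^ n := pow_pos (by linarith) n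
  have := (mul_le_mul_of_nonneg_right (hS.trans_eq hshift)
    (Nat.cast_nonneg (α := ℝ) (cntN G n x y))).trans hfin
  rw [inv_pow, inv_mul_le_iff₀ hpos] at this
  rw [mul_pow, mul_div_assoc]
  exact this

theorem path_prob {p : ℝ} {μ : MeasureTheory.Measure (G.edgeSet → Bool)}
    (hμ : G.IsBernoulliPercolation p μ) {x y : V} (w : G.Walk x y) (hw : w.IsPath) :
    μ {ω | G.openWalk ω w} = ENNReal.ofReal p ^ w.length := by
  classical
  have h := hμ.2 ((w.edges.attach.map fun e =>
    (⟨e.1, w.edges_subset_edgeSet e.2⟩ : G.edgeSet)).toFinset) (fun _ => true)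
  have hnd : (w.edges.attach.map fun e =>
      (⟨e.1, w.edges_subset_edgeSet e.2⟩ : G.edgeSet)).Nodup := by
    refine List.Nodup.map ?_ (List.nodup_attach.2 hw.isTrail.edges_nodup)
    intro a b hab
    exact Subtype.ext (Subtype.mk.inj hab)
  simp only [if_true, Finset.prod_const] at h
  rw [List.toFinset_card_of_nodup hnd, List.length_map, List.length_attach,
    Walk.length_edges] at h
  rw [← h]
  congr 1
  ext ω
  simp only [openWalk, Set.mem_ofPred_eq, List.mem_toFinset, List.mem_map, List.mem_attach,
    true_and]
  constructor
  · rintro h _ ⟨a, rfl⟩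
    exact h a.1 a.2
  · intro h e he
    exact h _ ⟨⟨e, he⟩, rfl⟩

theorem conn_le {p : ℝ}
    {μ : MeasureTheory.Measure (G.edgeSet → Bool)}
    (hμ : G.IsBernoulliPercolation p μ) (x y : V) :
    μ {ω | G.percConn ω x y} ≤
      ∑' n : ℕ, (cntN G (n + G.dist x y) x y : ℝ≥0∞) * ENNReal.ofReal p ^ (n + G.dist x y) := by
  classical
  choose F hF hc using fun n => existsN G n x y
  have hsub : {ω | G.percConn ω x y} ⊆ ⋃ n : ℕ,
      ⋃ w ∈ (F (n + G.dist x y)).filter (fun w => w.IsPath ∧ w.length = n + G.dist x y),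
        {ω | G.openWalk ω w} := by
    rintro ω ⟨w, hw⟩
    have hl : G.dist x y ≤ w.bypass.length := dist_le _
    have e : w.bypass.length - G.dist x y + G.dist x y = w.bypass.length := by omega
    simp only [Set.mem_iUnion]
    refine ⟨w.bypass.length - G.dist x y, w.bypass, ?_, ?_⟩
    · rw [e, Finset.mem_filter]
      exact ⟨hF _ _ w.bypass_isPath rfl, w.bypass_isPath, rfl⟩
    · intro e he
      exact hw e (w.edges_bypass_subset_edges he)
  refine (measure_mono hsub).trans ((measure_iUnion_le _).trans ?_)
  refine ENNReal.tsum_le_tsum fun n => ?_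
  refine (measure_biUnion_finset_le _ _).trans ?_
  calc _ ≤ ∑ w ∈ (F (n + G.dist x y)).filter (fun w => w.IsPath ∧ w.length = n + G.dist x y),
        ENNReal.ofReal p ^ (n + G.dist x y) := by
        refine Finset.sum_le_sum fun w hw => ?_
        rw [Finset.mem_filter] at hw
        rw [path_prob G hμ w hw.2.1, hw.2.2]
    _ ≤ _ := by
        rw [Finset.sum_const, nsmul_eq_mul]
        gcongr
        exact (Finset.card_filter_le _ _).trans (hc _)

end Stmt6



/-- two-point function bound. If `p(d-1)ρ < 1` then
`P_p(x ↔ y) ≤ C (p(d-1)ρ)^{dist(x,y)}` with `C = d/((d-1)(1-ρ)(1-p(d-1)ρ))`; in particular the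
two-point function tends to `0` as the distance tends to infinity. -/
theorem stmt_6 {V : Type*} [DecidableEq V] (G : SimpleGraph V)
    [∀ v, Fintype (G.neighborSet v)] [Infinite V] (hconn : G.Connected)
    (d : ℕ) (hd : 2 ≤ d) (hreg : G.IsRegularOfDegree d)
    (x₀ : V) (ρ : ℝ) (hρ : G.spectralRadius x₀ = ρ) (hρ1 : ρ < 1)
    (p : ℝ) (hp : p ∈ Set.Icc (0:ℝ) 1) (hpd : p * ((d : ℝ) - 1) * ρ < 1)
    (μ : MeasureTheory.Measure (G.edgeSet → Bool)) (hμ : G.IsBernoulliPercolation p μ) :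
    (∀ x y : V,
        μ {ω | G.percConn ω x y} ≤
          ENNReal.ofReal
            ((d : ℝ) / (((d : ℝ) - 1) * (1 - ρ) * (1 - p * ((d : ℝ) - 1) * ρ)) *
              (p * ((d : ℝ) - 1) * ρ) ^ (G.dist x y))) ∧
      ∀ ε : ℝ, 0 < ε → ∃ R : ℕ, ∀ x y : V, R ≤ G.dist x y →
        μ {ω | G.percConn ω x y} ≤ ENNReal.ofReal ε := by
  subst hρ
  set ρ := G.spectralRadius x₀ with hρdef
  have hρ0 : 0 ≤ ρ := Stmt6.rho_nonneg G hreg hd x₀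
  have hd' : (2:ℝ) ≤ d := by exact_mod_cast hd
  have hd1 : (0:ℝ) < (d:ℝ) - 1 := by linarith
  set r := p * ((d : ℝ) - 1) * ρ with hr
  have hr0 : 0 ≤ r := mul_nonneg (mul_nonneg hp.1 hd1.le) hρ0
  have h1ρ : 0 < 1 - ρ := by linarith
  have h1r : 0 < 1 - r := by linarith
  set C := (d : ℝ) / (((d : ℝ) - 1) * (1 - ρ) * (1 - r)) with hC
  have hC0 : 0 ≤ C := by positivity
  have main : ∀ x y : V, μ {ω | G.percConn ω x y} ≤ ENNReal.ofReal (C * r ^ (G.dist x y)) := by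
    intro x y
    refine (Stmt6.conn_le G hμ x y).trans ?_
    set R := G.dist x y
    have hsum : HasSum (fun n : ℕ => r ^ (n + R) / (1 - ρ)) (r ^ R / (1 - ρ) * (1 - r)⁻¹) := by
      have := (hasSum_geometric_of_lt_one hr0 hpd).mul_left (r ^ R / (1 - ρ))
      refine this.congr_fun ?_
      intro n; rw [pow_add]; ring
    calc _ ≤ ∑' n : ℕ, ENNReal.ofReal (r ^ (n + R) / (1 - ρ)) := by
          refine ENNReal.tsum_le_tsum fun n => ?_
          rw [← ENNReal.ofReal_natCast, ← ENNReal.ofReal_pow hp.1,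
            ← ENNReal.ofReal_mul (Nat.cast_nonneg _)]
          refine ENNReal.ofReal_le_ofReal ?_
          have h := Stmt6.cntN_le G hreg hconn hd x₀ hρ1 (n + R) x y
          calc _ ≤ (((d : ℝ) - 1) * ρ) ^ (n + R) / (1 - ρ) * p ^ (n + R) :=
                mul_le_mul_of_nonneg_right h (pow_nonneg hp.1 _)
            _ = _ := by rw [hr, mul_pow, mul_pow, mul_pow]; ring
      _ = ENNReal.ofReal (r ^ R / (1 - ρ) * (1 - r)⁻¹) := by
          rw [← ENNReal.ofReal_tsum_of_nonneg (fun n => by positivity) hsum.summable,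
            hsum.tsum_eq]
      _ ≤ _ := by
          refine ENNReal.ofReal_le_ofReal ?_
          have e : C * r ^ R = (d / ((d:ℝ) - 1)) * (r ^ R / (1 - ρ) * (1 - r)⁻¹) := by
            rw [hC]; field_simp
          rw [e]
          refine le_mul_of_one_le_left (by positivity) ?_
          rw [one_le_div hd1]; linarith
  refine ⟨main, fun ε hε => ?_⟩
  have ht : Filter.Tendsto (fun n : ℕ => C * r ^ n) Filter.atTop (nhds (C * 0)) :=
    (tendsto_pow_atTop_nhds_zero_of_lt_one hr0 hpd).const_mul C
  rw [mul_zero] at ht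
  obtain ⟨R, hR⟩ := Filter.eventually_atTop.1 (ht.eventually_le_const hε)
  exact ⟨R, fun x y hxy => (main x y).trans (ENNReal.ofReal_le_ofReal (hR _ hxy))⟩
end

section
/- Let G be a d-regular graph with spectral radius ρ < 1 and suppose p_c(d-1)ρ < 1. Then the open triangle condition holds at p_c: Σ_{x,y} P_{p_c}(0 ↔ x) P_{p_c}(x ↔ y) P_{p_c}(y ↔ 0) < ∞. -/
open MeasureTheory Filter Set
open scoped ENNReal

namespace SimpleGraph

section helpers

variable {V : Type*} [DecidableEq V] (G : SimpleGraph V) [∀ v, Fintype (G.neighborSet v)]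

lemma srw_nonneg' (n : ℕ) (x y : V) : 0 ≤ G.srw n x y := by
  induction n generalizing x with
  | zero => simp only [srw]; split_ifs <;> norm_num
  | succ n ih =>
    simp only [srw]
    exact Finset.sum_nonneg fun z _ => mul_nonneg (by positivity) (ih z)

lemma srw_le_one' (n : ℕ) (x y : V) : G.srw n x y ≤ 1 := by
  induction n generalizing x with
  | zero => simp only [srw]; split_ifs <;> norm_num
  | succ n ih =>
    simp only [srw]
    calc _ ≤ ∑ z ∈ G.neighborFinset x, (G.degree x : ℝ)⁻¹ * 1 :=
          Finset.sum_le_sum fun z _ => mul_le_mul_of_nonneg_left (ih z) (by positivity)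
      _ ≤ 1 := by
          simp only [mul_one, Finset.sum_const, card_neighborFinset_eq_degree, nsmul_eq_mul]
          exact mul_inv_le_one

/-- ENNReal version of the transition kernel -/
noncomputable def ek (n : ℕ) (x y : V) : ℝ≥0∞ := ENNReal.ofReal (G.srw n x y)

lemma ek_zero (x y : V) : G.ek 0 x y = if x = y then 1 else 0 := by
  simp only [ek, srw]; split_ifs <;> simp

lemma ek_succ {d : ℕ} (hd : 2 ≤ d) (hreg : G.IsRegularOfDegree d) (n : ℕ) (x y : V) :
    G.ek (n + 1) x y = ∑ z ∈ G.neighborFinset x, (d : ℝ≥0∞)⁻¹ * G.ek n z y := by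
  simp only [ek, srw]
  rw [ENNReal.ofReal_sum_of_nonneg]
  · refine Finset.sum_congr rfl fun z _ => ?_
    rw [ENNReal.ofReal_mul (by positivity), hreg.degree_eq x, ENNReal.ofReal_inv_of_pos (by positivity)]
    simp
  · intro z _
    exact mul_nonneg (by positivity) (G.srw_nonneg' n z y)

lemma ek_add {d : ℕ} (hd : 2 ≤ d) (hreg : G.IsRegularOfDegree d) (m n : ℕ) (x y : V) :
    G.ek (m + n) x y = ∑' z, G.ek m x z * G.ek n z y := by
  induction m generalizing x with
  | zero =>
    rw [tsum_eq_single x]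
    · simp [ek_zero]
    · intro b hb; simp [ek_zero, hb.symm]
  | succ m ih =>
    rw [show m + 1 + n = (m + n) + 1 by ring, G.ek_succ hd hreg]
    simp_rw [G.ek_succ hd hreg m, Finset.sum_mul]
    rw [Summable.tsum_finsetSum (fun _ _ => ENNReal.summable)]
    refine Finset.sum_congr rfl fun z _ => ?_
    simp_rw [mul_assoc]
    rw [ENNReal.tsum_mul_left, ih]

lemma ek_one {d : ℕ} (hd : 2 ≤ d) (hreg : G.IsRegularOfDegree d) (x y : V) :
    G.ek 1 x y = if y ∈ G.neighborFinset x then (d : ℝ≥0∞)⁻¹ else 0 := by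
  rw [show 1 = 0 + 1 from rfl, G.ek_succ hd hreg]
  simp [ek_zero]

lemma ek_symm {d : ℕ} (hd : 2 ≤ d) (hreg : G.IsRegularOfDegree d) (n : ℕ) (x y : V) :
    G.ek n x y = G.ek n y x := by
  induction n generalizing x y with
  | zero => simp [ek_zero, eq_comm]
  | succ n ih =>
    rw [G.ek_add hd hreg n 1, add_comm n 1, G.ek_add hd hreg 1 n]
    refine tsum_congr fun z => ?_
    rw [mul_comm, ih x z, G.ek_one hd hreg, G.ek_one hd hreg]
    have hiff : y ∈ G.neighborFinset z ↔ z ∈ G.neighborFinset y := by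
      rw [mem_neighborFinset, mem_neighborFinset, G.adj_comm]
    simp only [hiff]

lemma ek_odd {d : ℕ} (hd : 2 ≤ d) (hreg : G.IsRegularOfDegree d) (n : ℕ) (x : V) :
    G.ek (2 * n + 1) x x ≤ G.ek (2 * n) x x + G.ek (2 * (n + 1)) x x := by
  rw [show 2 * n + 1 = n + (n + 1) by ring, show 2 * n = n + n by ring,
    show 2 * (n + 1) = (n + 1) + (n + 1) by ring, G.ek_add hd hreg n, G.ek_add hd hreg n n,
    G.ek_add hd hreg (n + 1) (n + 1), ← ENNReal.tsum_add]
  refine ENNReal.tsum_le_tsum fun z => ?_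
  rw [G.ek_symm hd hreg n z x, G.ek_symm hd hreg (n + 1) z x]
  rcases le_total (G.ek n x z) (G.ek (n + 1) x z) with h | h
  · exact le_add_left (mul_le_mul_left h _)
  · exact le_add_right (mul_le_mul_right h _)

lemma srw_decay (x₀ : V) (r : ℝ) (hr0 : 0 < r) (hr1 : r < 1) (hr : G.spectralRadius x₀ < r) :
    ∃ C : ℝ, 0 < C ∧ ∀ n, G.srw (2 * n) x₀ x₀ ≤ C * r ^ (2 * n) := by
  have h := Filter.eventually_lt_of_limsup_lt hr (by
    refine Filter.isBoundedUnder_of ⟨1, fun n => ?_⟩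
    exact Real.rpow_le_one (G.srw_nonneg' _ _ _) (G.srw_le_one' _ _ _) (by positivity))
  obtain ⟨N, hN⟩ := Filter.eventually_atTop.1 h
  refine ⟨(r ^ (2 * (N + 1)))⁻¹, by positivity, fun n => ?_⟩
  have hp : 0 < r ^ (2 * (N + 1)) := by positivity
  rcases le_or_gt (N + 1) n with hn | hn
  · have h1 := hN n (by omega)
    have hn0 : (0:ℝ) < 2 * n := by
      have : 0 < n := by omega
      positivity
    have h2 : G.srw (2 * n) x₀ x₀ ≤ r ^ (2 * n) := by
      have := (Real.rpow_inv_le_iff_of_pos (G.srw_nonneg' _ _ _) hr0.le hn0).1 h1.le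
      have e : (2 * (n : ℝ)) = ((2 * n : ℕ) : ℝ) := by push_cast; ring
      rw [e, Real.rpow_natCast] at this
      exact this
    refine h2.trans (le_mul_of_one_le_left (by positivity) ?_)
    exact (one_le_inv₀ hp).2 (pow_le_one₀ hr0.le hr1.le)
  · refine (G.srw_le_one' _ _ _).trans ?_
    rw [inv_mul_eq_div, one_le_div hp]
    exact pow_le_pow_of_le_one hr0.le hr1.le (by omega)

lemma ek_decay {d : ℕ} (hd : 2 ≤ d) (hreg : G.IsRegularOfDegree d)
    (x₀ : V) (r : ℝ) (hr0 : 0 < r) (hr1 : r < 1) (hr : G.spectralRadius x₀ < r) :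
    ∃ C : ℝ, 0 < C ∧ ∀ n, G.ek n x₀ x₀ ≤ ENNReal.ofReal (C * r ^ n) := by
  obtain ⟨C, hC, h⟩ := G.srw_decay x₀ r hr0 hr1 hr
  have he : ∀ n, G.ek (2 * n) x₀ x₀ ≤ ENNReal.ofReal (C * r ^ (2 * n)) :=
    fun n => ENNReal.ofReal_le_ofReal (h n)
  refine ⟨C * (1 + r⁻¹ + r), by positivity, fun n => ?_⟩
  have hri : 0 < r⁻¹ := inv_pos.2 hr0
  rcases Nat.even_or_odd' n with ⟨k, rfl | rfl⟩
  · refine (he k).trans (ENNReal.ofReal_le_ofReal ?_)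
    have : 0 < r ^ (2 * k) := by positivity
    have := mul_pos hC this
    nlinarith [mul_pos this hri, mul_pos this hr0]
  · refine (G.ek_odd hd hreg k x₀).trans ((add_le_add (he k) (he (k + 1))).trans ?_)
    rw [← ENNReal.ofReal_add (by positivity) (by positivity)]
    refine ENNReal.ofReal_le_ofReal ?_
    have e : C * (1 + r⁻¹ + r) * r ^ (2 * k + 1)
      = C * r ^ (2 * k) + C * r ^ (2 * (k + 1)) + C * r ^ (2 * k + 1) := by
      field_simp; ring
    rw [e]
    have : 0 < C * r ^ (2 * k + 1) := by positivity
    linarith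

/-- Green function -/
noncomputable def gr (s : ℝ) (x y : V) : ℝ≥0∞ := ∑' n, ENNReal.ofReal s ^ n * G.ek n x y

lemma gr_eq {d : ℕ} (hd : 2 ≤ d) (hreg : G.IsRegularOfDegree d) (s : ℝ) (x y : V) :
    G.gr s x y = (if x = y then 1 else 0) +
      ∑ z ∈ G.neighborFinset x, (ENNReal.ofReal s * (d : ℝ≥0∞)⁻¹) * G.gr s z y := by
  unfold gr
  rw [tsum_eq_zero_add' ENNReal.summable]
  congr 1
  · simp [ek_zero]
  · simp_rw [G.ek_succ hd hreg, Finset.mul_sum]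
    rw [Summable.tsum_finsetSum (fun _ _ => ENNReal.summable)]
    refine Finset.sum_congr rfl fun z _ => ?_
    rw [← ENNReal.tsum_mul_left]
    refine tsum_congr fun n => ?_
    ring

lemma gr_symm {d : ℕ} (hd : 2 ≤ d) (hreg : G.IsRegularOfDegree d) (s : ℝ) (x y : V) :
    G.gr s x y = G.gr s y x := by
  unfold gr
  exact tsum_congr fun n => by rw [G.ek_symm hd hreg]

lemma triangle_gr {d : ℕ} (hd : 2 ≤ d) (hreg : G.IsRegularOfDegree d) (s : ℝ) (x₀ : V) :
    ∑' (x : V) (y : V), G.gr s x₀ x * G.gr s x y * G.gr s y x₀ =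
      ∑' (i : ℕ) (j : ℕ) (k : ℕ), ENNReal.ofReal s ^ i * ENNReal.ofReal s ^ j *
        ENNReal.ofReal s ^ k * G.ek (i + (j + k)) x₀ x₀ := by
  have h1 : ∀ x, ∑' y, G.gr s x y * G.gr s y x₀ =
      ∑' (j : ℕ) (k : ℕ), ENNReal.ofReal s ^ j * ENNReal.ofReal s ^ k * G.ek (j + k) x x₀ := by
    intro x
    have : ∀ y, G.gr s x y * G.gr s y x₀ = ∑' (j : ℕ) (k : ℕ),
        ENNReal.ofReal s ^ j * ENNReal.ofReal s ^ k * (G.ek j x y * G.ek k y x₀) := by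
      intro y
      unfold gr
      rw [← ENNReal.tsum_mul_right]
      refine tsum_congr fun j => ?_
      rw [← ENNReal.tsum_mul_left]
      refine tsum_congr fun k => ?_
      ring
    simp_rw [this]
    rw [ENNReal.tsum_comm]
    refine tsum_congr fun j => ?_
    rw [ENNReal.tsum_comm]
    refine tsum_congr fun k => ?_
    rw [ENNReal.tsum_mul_left, ← G.ek_add hd hreg]
  simp_rw [mul_assoc, ENNReal.tsum_mul_left, h1]
  have : ∀ x, G.gr s x₀ x * ∑' (j : ℕ) (k : ℕ),
      ENNReal.ofReal s ^ j * ENNReal.ofReal s ^ k * G.ek (j + k) x x₀ =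
      ∑' (i : ℕ) (j : ℕ) (k : ℕ), ENNReal.ofReal s ^ i * ENNReal.ofReal s ^ j *
        ENNReal.ofReal s ^ k * (G.ek i x₀ x * G.ek (j + k) x x₀) := by
    intro x
    rw [gr, ← ENNReal.tsum_mul_right]
    refine tsum_congr fun i => ?_
    rw [← ENNReal.tsum_mul_left]
    refine tsum_congr fun j => ?_
    rw [← ENNReal.tsum_mul_left]
    refine tsum_congr fun k => ?_
    ring
  simp_rw [this]
  rw [ENNReal.tsum_comm]
  refine tsum_congr fun i => ?_
  rw [ENNReal.tsum_comm, ← ENNReal.tsum_mul_left]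
  refine tsum_congr fun j => ?_
  rw [ENNReal.tsum_comm, ← ENNReal.tsum_mul_left, ← ENNReal.tsum_mul_left]
  refine tsum_congr fun k => ?_
  rw [ENNReal.tsum_mul_left, ← G.ek_add hd hreg]
  ring

lemma tsum_geo_lt (q : ℝ) (hq1 : q < 1) : ∑' n : ℕ, ENNReal.ofReal q ^ n < ⊤ := by
  rw [ENNReal.tsum_geometric, ENNReal.inv_lt_top]
  exact tsub_pos_of_lt (by simpa using hq1)

lemma gr_x₀ {d : ℕ} (hd : 2 ≤ d) (hreg : G.IsRegularOfDegree d)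
    (x₀ : V) (r : ℝ) (hr0 : 0 < r) (hr1 : r < 1) (hr : G.spectralRadius x₀ < r)
    (s : ℝ) (hs : 0 ≤ s) (hsr : s * r < 1) :
    G.gr s x₀ x₀ < ⊤ ∧ ∑' (x : V) (y : V), G.gr s x₀ x * G.gr s x y * G.gr s y x₀ < ⊤ := by
  obtain ⟨C, hC, h⟩ := G.ek_decay hd hreg x₀ r hr0 hr1 hr
  have hq := tsum_geo_lt (s * r) hsr
  have key : ∀ n, ENNReal.ofReal s ^ n * G.ek n x₀ x₀ ≤
      ENNReal.ofReal C * ENNReal.ofReal (s * r) ^ n := by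
    intro n
    refine (mul_le_mul_right (h n) _).trans (le_of_eq ?_)
    rw [ENNReal.ofReal_mul hC.le, ENNReal.ofReal_mul hs, mul_pow, ENNReal.ofReal_pow hr0.le]
    ring
  constructor
  · refine (ENNReal.tsum_le_tsum key).trans_lt ?_
    rw [ENNReal.tsum_mul_left]
    exact ENNReal.mul_lt_top ENNReal.ofReal_lt_top hq
  · rw [G.triangle_gr hd hreg]
    refine (ENNReal.tsum_le_tsum fun i => ENNReal.tsum_le_tsum fun j => ENNReal.tsum_le_tsum fun k =>
      (?_ : _ ≤ ENNReal.ofReal C * (ENNReal.ofReal (s * r) ^ i * (ENNReal.ofReal (s * r) ^ j *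
         ENNReal.ofReal (s * r) ^ k)))).trans_lt ?_
    · have := key (i + (j + k))
      simp only [pow_add] at this
      simpa only [mul_assoc] using this
    · simp_rw [ENNReal.tsum_mul_left, ENNReal.tsum_mul_right]
      refine ENNReal.mul_lt_top ENNReal.ofReal_lt_top (ENNReal.mul_lt_top hq
        (ENNReal.mul_lt_top hq hq))

lemma gr_lt_top {d : ℕ} (hd : 2 ≤ d) (hreg : G.IsRegularOfDegree d) (hconn : G.Connected)
    (x₀ : V) (s : ℝ) (hs : 0 ≤ s) (h0 : G.gr s x₀ x₀ < ⊤) (x y : V) : G.gr s x y < ⊤ := by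
  rcases hs.eq_or_lt with rfl | hs
  · rw [G.gr_eq hd hreg]
    simp only [ENNReal.ofReal_zero, zero_mul, Finset.sum_const_zero, add_zero]
    split_ifs <;> simp
  have step : ∀ (y u v : V), G.Adj u v → G.gr s u y < ⊤ → G.gr s v y < ⊤ := by
    intro y u v huv hu
    rw [G.gr_eq hd hreg] at hu
    have h2 := (ENNReal.add_lt_top.1 hu).2
    rw [ENNReal.sum_lt_top] at h2
    have h3 := h2 v (by simpa using huv)
    refine ENNReal.lt_top_of_mul_ne_top_right h3.ne ?_
    simp [hs]
  have walk : ∀ (y u v : V), G.Walk u v → G.gr s u y < ⊤ → G.gr s v y < ⊤ := by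
    intro y u v w
    induction w with
    | nil => exact id
    | cons h p ih => exact fun h' => ih (step y _ _ h h')
  have h1 : ∀ u, G.gr s u x₀ < ⊤ := fun u =>
    walk x₀ x₀ u (hconn.preconnected x₀ u).some h0
  have h2 : G.gr s x₀ y < ⊤ := by rw [G.gr_symm hd hreg]; exact h1 y
  exact walk y x₀ x (hconn.preconnected x₀ x).some h2

end helpers

end SimpleGraph

namespace SimpleGraph

section helpers2

variable {V : Type*} [DecidableEq V] (G : SimpleGraph V) [∀ v, Fintype (G.neighborSet v)]

lemma ratio_exists {d : ℕ} (hd : 2 ≤ d) (hreg : G.IsRegularOfDegree d) (x₀ : V)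
    (σ : ℝ) (hσ : 0 < σ) (h : V → ℝ) (hpos : ∀ v, 0 < h v)
    (hsup : ∀ c, σ * ∑ z ∈ G.neighborFinset c, h z ≤ h c) :
    ∃ m : ℝ, 0 ≤ m ∧ (∀ u c, G.Adj u c → m * h u ≤ h c) ∧
      σ * ((d : ℝ) - 1) * m ^ 2 - m + σ ≤ 0 := by
  have hnb : ∃ c, G.Adj x₀ c := by
    have h1 : 0 < (G.neighborFinset x₀).card := by
      rw [card_neighborFinset_eq_degree, hreg.degree_eq]; omega
    obtain ⟨c, hc⟩ := Finset.card_pos.1 h1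
    exact ⟨c, by simpa using hc⟩
  obtain ⟨c₀, hc₀⟩ := hnb
  set S : Set ℝ := {m | ∀ u c, G.Adj u c → m * h u ≤ h c} with hS
  have h0 : (0:ℝ) ∈ S := fun u c _ => by simpa using (hpos c).le
  have hub : ∀ u c, G.Adj u c → ∀ m ∈ S, m ≤ h c / h u := fun u c huc m hm =>
    (le_div_iff₀ (hpos u)).2 (hm u c huc)
  have hbdd : BddAbove S := ⟨h c₀ / h x₀, hub x₀ c₀ hc₀⟩
  have hm0 : 0 ≤ sSup S := le_csSup hbdd h0
  have hmS : sSup S ∈ S := fun u c huc =>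
    (le_div_iff₀ (hpos u)).1 (csSup_le ⟨0, h0⟩ (hub u c huc))
  set m := sSup S
  have key : ∀ u c, G.Adj u c → σ * h u ≤ h c * (1 - σ * ((d : ℝ) - 1) * m) := by
    intro u c huc
    have hu : u ∈ G.neighborFinset c := by simpa using huc.symm
    have h1 := hsup c
    rw [← Finset.add_sum_erase _ _ hu] at h1
    have h2 : ((d : ℝ) - 1) * (m * h c) ≤ ∑ z ∈ (G.neighborFinset c).erase u, h z := by
      have h3 := Finset.card_nsmul_le_sum ((G.neighborFinset c).erase u) h (m * h c) (by
        intro z hz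
        exact hmS c z (by simpa using (Finset.mem_erase.1 hz).2))
      rw [Finset.card_erase_of_mem hu, card_neighborFinset_eq_degree, hreg.degree_eq,
        nsmul_eq_mul, Nat.cast_sub (by omega)] at h3
      simpa using h3
    have := mul_le_mul_of_nonneg_left h2 hσ.le
    nlinarith
  have hD : 0 < 1 - σ * ((d : ℝ) - 1) * m := by
    have h1 := key x₀ c₀ hc₀
    have h2 : 0 < σ * h x₀ := mul_pos hσ (hpos _)
    exact pos_of_mul_pos_right (h2.trans_le h1) (hpos c₀).le
  have hin : σ / (1 - σ * ((d : ℝ) - 1) * m) ∈ S := by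
    intro u c huc
    rw [div_mul_eq_mul_div, div_le_iff₀ hD]
    exact key u c huc
  have h4 := le_csSup hbdd hin
  rw [div_le_iff₀ hD] at h4
  change σ ≤ m * _ at h4
  refine ⟨m, hm0, hmS, ?_⟩
  nlinarith

/-- number of non-backtracking walks of length n from c to y, first step not to u -/
def nbc : ℕ → V → V → V → ℕ
  | 0, _, c, y => if c = y then 1 else 0
  | n + 1, u, c, y => ∑ z ∈ (G.neighborFinset c).erase u, nbc n c z y

/-- number of non-backtracking walks -/
def nbt : ℕ → V → V → ℕ
  | 0, c, y => if c = y then 1 else 0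
  | n + 1, c, y => ∑ z ∈ G.neighborFinset c, G.nbc n c z y

/-- truncated generating function -/
noncomputable def nbS (t : ℝ) (n : ℕ) (u c y : V) : ℝ :=
  ∑ k ∈ Finset.range n, t ^ k * (G.nbc k u c y : ℝ)

lemma nbS_succ (t : ℝ) (n : ℕ) (u c y : V) : G.nbS t (n + 1) u c y =
    (if c = y then 1 else 0) + t * ∑ z ∈ (G.neighborFinset c).erase u, G.nbS t n c z y := by
  unfold nbS
  rw [Finset.sum_range_succ', Finset.sum_comm, Finset.mul_sum, add_comm]
  congr 1
  · simp [nbc]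
  · refine Finset.sum_congr rfl fun k _ => ?_
    rw [nbc, Nat.cast_sum, Finset.mul_sum, Finset.mul_sum]
    refine Finset.sum_congr rfl fun z _ => ?_
    ring

lemma nbt_sum (t : ℝ) (n : ℕ) (c y : V) :
    ∑ k ∈ Finset.range (n + 1), t ^ k * (G.nbt k c y : ℝ) =
    (if c = y then 1 else 0) + t * ∑ z ∈ G.neighborFinset c, G.nbS t n c z y := by
  unfold nbS
  rw [Finset.sum_range_succ', Finset.sum_comm, Finset.mul_sum, add_comm]
  congr 1
  · simp [nbt]
  · refine Finset.sum_congr rfl fun k _ => ?_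
    rw [nbt, Nat.cast_sum, Finset.mul_sum, Finset.mul_sum]
    refine Finset.sum_congr rfl fun z _ => ?_
    ring

lemma nbS_le {d : ℕ} (hd : 2 ≤ d) (hreg : G.IsRegularOfDegree d) (t : ℝ) (ht0 : 0 ≤ t)
    (y : V) (W : V → ℝ)
    (hW : ∀ c, (1 + ((d : ℝ) - 1) * t ^ 2) * W c =
      (1 - t ^ 2) * (if c = y then 1 else 0) + t * ∑ z ∈ G.neighborFinset c, W z)
    (hr : ∀ u c, G.Adj u c → t * W u ≤ W c) (n : ℕ) (u c : V) (huc : G.Adj u c) :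
    (1 - t ^ 2) * G.nbS t n u c y + t * W u ≤ W c := by
  induction n generalizing u c with
  | zero => simpa [nbS] using hr u c huc
  | succ n ih =>
    have hu : u ∈ G.neighborFinset c := by simpa using huc.symm
    rw [nbS_succ]
    have h1 := hW c
    rw [← Finset.add_sum_erase _ _ hu] at h1
    have h2 : (1 - t ^ 2) * ∑ z ∈ (G.neighborFinset c).erase u, G.nbS t n c z y +
        ((d : ℝ) - 1) * (t * W c) ≤ ∑ z ∈ (G.neighborFinset c).erase u, W z := by
      have h3 := Finset.sum_le_sum (s := (G.neighborFinset c).erase u) (fun z hz =>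
        ih c z (by simpa using (Finset.mem_erase.1 hz).2))
      rw [Finset.sum_add_distrib, ← Finset.mul_sum, Finset.sum_const,
        Finset.card_erase_of_mem hu, card_neighborFinset_eq_degree, hreg.degree_eq,
        nsmul_eq_mul, Nat.cast_sub (by omega)] at h3
      simpa using h3
    have h4 := mul_le_mul_of_nonneg_left h2 ht0
    linear_combination h4 - h1

lemma nbt_le {d : ℕ} (hd : 2 ≤ d) (hreg : G.IsRegularOfDegree d) (t : ℝ) (ht0 : 0 ≤ t)
    (ht1 : t < 1) (y : V) (W : V → ℝ)
    (hW : ∀ c, (1 + ((d : ℝ) - 1) * t ^ 2) * W c =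
      (1 - t ^ 2) * (if c = y then 1 else 0) + t * ∑ z ∈ G.neighborFinset c, W z)
    (hr : ∀ u c, G.Adj u c → t * W u ≤ W c) (n : ℕ) (c : V) :
    ∑ k ∈ Finset.range n, t ^ k * (G.nbt k c y : ℝ) ≤ W c := by
  have main : ∀ n, ∑ k ∈ Finset.range (n + 1), t ^ k * (G.nbt k c y : ℝ) ≤ W c := by
    intro n
    rw [nbt_sum]
    have h2 : (1 - t ^ 2) * ∑ z ∈ G.neighborFinset c, G.nbS t n c z y +
        d * (t * W c) ≤ ∑ z ∈ G.neighborFinset c, W z := by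
      have h3 := Finset.sum_le_sum (s := G.neighborFinset c) (fun z hz =>
        G.nbS_le hd hreg t ht0 y W hW hr n c z (by simpa using hz))
      rw [Finset.sum_add_distrib, ← Finset.mul_sum, Finset.sum_const,
        card_neighborFinset_eq_degree, hreg.degree_eq, nsmul_eq_mul] at h3
      exact h3
    have h4 := mul_le_mul_of_nonneg_left h2 ht0
    have h1 := hW c
    have hp : 0 < 1 - t ^ 2 := by nlinarith
    refine le_of_mul_le_mul_left ?_ hp
    linear_combination h4 - h1
  refine le_trans ?_ (main n)
  exact Finset.sum_le_sum_of_subset_of_nonneg (Finset.range_mono (Nat.le_succ n))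
    (fun _ _ _ => by positivity)

lemma card_path_le_nbc (n : ℕ) (u c y : V) :
    ((G.finsetWalkLength n c y).filter (fun w => w.IsPath ∧ u ∉ w.support)).card
      ≤ G.nbc n u c y := by
  classical
  induction n generalizing u c with
  | zero =>
    refine (Finset.card_filter_le _ _).trans ?_
    by_cases h : c = y
    · subst h; simp [finsetWalkLength, nbc]
    · simp [finsetWalkLength, nbc, h]
  | succ n ih =>
    rw [nbc]
    have hsub : ((G.finsetWalkLength (n + 1) c y).filter (fun w => w.IsPath ∧ u ∉ w.support)) ⊆
        ((Finset.univ : Finset (G.neighborSet c)).filter (fun z : G.neighborSet c => (z : V) ≠ u)).biUnion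
          (fun z : G.neighborSet c => ((G.finsetWalkLength n z y).filter (fun w => w.IsPath ∧ c ∉ w.support)).map
            ⟨fun p => Walk.cons z.property p, fun a b h => by
              injection h⟩) := by
      intro w hw
      rw [Finset.mem_filter, mem_finsetWalkLength_iff] at hw
      obtain ⟨hl, hp, hu⟩ := hw
      cases w with
      | nil => simp at hl
      | @cons _ z _ hadj p =>
        rw [Walk.cons_isPath_iff] at hp
        simp only [Finset.mem_biUnion, Finset.mem_filter, Finset.mem_map, Finset.mem_univ, true_and]
        refine ⟨⟨z, hadj⟩, ?_, p, ⟨?_, hp⟩, rfl⟩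
        · rintro rfl
          exact hu (by simp)
        · rw [mem_finsetWalkLength_iff]; simpa using hl
    refine (Finset.card_le_card hsub).trans (Finset.card_biUnion_le.trans ?_)
    simp only [Finset.card_map]
    refine (Finset.sum_le_sum fun (z : G.neighborSet c) _ => ih c (z : V)).trans (le_of_eq ?_)
    refine Finset.sum_bij (fun z _ => (z : V)) ?_ ?_ ?_ ?_
    · intro z hz
      have h2 := z.2
      simp only [Finset.mem_filter, Finset.mem_univ, true_and] at hz
      exact Finset.mem_erase.2 ⟨hz, (G.mem_neighborFinset c z).2 h2⟩
    · intro a _ b _ h; exact Subtype.ext h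
    · intro b hb
      simp only [Finset.mem_erase, mem_neighborFinset] at hb
      exact ⟨⟨b, hb.2⟩, by simpa using hb.1, rfl⟩
    · intro a _; rfl

lemma card_path_le_nbt (n : ℕ) (c y : V) :
    ((G.finsetWalkLength n c y).filter (fun w => w.IsPath)).card ≤ G.nbt n c y := by
  classical
  cases n with
  | zero =>
    refine (Finset.card_filter_le _ _).trans ?_
    by_cases h : c = y
    · subst h; simp [finsetWalkLength, nbt]
    · simp [finsetWalkLength, nbt, h]
  | succ n =>
    rw [nbt]
    have hsub : ((G.finsetWalkLength (n + 1) c y).filter (fun w => w.IsPath)) ⊆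
        (Finset.univ : Finset (G.neighborSet c)).biUnion
          (fun z : G.neighborSet c => ((G.finsetWalkLength n z y).filter (fun w => w.IsPath ∧ c ∉ w.support)).map
            ⟨fun p => Walk.cons z.property p, fun a b h => by
              injection h⟩) := by
      intro w hw
      rw [Finset.mem_filter, mem_finsetWalkLength_iff] at hw
      obtain ⟨hl, hp⟩ := hw
      cases w with
      | nil => simp at hl
      | @cons _ z _ hadj p =>
        rw [Walk.cons_isPath_iff] at hp
        simp only [Finset.mem_biUnion, Finset.mem_filter, Finset.mem_map, Finset.mem_univ, true_and]
        refine ⟨⟨z, hadj⟩, p, ⟨?_, hp⟩, rfl⟩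
        rw [mem_finsetWalkLength_iff]; simpa using hl
    refine (Finset.card_le_card hsub).trans (Finset.card_biUnion_le.trans ?_)
    simp only [Finset.card_map]
    refine (Finset.sum_le_sum fun (z : G.neighborSet c) _ => G.card_path_le_nbc n c (z : V) y).trans (le_of_eq ?_)
    refine Finset.sum_bij (fun z _ => (z : V)) ?_ ?_ ?_ ?_
    · intro z hz
      exact (G.mem_neighborFinset c z).2 z.2
    · intro a _ b _ h; exact Subtype.ext h
    · intro b hb
      exact ⟨⟨b, by simpa using hb⟩, by simp, rfl⟩
    · intro a _; rfl

lemma perc_path {p : ℝ} {μ : Measure (G.edgeSet → Bool)}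
    (hμ : G.IsBernoulliPercolation p μ) {x y : V} (w : G.Walk x y) (hw : w.IsPath) :
    μ {ω | G.openWalk ω w} = ENNReal.ofReal p ^ w.length := by
  classical
  have h := hμ.2 (w.edges.attach.map
    (fun e => (⟨e.1, w.edges_subset_edgeSet e.2⟩ : G.edgeSet))).toFinset (fun _ => true)
  have hset : {ω | G.openWalk ω w} = {ω : G.edgeSet → Bool | ∀ e ∈ (w.edges.attach.map
    (fun e => (⟨e.1, w.edges_subset_edgeSet e.2⟩ : G.edgeSet))).toFinset, ω e = true} := by
    ext ω
    simp only [openWalk, Set.mem_ofPred_eq, List.mem_toFinset, List.mem_map, List.mem_attach,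
      true_and, Subtype.exists]
    constructor
    · rintro h e ⟨a, ha, rfl⟩
      exact h a ha
    · intro h e he
      exact h _ ⟨e, he, rfl⟩
  rw [hset, h]
  simp only [if_true, Finset.prod_const]
  congr 1
  rw [List.toFinset_card_of_nodup]
  · simp
  · refine List.Nodup.map ?_ (List.nodup_attach.2 hw.isTrail.edges_nodup)
    intro a b hab
    exact Subtype.ext (by simpa using hab)

lemma perc_conn_le {p : ℝ} {μ : Measure (G.edgeSet → Bool)}
    (hμ : G.IsBernoulliPercolation p μ) (x y : V) :
    μ {ω | G.percConn ω x y} ≤ ∑' n, ENNReal.ofReal p ^ n * (G.nbt n x y : ℝ≥0∞) := by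
  classical
  have hsub : {ω | G.percConn ω x y} ⊆ ⋃ n : ℕ, ⋃ w ∈ (G.finsetWalkLength n x y).filter
      (fun w => w.IsPath), {ω | G.openWalk ω w} := by
    rintro ω ⟨w, hw⟩
    simp only [Set.mem_iUnion, Finset.mem_filter, mem_finsetWalkLength_iff]
    refine ⟨_, w.bypass, ⟨rfl, w.bypass_isPath⟩, ?_⟩
    intro e he
    exact hw e (w.edges_bypass_subset_edges he)
  refine (measure_mono hsub).trans ((measure_iUnion_le _).trans (ENNReal.tsum_le_tsum fun n => ?_))
  refine (measure_biUnion_finset_le _ _).trans ?_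
  calc _ = ∑ w ∈ (G.finsetWalkLength n x y).filter (fun w => w.IsPath), ENNReal.ofReal p ^ n := by
        refine Finset.sum_congr rfl fun w hw => ?_
        rw [Finset.mem_filter, mem_finsetWalkLength_iff] at hw
        rw [G.perc_path hμ w hw.2, hw.1]
    _ = ENNReal.ofReal p ^ n * (((G.finsetWalkLength n x y).filter (fun w => w.IsPath)).card : ℝ≥0∞) := by
        rw [Finset.sum_const, nsmul_eq_mul, mul_comm]
    _ ≤ _ := by
        gcongr
        exact G.card_path_le_nbt n x y

end helpers2

end SimpleGraph

namespace SimpleGraph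

section helpers3

variable {V : Type*} [DecidableEq V] (G : SimpleGraph V) [∀ v, Fintype (G.neighborSet v)]

lemma gr_toReal {d : ℕ} (hd : 2 ≤ d) (hreg : G.IsRegularOfDegree d) (s : ℝ) (hs : 0 ≤ s)
    (hfin : ∀ x y, G.gr s x y < ⊤) (x y : V) :
    (G.gr s x y).toReal = (if x = y then 1 else 0) +
      s / d * ∑ z ∈ G.neighborFinset x, (G.gr s z y).toReal := by
  have hdne : (d : ℝ≥0∞)⁻¹ ≠ ⊤ := by
    simp; omega
  have hterm : ∀ z ∈ G.neighborFinset x,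
      ENNReal.ofReal s * (d : ℝ≥0∞)⁻¹ * G.gr s z y ≠ ⊤ := fun z _ =>
    ENNReal.mul_ne_top (ENNReal.mul_ne_top ENNReal.ofReal_ne_top hdne) (hfin z y).ne
  rw [G.gr_eq hd hreg, ENNReal.toReal_add (by split_ifs <;> simp) (ENNReal.sum_ne_top.2 hterm),
    ENNReal.toReal_sum hterm, Finset.mul_sum]
  congr 1
  · split_ifs <;> simp
  · refine Finset.sum_congr rfl fun z _ => ?_
    simp [ENNReal.toReal_mul, ENNReal.toReal_ofReal hs, div_eq_mul_inv]

lemma gr_pos {d : ℕ} (hd : 2 ≤ d) (hreg : G.IsRegularOfDegree d) (hconn : G.Connected)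
    (s : ℝ) (hs : 0 < s) (hfin : ∀ x y, G.gr s x y < ⊤) (x y : V) :
    0 < (G.gr s x y).toReal := by
  have hσ : 0 < s / d := by positivity
  have hnn : ∀ v, 0 ≤ s / d * ∑ z ∈ G.neighborFinset v, (G.gr s z y).toReal := fun v =>
    mul_nonneg hσ.le (Finset.sum_nonneg fun _ _ => ENNReal.toReal_nonneg)
  have h0 : 0 < (G.gr s y y).toReal := by
    rw [G.gr_toReal hd hreg s hs.le hfin, if_pos rfl]
    linarith [hnn y]
  have step : ∀ u v, G.Adj u v → 0 < (G.gr s u y).toReal → 0 < (G.gr s v y).toReal := by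
    intro u v huv hu
    rw [G.gr_toReal hd hreg s hs.le hfin v]
    have h1 : 0 < s / d * ∑ z ∈ G.neighborFinset v, (G.gr s z y).toReal := by
      refine mul_pos hσ (hu.trans_le ?_)
      exact Finset.single_le_sum (f := fun z => (G.gr s z y).toReal)
        (fun _ _ => ENNReal.toReal_nonneg) ((G.mem_neighborFinset v u).2 huv.symm)
    split_ifs <;> linarith
  have walk : ∀ u v : V, G.Walk u v → 0 < (G.gr s u y).toReal → 0 < (G.gr s v y).toReal := by
    intro u v w
    induction w with
    | nil => exact id
    | cons h p ih => exact fun h' => ih (step _ _ h h')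
  exact walk y x (hconn.preconnected y x).some h0

lemma ratio_gr {d : ℕ} (hd : 2 ≤ d) (hreg : G.IsRegularOfDegree d) (hconn : G.Connected)
    (s : ℝ) (hs : 0 < s) (hfin : ∀ x y, G.gr s x y < ⊤) (y : V) :
    ∃ m : ℝ, 0 ≤ m ∧ (∀ u c, G.Adj u c → m * (G.gr s u y).toReal ≤ (G.gr s c y).toReal) ∧
      s / d * ((d : ℝ) - 1) * m ^ 2 - m + s / d ≤ 0 := by
  refine G.ratio_exists hd hreg y (s / d) (by positivity) (fun v => (G.gr s v y).toReal)
    (fun v => G.gr_pos hd hreg hconn s hs hfin v y) (fun c => ?_)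
  rw [G.gr_toReal hd hreg s hs.le hfin c]
  split_ifs <;> linarith

lemma spec_lower {d : ℕ} (hd : 2 ≤ d) (hreg : G.IsRegularOfDegree d) (hconn : G.Connected)
    (x₀ : V) (r : ℝ) (hr0 : 0 < r) (hr1 : r < 1) (hr : G.spectralRadius x₀ < r) :
    4 * ((d : ℝ) - 1) ≤ d ^ 2 * r ^ 2 := by
  by_contra! hcon
  have hd2 : (2:ℝ) ≤ d := by exact_mod_cast hd
  have hd1 : 0 < 4 * ((d : ℝ) - 1) := by linarith
  have hlt : Real.sqrt ((d : ℝ) ^ 2 / (4 * ((d : ℝ) - 1))) < 1 / r := by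
    rw [Real.sqrt_lt' (by positivity), div_pow, one_pow, div_lt_div_iff₀ hd1 (by positivity)]
    linarith
  obtain ⟨s, hs1, hs2⟩ := exists_between hlt
  have hs0 : 0 < s := (Real.sqrt_nonneg _).trans_lt hs1
  rw [Real.sqrt_lt' hs0, div_lt_iff₀ hd1] at hs1
  rw [lt_div_iff₀ hr0] at hs2
  have hfin := G.gr_lt_top hd hreg hconn x₀ s hs0.le
    (G.gr_x₀ hd hreg x₀ r hr0 hr1 hr s hs0.le hs2).1
  obtain ⟨m, _, _, hm⟩ := G.ratio_gr hd hreg hconn s hs0 hfin x₀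
  have hσ : 0 < s / d := by positivity
  have hq : 1 < 4 * (s / d) ^ 2 * ((d : ℝ) - 1) := by
    rw [div_pow, mul_div_assoc', div_mul_eq_mul_div, one_lt_div (by positivity)]
    linarith
  set σ := s / (d : ℝ)
  have h1 : 0 < 4 * σ * ((d : ℝ) - 1) := by nlinarith
  have h2 := mul_nonneg h1.le (neg_nonneg.2 hm)
  nlinarith [sq_nonneg (2 * σ * ((d : ℝ) - 1) * m - 1)]

lemma conn_le_gr {d : ℕ} (hd : 2 ≤ d) (hreg : G.IsRegularOfDegree d) (hconn : G.Connected)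
    (t : ℝ) (ht0 : 0 ≤ t) (ht1 : t < 1) (htd : ((d : ℝ) - 1) * t ^ 2 < 1)
    (hfin : ∀ x y, G.gr (t * d / (1 + ((d : ℝ) - 1) * t ^ 2)) x y < ⊤)
    {μ : Measure (G.edgeSet → Bool)} (hμ : G.IsBernoulliPercolation t μ) (x y : V) :
    μ {ω | G.percConn ω x y} ≤ G.gr (t * d / (1 + ((d : ℝ) - 1) * t ^ 2)) x y := by
  have hd2 : (2:ℝ) ≤ d := by exact_mod_cast hd
  have hQ : 0 < 1 + ((d : ℝ) - 1) * t ^ 2 := by nlinarith [sq_nonneg t]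
  set Q := 1 + ((d : ℝ) - 1) * t ^ 2 with hQdef
  set s := t * d / Q with hs
  have hs0 : 0 ≤ s := by positivity
  have hsd : s / d = t / Q := by rw [hs]; field_simp
  set h : V → ℝ := fun v => (G.gr s v y).toReal with hh
  have hh0 : ∀ v, 0 ≤ h v := fun _ => ENNReal.toReal_nonneg
  have hrat : ∀ u c, G.Adj u c → t * h u ≤ h c := by
    intro u c huc
    rcases ht0.eq_or_lt with h0 | htpos
    · rw [← h0]; simpa using hh0 c
    have hspos : 0 < s := by positivity
    obtain ⟨m, hm0, hm, hmq⟩ := G.ratio_gr hd hreg hconn s hspos hfin y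
    have htm : t ≤ m := by
      by_contra! hlt
      rw [hsd] at hmq
      have h1 : t * ((d : ℝ) - 1) * m ^ 2 - Q * m + t ≤ 0 := by
        have h2 := mul_nonpos_of_nonneg_of_nonpos hQ.le hmq
        have h3 : Q * (t / Q * ((d : ℝ) - 1) * m ^ 2 - m + t / Q) =
          t * ((d : ℝ) - 1) * m ^ 2 - Q * m + t := by field_simp
        linarith
      have h2 : (m - t) * (((d : ℝ) - 1) * t * m - 1) ≤ 0 := by
        rw [hQdef] at h1
        linarith
      have h3 : ((d : ℝ) - 1) * t * m < 1 := by
        have : ((d : ℝ) - 1) * t * m ≤ ((d : ℝ) - 1) * t * t :=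
          mul_le_mul_of_nonneg_left hlt.le (mul_nonneg (by linarith) ht0)
        nlinarith
      have := mul_pos (sub_pos.2 hlt) (sub_pos.2 h3)
      nlinarith
    exact (mul_le_mul_of_nonneg_right htm (hh0 u)).trans (hm u c huc)
  have hK0 : 0 < (1 - t ^ 2) / Q := div_pos (by nlinarith) hQ
  have hK1 : (1 - t ^ 2) / Q ≤ 1 := by
    rw [div_le_one hQ]; nlinarith [sq_nonneg t]
  have hb := G.nbt_le hd hreg t ht0 ht1 y (fun v => (1 - t ^ 2) / Q * h v)
    (by
      intro c
      have h1 : h c = _ := G.gr_toReal hd hreg s hs0 hfin c y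
      rw [hsd] at h1
      rw [← Finset.mul_sum, ← hQdef]
      have h2 : Q * h c = Q * (if c = y then 1 else 0) + t * ∑ z ∈ G.neighborFinset c, h z := by
        rw [h1]; field_simp; rfl
      have h3 : Q * ((1 - t ^ 2) / Q * h c) = (1 - t ^ 2) / Q * (Q * h c) := by ring
      rw [h3, h2]
      field_simp)
    (by
      intro u c huc
      have := mul_le_mul_of_nonneg_left (hrat u c huc) hK0.le
      linarith)
  refine (G.perc_conn_le hμ x y).trans (ENNReal.tsum_le_of_sum_range_le fun n => ?_)
  have h1 : ∑ k ∈ Finset.range n, t ^ k * (G.nbt k x y : ℝ) ≤ h x :=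
    (hb n x).trans (mul_le_of_le_one_left (hh0 x) hK1)
  rw [← ENNReal.ofReal_toReal (hfin x y).ne]
  refine le_trans (le_of_eq ?_) (ENNReal.ofReal_le_ofReal h1)
  rw [ENNReal.ofReal_sum_of_nonneg (fun _ _ => by positivity)]
  refine Finset.sum_congr rfl fun k _ => ?_
  rw [ENNReal.ofReal_mul (by positivity), ENNReal.ofReal_pow ht0, ENNReal.ofReal_natCast]

lemma percCritical_mem (P : ℝ → Measure (G.edgeSet → Bool)) :
    G.percCritical P ∈ Set.Icc (0:ℝ) 1 := by
  unfold percCritical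
  set S := {p : ℝ | p ∈ Set.Icc (0:ℝ) 1 ∧ 0 < P p {ω | ∃ x, (G.percCluster ω x).Infinite}}
  refine ⟨Real.sInf_nonneg fun p hp => hp.1.1, ?_⟩
  rcases S.eq_empty_or_nonempty with h | ⟨p, hp⟩
  · rw [h, Real.sInf_empty]; norm_num
  · exact (csInf_le ⟨0, fun q hq => hq.1.1⟩ hp).trans hp.1.2

end helpers3

end SimpleGraph



/-- if `p_c (d-1) ρ < 1` on a d-regular graph with spectral radius `ρ < 1`, then
the open triangle condition holds at `p_c`. -/
theorem stmt_8 {V : Type*} [DecidableEq V] (G : SimpleGraph V)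
    [∀ v, Fintype (G.neighborSet v)] [Infinite V] (hconn : G.Connected)
    (d : ℕ) (hd : 2 ≤ d) (hreg : G.IsRegularOfDegree d)
    (x₀ : V) (ρ : ℝ) (hρ : G.spectralRadius x₀ = ρ) (hρ1 : ρ < 1)
    (P : ℝ → MeasureTheory.Measure (G.edgeSet → Bool))
    (hP : ∀ q ∈ Set.Icc (0:ℝ) 1, G.IsBernoulliPercolation q (P q))
    (hpc : G.percCritical P * ((d : ℝ) - 1) * ρ < 1) :
    (∑' (x : V) (y : V),
        P (G.percCritical P) {ω | G.percConn ω x₀ x} *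
          P (G.percCritical P) {ω | G.percConn ω x y} *
          P (G.percCritical P) {ω | G.percConn ω y x₀}) < ⊤ := by
  have ht := G.percCritical_mem P
  have hμ := hP _ ht
  set t := G.percCritical P with htdef
  obtain ⟨ht0, ht1⟩ := ht
  have hd2 : (2:ℝ) ≤ d := by exact_mod_cast hd
  set L : ℝ := max 1 (t * ((d : ℝ) - 1)) with hL
  have hL1 : 1 ≤ L := le_max_left _ _
  have hLt : t * ((d : ℝ) - 1) ≤ L := le_max_right _ _
  have hLM : L * max ρ 0 < 1 := by
    rcases max_choice ρ 0 with h | h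
    · rw [h]
      rcases max_choice 1 (t * ((d : ℝ) - 1)) with h' | h'
      · rw [hL, h']; linarith
      · rw [hL, h']; exact hpc
    · rw [h]; simp
  have hM0 : 0 ≤ max ρ 0 := le_max_right _ _
  have hMρ : ρ ≤ max ρ 0 := le_max_left _ _
  obtain ⟨r, hMr, hrL⟩ : ∃ r, max ρ 0 < r ∧ r < 1 / L := by
    refine exists_between ?_
    rw [lt_div_iff₀ (by linarith)]
    linarith
  rw [lt_div_iff₀ (by linarith)] at hrL
  have hr0 : 0 < r := hM0.trans_lt hMr
  have hr1 : r < 1 := by nlinarith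
  have hspec : G.spectralRadius x₀ < r := by rw [hρ]; linarith
  have hlow := G.spec_lower hd hreg hconn x₀ r hr0 hr1 hspec
  have htr : t * ((d : ℝ) - 1) * r < 1 := by nlinarith
  have hd3 : (3:ℝ) ≤ d := by
    have : d ≠ 2 := by
      rintro rfl
      push_cast at hlow
      nlinarith
    have : 3 ≤ d := by omega
    exact_mod_cast this
  have htd : ((d : ℝ) - 1) * t ^ 2 < 1 := by
    have h0 : 0 ≤ t * ((d : ℝ) - 1) * r := by
      have : 0 ≤ (d : ℝ) - 1 := by linarith
      positivity
    have h1 : (t * ((d : ℝ) - 1) * r) ^ 2 < 1 := pow_lt_one₀ h0 htr (by norm_num)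
    have h2 : (t * ((d : ℝ) - 1)) ^ 2 * (4 * ((d : ℝ) - 1)) ≤
        (t * ((d : ℝ) - 1)) ^ 2 * (d ^ 2 * r ^ 2) :=
      mul_le_mul_of_nonneg_left hlow (sq_nonneg _)
    have h3 : (2 * ((d : ℝ) - 1)) ^ 2 * (((d : ℝ) - 1) * t ^ 2) < d ^ 2 := by
      have : (0:ℝ) < d ^ 2 := by positivity
      nlinarith
    have h4 : (d : ℝ) ^ 2 ≤ (2 * ((d : ℝ) - 1)) ^ 2 := by nlinarith
    have h5 : 0 < (2 * ((d : ℝ) - 1)) ^ 2 := by nlinarith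
    by_contra! hc
    nlinarith
  have ht1' : t < 1 := by nlinarith
  have hQ : 0 < 1 + ((d : ℝ) - 1) * t ^ 2 := by nlinarith [sq_nonneg t]
  have hs0 : 0 ≤ t * d / (1 + ((d : ℝ) - 1) * t ^ 2) := by positivity
  have hsL : t * d / (1 + ((d : ℝ) - 1) * t ^ 2) ≤ L := by
    rw [div_le_iff₀ hQ]
    rcases le_total (t * ((d : ℝ) - 1)) 1 with h | h
    · have h1 : t * d ≤ 1 + ((d : ℝ) - 1) * t ^ 2 := by
        nlinarith [mul_nonneg (sub_nonneg.2 h) (sub_nonneg.2 ht1)]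
      nlinarith
    · have h1 : t * d ≤ t * ((d : ℝ) - 1) * (1 + ((d : ℝ) - 1) * t ^ 2) := by
        have h2 : 0 ≤ t * ((t * ((d : ℝ) - 1)) ^ 2 - 1) := mul_nonneg ht0 (by nlinarith)
        nlinarith
      exact h1.trans (mul_le_mul_of_nonneg_right hLt hQ.le)
  have hsr : t * d / (1 + ((d : ℝ) - 1) * t ^ 2) * r < 1 := by nlinarith
  obtain ⟨hg, htri⟩ := G.gr_x₀ hd hreg x₀ r hr0 hr1 hspec _ hs0 hsr
  have hfin := G.gr_lt_top hd hreg hconn x₀ _ hs0 hg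
  have hle := G.conn_le_gr hd hreg hconn t ht0 ht1' htd hfin hμ
  refine lt_of_le_of_lt (ENNReal.tsum_le_tsum fun x => ENNReal.tsum_le_tsum fun y => ?_) htri
  exact mul_le_mul' (mul_le_mul' (hle _ _) (hle _ _)) (hle _ _)
end

section
/- Let G be a d-regular transitive graph with spectral radius ρ < 1 such that p_c(d-1)ρ < 1. Then there exists c > 0 such that for all n and all vertices x, the self-avoiding walk endpoint distribution satisfies P(SAW(n) = x) = c_n(x)/c_n ≤ e^{-cn}. -/
open MeasureTheory Filter Set
open scoped ENNReal

set_option linter.unusedSectionVars false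

namespace SawAux
open SimpleGraph

variable {V : Type*}

section counts
variable [DecidableEq V] (G : SimpleGraph V) [∀ v, Fintype (G.neighborSet v)]

/-- adjacency operator -/
def adjOp (f : V → ℕ) : V → ℕ := fun x => ∑ z ∈ G.neighborFinset x, f z

/-- number of walks -/
def wk : ℕ → V → V → ℕ
  | 0, x, y => if x = y then 1 else 0
  | n + 1, x, y => ∑ z ∈ G.neighborFinset x, wk n z y

def ball : ℕ → V → Finset V
  | 0, x => {x}
  | n + 1, x => (G.neighborFinset x).biUnion (fun z => ball n z)

theorem srw_eq (d : ℕ) (hreg : G.IsRegularOfDegree d) (n : ℕ) (x y : V) :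
    G.srw n x y = (wk G n x y : ℝ) / (d : ℝ) ^ n := by
  induction n generalizing x with
  | zero => simp [srw, wk]
  | succ n ih =>
    rw [srw, wk, hreg x]
    push_cast
    rw [Finset.sum_div]
    refine Finset.sum_congr rfl fun z _ => ?_
    rw [ih, pow_succ]
    field_simp

theorem wk_add (m n : ℕ) (x y : V) (S : Finset V) (hS : ball G m x ⊆ S) :
    wk G (m + n) x y = ∑ z ∈ S, wk G m x z * wk G n z y := by
  induction m generalizing x with
  | zero =>
    have hx : x ∈ S := hS (by simp [ball])
    simp [wk, hx]
  | succ m ih =>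
    rw [show m + 1 + n = (m + n) + 1 by ring, wk]
    simp only [wk, Finset.sum_mul]
    rw [Finset.sum_comm]
    refine Finset.sum_congr rfl fun u hu => ih u (subset_trans ?_ hS)
    exact Finset.subset_biUnion_of_mem (fun z => ball G m z) hu

theorem wk_one (x y : V) : wk G 1 x y = if y ∈ G.neighborFinset x then 1 else 0 := by
  simp [wk]

theorem wk_symm (n : ℕ) (x y : V) : wk G n x y = wk G n y x := by
  induction n generalizing x with
  | zero => simp [wk, eq_comm]
  | succ n ih =>
    rw [wk_add G n 1 y x (ball G n y ∪ G.neighborFinset x) Finset.subset_union_left, wk]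
    simp only [wk_one, mul_ite, mul_one, mul_zero, ih]
    rw [← Finset.sum_filter]
    refine Finset.sum_congr ?_ fun _ _ => rfl
    ext z
    simp only [Finset.mem_filter, Finset.mem_union, mem_neighborFinset]
    constructor
    · intro h; exact ⟨Or.inr h, h.symm⟩
    · intro h; exact h.2.symm

theorem wk_iso (φ : G ≃g G) (n : ℕ) (x y : V) : wk G n (φ x) (φ y) = wk G n x y := by
  induction n generalizing x with
  | zero => simp [wk]
  | succ n ih =>
    rw [wk, wk]
    symm
    refine Finset.sum_bij (fun z _ => φ z) ?_ ?_ ?_ ?_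
    · intro a ha; rw [mem_neighborFinset] at ha ⊢; exact φ.map_adj_iff.2 ha
    · intro a _ b _ h; exact φ.injective h
    · intro b hb
      refine ⟨φ.symm b, ?_, by simp⟩
      rw [mem_neighborFinset] at hb ⊢
      rw [← φ.map_adj_iff]; simpa using hb
    · intro a _; rw [ih]

theorem wk_even_le (htrans : G.IsVertexTransitive) (x₀ : V) (n : ℕ) (x y : V) :
    wk G (2 * n) x y ≤ wk G (2 * n) x₀ x₀ := by
  have hd : ∀ u, wk G (2 * n) u u = wk G (2 * n) x₀ x₀ := by
    intro u
    obtain ⟨φ, rfl⟩ := htrans x₀ u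
    exact wk_iso G φ _ _ _
  have h1 := hd x
  have h2 := hd y
  rw [two_mul] at *
  have e1 := wk_add G n n x x (ball G n x ∪ ball G n y) Finset.subset_union_left
  have e2 := wk_add G n n y y (ball G n x ∪ ball G n y) Finset.subset_union_right
  have e3 := wk_add G n n x y (ball G n x ∪ ball G n y) Finset.subset_union_left
  have : 2 * wk G (n + n) x y ≤ wk G (n + n) x x + wk G (n + n) y y := by
    rw [e1, e2, e3, Finset.mul_sum, ← Finset.sum_add_distrib]
    refine Finset.sum_le_sum fun z _ => ?_
    rw [wk_symm G n z y, wk_symm G n z x]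
    nlinarith [two_mul_le_add_sq (wk G n x z) (wk G n y z)]
  omega

theorem wk_le_pow (d : ℕ) (hreg : G.IsRegularOfDegree d) (n : ℕ) (x y : V) :
    wk G n x y ≤ d ^ n := by
  induction n generalizing x with
  | zero => simp only [wk]; split <;> simp
  | succ n ih =>
    rw [wk]
    calc _ ≤ ∑ z ∈ G.neighborFinset x, d ^ n := Finset.sum_le_sum fun z _ => ih z
      _ = d ^ (n+1) := by
        simp only [Finset.sum_const, card_neighborFinset_eq_degree, hreg x, smul_eq_mul]
        ring

theorem wk_succ_le (d : ℕ) (hreg : G.IsRegularOfDegree d) (n : ℕ) (y : V) (C : ℝ)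
    (h : ∀ x, (wk G n x y : ℝ) ≤ C) (x : V) : (wk G (n+1) x y : ℝ) ≤ d * C := by
  rw [wk]; push_cast
  calc _ ≤ ∑ z ∈ G.neighborFinset x, C := Finset.sum_le_sum fun z _ => h z
    _ = d * C := by
      simp [hreg x]

/-- from the spectral radius: uniform exponential bound on the heat kernel. -/
theorem heat_bound (htrans : G.IsVertexTransitive) (d : ℕ) (hd : 2 ≤ d)
    (hreg : G.IsRegularOfDegree d) (x₀ : V) (r : ℝ) (hr0 : 0 < r) (hr1 : r < 1)
    (hr : G.spectralRadius x₀ < r) :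
    ∃ C : ℝ, 0 < C ∧ ∀ n x y, (wk G n x y : ℝ) ≤ C * (r * d) ^ n := by
  have hd0 : (0:ℝ) < d := by positivity
  have hs0 : ∀ n x y, 0 ≤ G.srw n x y := by
    intro n x y; rw [srw_eq G d hreg]; positivity
  have hs1 : ∀ n x y, G.srw n x y ≤ 1 := by
    intro n x y; rw [srw_eq G d hreg, div_le_one (by positivity)]
    exact_mod_cast wk_le_pow G d hreg n x y
  have hev : ∀ᶠ n : ℕ in Filter.atTop,
      (G.srw (2 * n) x₀ x₀) ^ ((2 * n : ℝ))⁻¹ < r := by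
    refine Filter.eventually_lt_of_limsup_lt hr ?_
    refine Filter.isBoundedUnder_of ⟨1, fun n => ?_⟩
    exact Real.rpow_le_one (hs0 _ _ _) (hs1 _ _ _) (by positivity)
  obtain ⟨N, hN⟩ := Filter.eventually_atTop.1 (hev.and (Filter.eventually_ge_atTop 1))
  have heven : ∀ n ≥ N, ∀ x y, (wk G (2*n) x y : ℝ) ≤ (r * d) ^ (2*n) := by
    intro n hn x y
    obtain ⟨h1, h2⟩ := hN n hn
    have h3 : G.srw (2*n) x₀ x₀ ≤ r ^ (2*n) := by
      have h := Real.rpow_le_rpow (Real.rpow_nonneg (hs0 _ _ _) _) h1.le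
        (show (0:ℝ) ≤ (2*n:ℝ) by positivity)
      rw [← Real.rpow_mul (hs0 _ _ _), inv_mul_cancel₀ (by positivity), Real.rpow_one] at h
      calc _ ≤ _ := h
        _ = _ := by rw [← Real.rpow_natCast]; push_cast; rfl
    rw [srw_eq G d hreg, div_le_iff₀ (by positivity), ← mul_pow] at h3
    refine le_trans ?_ h3
    exact_mod_cast wk_even_le G htrans x₀ n x y
  refine ⟨(r⁻¹) ^ (2 * N + 1), by positivity, fun n x y => ?_⟩
  have hr1' : 1 ≤ r⁻¹ := (one_le_inv₀ hr0).2 hr1.le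
  by_cases hn : n < 2 * N
  · have h1 : (wk G n x y : ℝ) ≤ (d:ℝ) ^ n := by exact_mod_cast wk_le_pow G d hreg n x y
    refine h1.trans ?_
    rw [mul_pow, ← mul_assoc]
    refine le_mul_of_one_le_left (by positivity) ?_
    calc (1:ℝ) = (r⁻¹)^n * r^n := by rw [← mul_pow, inv_mul_cancel₀ hr0.ne', one_pow]
      _ ≤ _ := by gcongr <;> first | assumption | omega
  · rcases Nat.even_or_odd' n with ⟨k, rfl | rfl⟩
    · refine (heven k (by omega) x y).trans (le_mul_of_one_le_left (by positivity) ?_)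
      exact one_le_pow₀ hr1'
    · refine (wk_succ_le G d hreg (2*k) y _ (fun x => heven k (by omega) x y) x).trans ?_
      calc d * (r * d)^(2*k) = r⁻¹ * (r*d)^(2*k+1) := by rw [pow_succ]; field_simp
        _ ≤ _ := by
          gcongr
          exact le_self_pow₀ hr1' (by omega)

/-! non-backtracking counts -/

def nb : ℕ → V → V → V → ℕ
  | 0, _, c, y => if c = y then 1 else 0
  | n + 1, prev, c, y => ∑ z ∈ (G.neighborFinset c).erase prev, nb n c z y

def nbB (y : V) : ℕ → V → ℕ
  | 0, x => if x = y then 1 else 0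
  | n + 1, x => ∑ z ∈ G.neighborFinset x, nb G n x z y

theorem adj_nbB_zero (y : V) : adjOp G (nbB G y 0) = nbB G y 1 := by
  funext x; simp [adjOp, nbB, nb]

theorem adj_nbB_aux (y : V) (j : ℕ) (x : V) :
    adjOp G (nbB G y (j+1)) x = nbB G y (j+2) x + ∑ z ∈ G.neighborFinset x, nb G j z x y := by
  simp only [adjOp, nbB]
  rw [← Finset.sum_add_distrib]
  refine Finset.sum_congr rfl fun z hz => ?_
  rw [nb, Finset.sum_erase_add]
  rw [mem_neighborFinset] at *
  exact hz.symm

theorem adj_nbB_one (d : ℕ) (hreg : G.IsRegularOfDegree d) (y : V) (x : V) :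
    adjOp G (nbB G y 1) x = nbB G y 2 x + d * nbB G y 0 x := by
  rw [adj_nbB_aux]
  simp [nb, nbB, hreg x]

theorem adj_nbB_succ (d : ℕ) (hreg : G.IsRegularOfDegree d) (y : V) (j : ℕ) (x : V) :
    adjOp G (nbB G y (j+2)) x = nbB G y (j+3) x + (d - 1) * nbB G y (j+1) x := by
  rw [adj_nbB_aux]
  congr 1
  simp only [nb, nbB]
  have : ∀ z ∈ G.neighborFinset x, ∑ w ∈ (G.neighborFinset x).erase z, nb G j x w y
      = ∑ w ∈ G.neighborFinset x, if w ≠ z then nb G j x w y else 0 := by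
    intro z _
    rw [← Finset.sum_filter]
    refine Finset.sum_congr ?_ fun _ _ => rfl
    ext w; simp [and_comm]
  rw [Finset.sum_congr rfl this, Finset.sum_comm, Finset.mul_sum]
  refine Finset.sum_congr rfl fun w hw => ?_
  rw [← Finset.sum_filter, Finset.sum_const, smul_eq_mul]
  congr 1
  have : Finset.filter (fun z => w ≠ z) (G.neighborFinset x) = (G.neighborFinset x).erase w := by
    ext z; simp [and_comm, eq_comm]
  rw [this, Finset.card_erase_of_mem hw, card_neighborFinset_eq_degree, hreg x]

theorem adjOp_iter_add (m : ℕ) (f g : V → ℕ) :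
    (adjOp G)^[m] (f + g) = (adjOp G)^[m] f + (adjOp G)^[m] g := by
  induction m generalizing f g with
  | zero => rfl
  | succ m ih =>
    rw [Function.iterate_succ_apply, Function.iterate_succ_apply, Function.iterate_succ_apply, ← ih]
    congr 1
    funext x; simp [adjOp, Finset.sum_add_distrib]

theorem adjOp_iter_mul (m : ℕ) (k : ℕ) (f : V → ℕ) :
    (adjOp G)^[m] (fun x => k * f x) = fun x => k * (adjOp G)^[m] f x := by
  induction m generalizing f with
  | zero => rfl
  | succ m ih =>
    rw [Function.iterate_succ_apply, Function.iterate_succ_apply, ← ih]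
    congr 1
    funext x; simp [adjOp, Finset.mul_sum]

theorem adjOp_iter_zero (m : ℕ) (y x : V) : (adjOp G)^[m] (nbB G y 0) x = wk G m x y := by
  induction m generalizing x with
  | zero => rfl
  | succ m ih =>
    rw [Function.iterate_succ_apply', wk]
    simp only [adjOp]
    exact Finset.sum_congr rfl fun z _ => ih z

noncomputable def pot (t : ℝ≥0∞) (f : V → ℕ) (x : V) : ℝ≥0∞ :=
  ∑' m : ℕ, t ^ m * ((adjOp G)^[m] f x : ℝ≥0∞)

theorem pot_eq (t : ℝ≥0∞) (f : V → ℕ) (x : V) :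
    pot G t f x = f x + t * pot G t (adjOp G f) x := by
  rw [pot, tsum_eq_zero_add' ENNReal.summable, pot, ← ENNReal.tsum_mul_left]
  simp [pow_succ', mul_assoc]

theorem pot_add_mul (t : ℝ≥0∞) (f g : V → ℕ) (k : ℕ) (x : V) :
    pot G t (fun x => f x + k * g x) x = pot G t f x + k * pot G t g x := by
  have : (fun x => f x + k * g x) = f + fun x => k * g x := rfl
  simp only [pot, this, adjOp_iter_add, adjOp_iter_mul, Pi.add_apply]
  rw [← ENNReal.tsum_mul_left, ← ENNReal.tsum_add]
  refine tsum_congr fun m => ?_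
  push_cast; ring

theorem nbB_bound (d : ℕ) (hd : 2 ≤ d) (hreg : G.IsRegularOfDegree d) (s : ℝ) (hs : 1 ≤ s)
    (K : ℝ) (x y : V)
    (hK : pot G (ENNReal.ofReal (s / d)) (nbB G y 0) x ≤ ENNReal.ofReal K) (hK0 : 0 ≤ K) (n : ℕ) :
    (nbB G y n x : ℝ) ≤ 2 * K * ((d - 1) / s) ^ n := by
  have hd2 : (2:ℝ) ≤ d := by exact_mod_cast hd
  have ht0 : 0 < s / d := by positivity
  set t : ℝ := s / d with ht
  set T := ENNReal.ofReal t with hT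
  have hTne : T ≠ 0 := by simpa [hT] using ht0
  have hTtop : T ≠ ⊤ := ENNReal.ofReal_ne_top
  set P : ℕ → ℝ≥0∞ := fun j => pot G T (nbB G y j) x with hP
  have r0 : P 0 = nbB G y 0 x + T * P 1 := by
    simp only [hP]; rw [pot_eq, adj_nbB_zero]
  have r1 : P 1 = nbB G y 1 x + T * (P 2 + d * P 0) := by
    simp only [hP]; rw [pot_eq, ← pot_add_mul]; congr 3
    funext z; exact adj_nbB_one G d hreg y z
  have r2 : ∀ j, P (j+2) = nbB G y (j+2) x + T * (P (j+3) + (d - 1 : ℕ) * P (j+1)) := by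
    intro j
    simp only [hP]; rw [pot_eq, ← pot_add_mul]; congr 3
    funext z; exact adj_nbB_succ G d hreg y j z
  have hstep : ∀ j, T * P (j+1) ≤ P j := by
    intro j
    match j with
    | 0 => rw [r0]; exact le_add_self
    | 1 => rw [r1]; exact le_trans (mul_le_mul_right (self_le_add_right _ _) _) le_add_self
    | j+2 => rw [r2 j]; exact le_trans (mul_le_mul_right (self_le_add_right _ _) _) le_add_self
  have hfin : ∀ j, P j ≠ ⊤ := by
    intro j
    induction j with
    | zero => exact ne_top_of_le_ne_top ENNReal.ofReal_ne_top hK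
    | succ j ih =>
      intro h
      have := hstep j
      rw [h, ENNReal.mul_top hTne] at this
      exact ih (top_le_iff.1 this)
  set v : ℕ → ℝ := fun j => (P j).toReal with hv
  have hv0 : ∀ j, 0 ≤ v j := fun j => ENNReal.toReal_nonneg
  have q0 : v 0 = nbB G y 0 x + t * v 1 := by
    simp only [hv]; conv_lhs => rw [r0]
    rw [ENNReal.toReal_add (by simp) (ENNReal.mul_ne_top hTtop (hfin 1))]
    simp [hT, ht0.le]
  have q1 : v 1 = nbB G y 1 x + t * (v 2 + d * v 0) := by
    simp only [hv]; conv_lhs => rw [r1]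
    have e : (d:ℝ≥0∞) * P 0 ≠ ⊤ := ENNReal.mul_ne_top (by simp) (hfin 0)
    rw [ENNReal.toReal_add (by simp) (ENNReal.mul_ne_top hTtop (ENNReal.add_ne_top.2 ⟨hfin 2, e⟩)),
      ENNReal.toReal_mul, ENNReal.toReal_add (hfin 2) e]
    simp [hT, ht0.le]
  have q2 : ∀ j, v (j+2) = nbB G y (j+2) x + t * (v (j+3) + (d - 1) * v (j+1)) := by
    intro j
    simp only [hv]; conv_lhs => rw [r2]
    have e : ((d-1:ℕ):ℝ≥0∞) * P (j+1) ≠ ⊤ := ENNReal.mul_ne_top (by simp) (hfin _)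
    rw [ENNReal.toReal_add (by simp) (ENNReal.mul_ne_top hTtop (ENNReal.add_ne_top.2 ⟨hfin _, e⟩)),
      ENNReal.toReal_mul, ENNReal.toReal_add (hfin _) e]
    have h1d : 1 ≤ d := by omega
    rw [ENNReal.toReal_mul, ENNReal.toReal_natCast, ENNReal.toReal_natCast, Nat.cast_sub h1d, hT,
      ENNReal.toReal_ofReal ht0.le, Nat.cast_one]
  have hB : ∀ j, (0:ℝ) ≤ nbB G y j x := fun j => by positivity
  have htd : t * d = s := by rw [ht]; field_simp
  -- main: s * v (j+2) ≤ (d-1) * v (j+1)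
  have key0 : t * v 1 ≤ v 0 := by rw [q0]; linarith [hB 0]
  have hcore : ∀ a b : ℝ, 0 ≤ a → t * b + s * t * a ≤ a → s * b ≤ (d - 1) * a := by
    intro a b ha h
    have h1 : s * b + s * s * a ≤ d * a := by
      have := mul_le_mul_of_nonneg_left h (show (0:ℝ) ≤ d by linarith)
      calc s * b + s * s * a = d * (t * b + s * t * a) := by rw [← htd]; ring
        _ ≤ _ := this
    nlinarith [mul_nonneg ha (show 0 ≤ s * s - 1 by nlinarith)]
  have key : ∀ j, s * v (j+2) ≤ (d - 1) * v (j+1) := by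
    intro j
    induction j with
    | zero =>
      apply hcore _ _ (hv0 _)
      have : t * (d * (t * v 1)) ≤ t * (d * v 0) := by gcongr
      calc t * v 2 + s * t * v 1 = t * v 2 + t * (d * (t * v 1)) := by rw [← htd]; ring
        _ ≤ v 1 := by linarith [q1, hB 1]
    | succ j ih =>
      apply hcore _ _ (hv0 _)
      have : t * (s * v (j+2)) ≤ t * ((d-1) * v (j+1)) := by gcongr
      have h2 := q2 j
      have h3 := hB (j+2)
      show t * v (j+3) + s * t * v (j+2) ≤ v (j+2)
      linarith
  have hK' : v 0 ≤ K := ENNReal.toReal_le_of_le_ofReal hK0 hK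
  have hle : ∀ j, (nbB G y j x : ℝ) ≤ v j := by
    intro j
    match j with
    | 0 => rw [q0]; nlinarith [hv0 1]
    | 1 => rw [q1]; have := mul_nonneg ht0.le (add_nonneg (hv0 2) (mul_nonneg (by linarith : (0:ℝ) ≤ d) (hv0 0))); linarith
    | j+2 => rw [q2]; have := mul_nonneg ht0.le (add_nonneg (hv0 (j+3)) (mul_nonneg (by linarith : (0:ℝ) ≤ d - 1) (hv0 (j+1)))); linarith
  have hs0 : 0 < s := by linarith
  refine (hle n).trans ?_
  have hgen : ∀ j, v (j+1) ≤ 2 * K * ((d-1)/s)^(j+1) := by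
    intro j
    induction j with
    | zero =>
      have : s * v 1 ≤ 2 * (d - 1) * v 0 := by
        have h := mul_le_mul_of_nonneg_left key0 (show (0:ℝ) ≤ d by linarith)
        have h' : d * (t * v 1) = s * v 1 := by rw [← htd]; ring
        nlinarith [hv0 0]
      rw [zero_add, pow_one, mul_div_assoc', le_div_iff₀ hs0]
      nlinarith [mul_le_mul_of_nonneg_left hK' (show (0:ℝ) ≤ 2 * (d-1) by linarith)]
    | succ j ih =>
      have h := key j
      have : v (j+2) ≤ (d-1)/s * v (j+1) := by
        rw [div_mul_eq_mul_div, le_div_iff₀ hs0]; linarith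
      refine this.trans ?_
      have hnn : 0 ≤ ((d:ℝ)-1)/s := div_nonneg (by linarith) hs0.le
      calc _ ≤ (d-1)/s * (2 * K * ((d-1)/s)^(j+1)) := by gcongr
        _ = _ := by ring
  match n with
  | 0 => simp; linarith
  | j+1 => exact hgen j



/-! self-avoiding walks are non-backtracking -/

instance finite_walks (x : V) (n : ℕ) :
    Finite {w : (y : V) × G.Walk x y // w.2.length = n} := by
  induction n generalizing x with
  | zero =>
    have : Subsingleton {w : (y : V) × G.Walk x y // w.2.length = 0} := by
      constructor
      rintro ⟨⟨y, w⟩, hw⟩ ⟨⟨y', w'⟩, hw'⟩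
      cases w with
      | nil => cases w' with
        | nil => rfl
        | cons _ _ => simp at hw'
      | cons _ _ => simp at hw
    infer_instance
  | succ n ih =>
    let f : (Σ z : G.neighborSet x, {w : (y : V) × G.Walk z.1 y // w.2.length = n}) →
        {w : (y : V) × G.Walk x y // w.2.length = n + 1} :=
      fun p => ⟨⟨p.2.1.1, Walk.cons p.1.2 p.2.1.2⟩, congrArg (· + 1) p.2.2⟩
    refine Finite.of_surjective f ?_
    rintro ⟨⟨y, w⟩, hw⟩
    cases w with
    | nil => simp at hw
    | cons h w => exact ⟨⟨⟨_, h⟩, ⟨⟨y, w⟩, by simpa using hw⟩⟩, rfl⟩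

instance finite_saws (x : V) (n : ℕ) :
    Finite {w : (y : V) × G.Walk x y // w.2.IsPath ∧ w.2.length = n} :=
  Finite.of_injective
    (fun w => (⟨w.1, w.2.2⟩ : {w : (y : V) × G.Walk x y // w.2.length = n}))
    (fun a b h => Subtype.ext (congrArg (fun z => z.1) h))

theorem finite_sub (x y : V) (n : ℕ) (p : G.Walk x y → Prop) (hp : ∀ w, p w → w.length = n) :
    Finite {w : G.Walk x y // p w} := by
  refine Finite.of_injective
    (fun w => (⟨⟨y, w.1⟩, hp _ w.2⟩ : {w : (y : V) × G.Walk x y // w.2.length = n})) ?_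
  intro a b h
  have h1 := congrArg (fun z => z.1) h
  simp only [Sigma.mk.injEq, heq_eq_eq, true_and] at h1
  exact Subtype.ext h1

theorem saw_le_nb (k : ℕ) (prev c y : V) :
    Nat.card {w : G.Walk c y // w.IsPath ∧ w.length = k ∧ prev ∉ w.support} ≤ nb G k prev c y := by
  induction k generalizing prev c with
  | zero =>
    rw [nb]
    split_ifs with h
    · subst h
      have : Subsingleton {w : G.Walk c c // w.IsPath ∧ w.length = 0 ∧ prev ∉ w.support} := by
        constructor
        rintro ⟨w, h1, h2, h3⟩ ⟨w', h1', h2', h3'⟩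
        cases w with
        | nil => cases w' with
          | nil => rfl
          | cons _ _ => simp at h2'
        | cons _ _ => simp at h2
      exact Finite.card_le_one_iff_subsingleton.2 this
    · have : IsEmpty {w : G.Walk c y // w.IsPath ∧ w.length = 0 ∧ prev ∉ w.support} := by
        constructor
        rintro ⟨w, h1, h2, h3⟩
        exact h (Walk.eq_of_length_eq_zero h2)
      exact (Nat.card_of_isEmpty).le
  | succ k ih =>
    rw [nb]
    have hf : ∀ z, Finite {w : G.Walk z y // w.IsPath ∧ w.length = k ∧ c ∉ w.support} :=
      fun z => finite_sub G z y k _ fun w h => h.2.1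
    let T := Σ z : ((G.neighborFinset c).erase prev : Finset V),
      {w : G.Walk z.1 y // w.IsPath ∧ w.length = k ∧ c ∉ w.support}
    have hadj : ∀ z : ((G.neighborFinset c).erase prev : Finset V), G.Adj c z.1 := by
      intro z; have := Finset.mem_of_mem_erase z.2; simpa using this
    let f : T → {w : G.Walk c y // w.IsPath ∧ w.length = k + 1} :=
      fun p => ⟨Walk.cons (hadj p.1) p.2.1, by
        rw [Walk.cons_isPath_iff]; exact ⟨p.2.2.1, p.2.2.2.2⟩, by simp [p.2.2.2.1]⟩
    calc _ ≤ Nat.card (Set.range f) := by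
          refine Nat.card_le_card_of_injective
            (fun w => (⟨⟨w.1, w.2.1, w.2.2.1⟩, ?_⟩ : Set.range f)) ?_
          · obtain ⟨w, h1, h2, h3⟩ := w
            cases w with
            | nil => simp at h2
            | cons h w =>
              rename_i z
              rw [Walk.cons_isPath_iff] at h1
              have hz : z ∈ (G.neighborFinset c).erase prev := by
                rw [Finset.mem_erase, mem_neighborFinset]
                refine ⟨?_, h⟩
                rintro rfl
                simp at h3
              exact ⟨⟨⟨z, hz⟩, ⟨w, h1.1, by simpa using h2, h1.2⟩⟩, rfl⟩
          · intro a b h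
            have h1 := congrArg (fun z => z.1.1) h
            exact Subtype.ext h1
      _ ≤ Nat.card T := Finite.card_range_le f
      _ = ∑ z : ((G.neighborFinset c).erase prev : Finset V),
          Nat.card {w : G.Walk z.1 y // w.IsPath ∧ w.length = k ∧ c ∉ w.support} := Nat.card_sigma
      _ ≤ ∑ z : ((G.neighborFinset c).erase prev : Finset V), nb G k c z.1 y :=
          Finset.sum_le_sum fun z _ => ih c z.1
      _ = _ := Finset.sum_coe_sort ((G.neighborFinset c).erase prev) (fun z => nb G k c z y)

theorem saw_le_nbB (n : ℕ) (x y : V) : G.sawCountTo x y n ≤ nbB G y n x := by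
  cases n with
  | zero =>
    rw [nbB, sawCountTo]
    split_ifs with h
    · subst h
      have : Subsingleton {w : G.Walk x x // w.IsPath ∧ w.length = 0} := by
        constructor
        rintro ⟨w, h1, h2⟩ ⟨w', h1', h2'⟩
        cases w with
        | nil => cases w' with
          | nil => rfl
          | cons _ _ => simp at h2'
        | cons _ _ => simp at h2
      exact Finite.card_le_one_iff_subsingleton.2 this
    · have : IsEmpty {w : G.Walk x y // w.IsPath ∧ w.length = 0} := by
        constructor
        rintro ⟨w, h1, h2⟩
        exact h (Walk.eq_of_length_eq_zero h2)
      exact (Nat.card_of_isEmpty).le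
  | succ k =>
    rw [nbB, sawCountTo]
    have hf : ∀ z, Finite {w : G.Walk z y // w.IsPath ∧ w.length = k ∧ x ∉ w.support} :=
      fun z => finite_sub G z y k _ fun w h => h.2.1
    let T := Σ z : (G.neighborFinset x : Finset V),
      {w : G.Walk z.1 y // w.IsPath ∧ w.length = k ∧ x ∉ w.support}
    have hadj : ∀ z : (G.neighborFinset x : Finset V), G.Adj x z.1 := by
      intro z; exact (mem_neighborFinset _ _ _).1 z.2
    let f : T → {w : G.Walk x y // w.IsPath ∧ w.length = k + 1} :=
      fun p => ⟨Walk.cons (hadj p.1) p.2.1, by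
        rw [Walk.cons_isPath_iff]; exact ⟨p.2.2.1, p.2.2.2.2⟩, by simp [p.2.2.2.1]⟩
    have hsurj : Function.Surjective f := by
      rintro ⟨w, h1, h2⟩
      cases w with
      | nil => simp at h2
      | cons h w =>
        rename_i z
        rw [Walk.cons_isPath_iff] at h1
        have hz : z ∈ G.neighborFinset x := by
          rw [mem_neighborFinset]; exact h
        exact ⟨⟨⟨z, hz⟩, ⟨w, h1.1, by simpa using h2, h1.2⟩⟩, rfl⟩
    calc _ ≤ Nat.card T := Nat.card_le_card_of_surjective f hsurj
      _ = ∑ z : (G.neighborFinset x : Finset V),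
          Nat.card {w : G.Walk z.1 y // w.IsPath ∧ w.length = k ∧ x ∉ w.support} := Nat.card_sigma
      _ ≤ ∑ z : (G.neighborFinset x : Finset V), nb G k x z.1 y :=
          Finset.sum_le_sum fun z _ => saw_le_nb G k x z.1 y
      _ = _ := Finset.sum_coe_sort (G.neighborFinset x) (fun z => nb G k x z y)

theorem saw_bound (htrans : G.IsVertexTransitive) (d : ℕ) (hd : 2 ≤ d)
    (hreg : G.IsRegularOfDegree d) (x₀ : V) (r : ℝ) (hr0 : 0 < r) (hr1 : r < 1)
    (hr : G.spectralRadius x₀ < r) :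
    ∃ K : ℝ, 0 ≤ K ∧ ∀ n x y, (G.sawCountTo x y n : ℝ) ≤ K * ((d - 1) * r) ^ n := by
  obtain ⟨r', hr', hr'r⟩ := exists_between (max_lt hr hr0)
  obtain ⟨h1, h2⟩ := max_lt_iff.1 hr'
  obtain ⟨C, hC, hb⟩ := heat_bound G htrans d hd hreg x₀ r' h2 (hr'r.trans hr1) h1
  have hq0 : 0 ≤ r' / r := by positivity
  have hq1 : r' / r < 1 := (div_lt_one hr0).2 hr'r
  have hd0 : (0:ℝ) < d := by positivity
  have hsum : Summable (fun m : ℕ => C * (r'/r)^m) :=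
    (summable_geometric_of_lt_one hq0 hq1).mul_left C
  refine ⟨2 * ∑' m : ℕ, C * (r'/r)^m, by positivity, fun n x y => ?_⟩
  have := nbB_bound G d hd hreg r⁻¹ ((one_le_inv₀ hr0).2 hr1.le) (∑' m : ℕ, C * (r'/r)^m) x y
    ?_ (by positivity) n
  · rw [div_inv_eq_mul] at this
    refine le_trans ?_ this
    exact_mod_cast saw_le_nbB G n x y
  · rw [pot, ENNReal.ofReal_tsum_of_nonneg (fun m => by positivity) hsum]
    refine ENNReal.tsum_le_tsum fun m => ?_
    rw [adjOp_iter_zero, ← ENNReal.ofReal_natCast, ← ENNReal.ofReal_pow (by positivity),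
      ← ENNReal.ofReal_mul (by positivity)]
    apply ENNReal.ofReal_le_ofReal
    calc (r⁻¹ / d)^m * (wk G m x y : ℝ) ≤ (r⁻¹ / d)^m * (C * (r' * d)^m) := by
          gcongr; exact hb m x y
      _ = C * ((r⁻¹ / d) * (r' * d))^m := by rw [mul_pow]; ring
      _ = _ := by congr 2; field_simp

/-! paths in infinite clusters -/

theorem exists_open_path (ω : G.edgeSet → Bool) (x : V) (h : (G.percCluster ω x).Infinite) (n : ℕ) :
    ∃ w : (y : V) × G.Walk x y, (w.2.IsPath ∧ w.2.length = n) ∧ G.openWalk ω w.2 := by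
  have hfin : (⋃ m ∈ Finset.range n,
      Set.range (fun w : {w : (y : V) × G.Walk x y // w.2.length = m} => w.1.1)).Finite :=
    Set.Finite.biUnion (Finset.finite_toSet _) fun m _ => Set.finite_range _
  obtain ⟨y, hy, hyn⟩ := h.exists_notMem_finite hfin
  obtain ⟨w, hw⟩ := hy
  have hlen : n ≤ w.bypass.length := by
    by_contra hlt
    push Not at hlt
    apply hyn
    simp only [Set.mem_iUnion]
    exact ⟨w.bypass.length, Finset.mem_range.2 hlt, ⟨⟨y, w.bypass⟩, rfl⟩, rfl⟩
  refine ⟨⟨_, w.bypass.take n⟩, ⟨w.bypass_isPath.take n, ?_⟩, ?_⟩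
  · simp [Walk.take_length, hlen]
  · intro e he
    have h1 : e ∈ w.bypass.edges := (w.bypass.isSubwalk_take n).edges_subset he
    exact hw e (w.edges_bypass_subset_edges h1)

theorem sawCount_pos_of (x : V) (n : ℕ) (w : (y : V) × G.Walk x y) (hw : w.2.IsPath ∧ w.2.length = n) :
    0 < G.sawCount x n := by
  have : Nonempty {w : (y : V) × G.Walk x y // w.2.IsPath ∧ w.2.length = n} := ⟨⟨w, hw⟩⟩
  exact Nat.card_pos

theorem sawCount_le_iso (x : V) (n : ℕ) (φ : G ≃g G) : G.sawCount x n ≤ G.sawCount (φ x) n := by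
  refine Nat.card_le_card_of_injective
    (fun w => (⟨⟨φ w.1.1, w.1.2.map φ.toHom⟩, ?_, ?_⟩ :
      {w : (y : V) × G.Walk (φ x) y // w.2.IsPath ∧ w.2.length = n})) ?_
  · exact (Walk.isPath_map_iff_of_injective φ.injective).2 w.2.1
  · simp [w.2.2]
  · rintro ⟨⟨y, w⟩, hw⟩ ⟨⟨y', w'⟩, hw'⟩ h
    have h1 := congrArg (fun z => z.1) h
    simp only [Sigma.mk.injEq] at h1
    obtain ⟨h2, h3⟩ := h1
    have h2 := φ.injective h2
    subst h2
    have h4 := Walk.map_injective_of_injective (f := φ.toHom) φ.injective _ _ (eq_of_heq h3)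
    subst h4
    rfl

theorem sawCount_eq (htrans : G.IsVertexTransitive) (x y : V) (n : ℕ) :
    G.sawCount x n = G.sawCount y n := by
  obtain ⟨φ, hφ⟩ := htrans x y
  obtain ⟨ψ, hψ⟩ := htrans y x
  exact le_antisymm (hφ ▸ sawCount_le_iso G x n φ) (hψ ▸ sawCount_le_iso G y n ψ)

theorem sawCountTo_lt [Infinite V] (hconn : G.Connected) (htrans : G.IsVertexTransitive)
    (x₀ x : V) (n : ℕ) (hn : 1 ≤ n) : G.sawCountTo x₀ x n < G.sawCount x₀ n := by
  -- two paths from x₀ with different endpoints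
  have hinf : (G.percCluster (fun _ => true) x₀).Infinite := by
    have : G.percCluster (fun _ => true) x₀ = Set.univ := by
      ext y
      simp only [percCluster, percConn, Set.mem_ofPred_eq, Set.mem_univ, iff_true]
      obtain ⟨w⟩ := hconn x₀ y
      exact ⟨w, fun _ _ => rfl⟩
    rw [this]; exact Set.infinite_univ
  obtain ⟨⟨b, w⟩, ⟨hp, hl⟩, -⟩ := exists_open_path G _ x₀ hinf (2 * n)
  simp only at hp hl
  have hab : x₀ ≠ b := by
    rintro rfl
    rw [Walk.isPath_iff_eq_nil] at hp
    subst hp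
    simp at hl; omega
  obtain ⟨φ, hφ⟩ := htrans (w.getVert n) x₀
  have hex : ∃ y, y ≠ x ∧ ∃ q : G.Walk x₀ y, q.IsPath ∧ q.length = n := by
    have ha : ∃ q : G.Walk (φ (w.getVert n)) (φ x₀), q.IsPath ∧ q.length = n :=
      ⟨(w.take n).reverse.map φ.toHom,
        (Walk.isPath_map_iff_of_injective φ.injective).2 (hp.take n).reverse, by
          simp [Walk.take_length]; omega⟩
    have hb : ∃ q : G.Walk (φ (w.getVert n)) (φ b), q.IsPath ∧ q.length = n :=
      ⟨(w.drop n).map φ.toHom,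
        (Walk.isPath_map_iff_of_injective φ.injective).2 (hp.drop n), by
          simp [Walk.drop_length]; omega⟩
    rw [hφ] at ha hb
    by_cases h : φ x₀ = x
    · refine ⟨φ b, ?_, hb⟩
      rintro rfl
      exact hab (φ.injective h)
    · exact ⟨φ x₀, h, ha⟩
  obtain ⟨y, hy, q, hq⟩ := hex
  have hf := finite_sub G x₀ x n (fun w => w.IsPath ∧ w.length = n) fun w h => h.2
  have : Nat.card (Option {w : G.Walk x₀ x // w.IsPath ∧ w.length = n}) ≤ G.sawCount x₀ n := by
    refine Nat.card_le_card_of_injective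
      (fun o => (match o with
        | none => ⟨⟨y, q⟩, hq⟩
        | some w => ⟨⟨x, w.1⟩, w.2⟩ :
        {w : (y : V) × G.Walk x₀ y // w.2.IsPath ∧ w.2.length = n})) ?_
    intro a b h
    match a, b, h with
    | none, none, _ => rfl
    | none, some _, h => exact absurd (congrArg (fun z => z.1.1) h) hy
    | some _, none, h => exact absurd (congrArg (fun z => z.1.1) h).symm hy
    | some u, some v, h =>
      have h2 := congrArg (fun z => z.1) h
      simp only [Sigma.mk.injEq, heq_eq_eq, true_and] at h2
      rw [Subtype.ext h2]
  rw [Finite.card_option] at this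
  exact this

theorem countable_V (hconn : G.Connected) (x₀ : V) : Countable V := by
  let f : (Σ n : ℕ, {w : (y : V) × G.Walk x₀ y // w.2.length = n}) → V := fun p => p.2.1.1
  refine Function.Surjective.countable (f := f) ?_
  intro y
  obtain ⟨w⟩ := hconn x₀ y
  exact ⟨⟨w.length, ⟨⟨y, w⟩, rfl⟩⟩, rfl⟩

theorem perc_path (p : ℝ) (μ : Measure (G.edgeSet → Bool)) (hμ : G.IsBernoulliPercolation p μ)
    (x y : V) (w : G.Walk x y) (hw : w.IsPath) :
    μ {ω | G.openWalk ω w} = ENNReal.ofReal p ^ w.length := by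
  classical
  have hinj : Function.Injective (fun e : {e // e ∈ w.edges} =>
      (⟨e.1, w.edges_subset_edgeSet e.2⟩ : G.edgeSet)) := by
    intro a b h
    have := congrArg (fun z => z.1) h
    exact Subtype.ext this
  let s : Finset G.edgeSet := Finset.univ.image (fun e : {e // e ∈ w.edges} =>
      (⟨e.1, w.edges_subset_edgeSet e.2⟩ : G.edgeSet))
  have hcard : s.card = w.length := by
    rw [Finset.card_image_of_injective _ hinj, Finset.card_univ, ← Walk.length_edges,
      ← List.toFinset_card_of_nodup hw.isTrail.edges_nodup]
    rw [← Fintype.card_coe]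
    refine Fintype.card_congr (Equiv.subtypeEquivRight (by simp))
  have := hμ.2 s (fun _ => true)
  simp only [if_true, Finset.prod_const, hcard] at this
  rw [← this]
  congr 1
  ext ω
  simp only [Set.mem_ofPred_eq, openWalk, s, Finset.mem_image, Finset.mem_univ, true_and]
  constructor
  · rintro h e ⟨e', rfl⟩
    exact h e'.1 e'.2
  · intro h e he
    exact h _ ⟨⟨e, he⟩, rfl⟩

theorem perc_infinite_le (p : ℝ) (μ : Measure (G.edgeSet → Bool))
    (hμ : G.IsBernoulliPercolation p μ) (x : V) (n : ℕ) :
    μ {ω | (G.percCluster ω x).Infinite} ≤ G.sawCount x n * ENNReal.ofReal p ^ n := by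
  have hsub : {ω | (G.percCluster ω x).Infinite} ⊆
      ⋃ w : {w : (y : V) × G.Walk x y // w.2.IsPath ∧ w.2.length = n},
        {ω | G.openWalk ω w.1.2} := by
    intro ω hω
    obtain ⟨w, hw, ho⟩ := exists_open_path G ω x hω n
    exact Set.mem_iUnion.2 ⟨⟨w, hw⟩, ho⟩
  refine (measure_mono hsub).trans ((measure_iUnion_le _).trans ?_)
  have : ∀ w : {w : (y : V) × G.Walk x y // w.2.IsPath ∧ w.2.length = n},
      μ {ω | G.openWalk ω w.1.2} = ENNReal.ofReal p ^ n := by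
    intro w
    rw [perc_path G p μ hμ _ _ _ w.2.1, w.2.2]
  simp only [this]
  rw [ENNReal.tsum_const, sawCount, ENat.card_eq_coe_natCard]
  simp

/-- at some `p` slightly above `p_c`, `c_n ≥ ε p^{-n}`. -/
theorem sawCount_lower [Infinite V] (hconn : G.Connected) (htrans : G.IsVertexTransitive) (x₀ : V)
    (P : ℝ → Measure (G.edgeSet → Bool))
    (hP : ∀ q ∈ Set.Icc (0:ℝ) 1, G.IsBernoulliPercolation q (P q)) (a : ℝ)
    (ha : G.percCritical P < a) :
    ∃ p : ℝ, 0 ≤ p ∧ p < a ∧ ∃ ε : ℝ, 0 < ε ∧ ∀ n, ε ≤ G.sawCount x₀ n * p ^ n := by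
  have hcV : Countable V := countable_V G hconn x₀
  have hne : {p : ℝ | p ∈ Set.Icc (0:ℝ) 1 ∧
      0 < P p {ω | ∃ x, (G.percCluster ω x).Infinite}}.Nonempty := by
    have h1 : (1:ℝ) ∈ Set.Icc (0:ℝ) 1 := ⟨zero_le_one, le_refl _⟩
    refine ⟨1, h1, ?_⟩
    obtain ⟨hprob, hform⟩ := hP 1 h1
    have hcE : Countable G.edgeSet := by
      have : Countable (Sym2 V) := Quot.mk_surjective.countable
      infer_instance
    have hnull : P 1 {ω | ∃ e, ω e = false} = 0 := by
      have : {ω : G.edgeSet → Bool | ∃ e, ω e = false} = ⋃ e, {ω | ω e = false} := by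
        ext ω; simp
      rw [this, measure_iUnion_null_iff]
      intro e
      have := hform {e} (fun _ => false)
      simpa using this
    have hcov : (Set.univ : Set (G.edgeSet → Bool)) ⊆
        {ω | ∃ x, (G.percCluster ω x).Infinite} ∪ {ω | ∃ e, ω e = false} := by
      intro ω _
      by_cases h : ∃ e, ω e = false
      · exact Or.inr h
      · left
        push Not at h
        refine ⟨x₀, ?_⟩
        have : G.percCluster ω x₀ = Set.univ := by
          ext y
          simp only [percCluster, percConn, Set.mem_ofPred_eq, Set.mem_univ, iff_true]
          obtain ⟨w⟩ := hconn x₀ y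
          exact ⟨w, fun e he => by simpa using h ⟨e, w.edges_subset_edgeSet he⟩⟩
        rw [this]; exact Set.infinite_univ
    have := (measure_mono hcov).trans (measure_union_le (μ := P 1) _ _)
    rw [hnull, add_zero, measure_univ] at this
    exact lt_of_lt_of_le zero_lt_one this
  obtain ⟨p, ⟨hp, hpos⟩, hpa⟩ := exists_lt_of_csInf_lt hne ha
  refine ⟨p, hp.1, hpa, ?_⟩
  have hx : ∃ x, P p {ω | (G.percCluster ω x).Infinite} ≠ 0 := by
    by_contra hall
    push Not at hall
    have : {ω : G.edgeSet → Bool | ∃ x, (G.percCluster ω x).Infinite} =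
        ⋃ x, {ω | (G.percCluster ω x).Infinite} := by ext ω; simp
    rw [this, measure_iUnion_null hall] at hpos
    exact lt_irrefl _ hpos
  obtain ⟨x, hx⟩ := hx
  have hprob := (hP p hp).1
  have hfin : P p {ω | (G.percCluster ω x).Infinite} ≠ ⊤ := measure_ne_top _ _
  refine ⟨_, ENNReal.toReal_pos hx hfin, fun n => ?_⟩
  have h := perc_infinite_le G p (P p) (hP p hp) x n
  have h2 := ENNReal.toReal_mono (ENNReal.mul_ne_top (by simp) (by simp)) h
  rw [sawCount_eq G htrans x x₀ n] at h2
  simpa [ENNReal.toReal_ofReal hp.1] using h2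

end counts
end SawAux



/-- on a d-regular transitive graph with spectral radius `ρ < 1` such that
`p_c (d-1) ρ < 1`, the self-avoiding walk endpoint distribution decays exponentially:
`c_n(x)/c_n ≤ e^{-cn}` uniformly in `x`. -/
theorem stmt_12 {V : Type*} [DecidableEq V] (G : SimpleGraph V)
    [∀ v, Fintype (G.neighborSet v)] [Infinite V] (hconn : G.Connected)
    (htrans : G.IsVertexTransitive)
    (d : ℕ) (hd : 2 ≤ d) (hreg : G.IsRegularOfDegree d)
    (x₀ : V) (ρ : ℝ) (hρ : G.spectralRadius x₀ = ρ) (hρ1 : ρ < 1)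
    (P : ℝ → MeasureTheory.Measure (G.edgeSet → Bool))
    (hP : ∀ q ∈ Set.Icc (0:ℝ) 1, G.IsBernoulliPercolation q (P q))
    (hpc : G.percCritical P * ((d : ℝ) - 1) * ρ < 1) :
    ∃ c : ℝ, 0 < c ∧ ∀ (n : ℕ) (x : V),
      (G.sawCountTo x₀ x n : ℝ) / (G.sawCount x₀ n : ℝ) ≤ Real.exp (-c * n) := by
  have hd1 : (1:ℝ) ≤ (d:ℝ) - 1 := by
    have : (2:ℝ) ≤ d := by exact_mod_cast hd
    linarith
  set pc := G.percCritical P with hpcdef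
  have hpc0 : 0 ≤ pc := Real.sInf_nonneg fun p hp => hp.1.1
  -- choose `a > p_c` and `r > ρ`
  obtain ⟨a, r, ha, hr0, hr1, hrρ, har⟩ : ∃ a r : ℝ, pc < a ∧ 0 < r ∧ r < 1 ∧ ρ < r ∧
      a * ((d - 1) * r) < 1 := by
    have hm : pc * ((d:ℝ) - 1) * max ρ 0 < 1 := by
      rcases max_cases ρ 0 with ⟨h, _⟩ | ⟨h, _⟩ <;> rw [h]
      · exact hpc
      · simp
    have hm1 : max ρ 0 < 1 := max_lt hρ1 one_pos
    have hcont : Filter.Tendsto (fun e : ℝ => (pc + e) * (((d:ℝ) - 1) * (max ρ 0 + e)))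
        (nhdsWithin 0 (Set.Ioi 0)) (nhds (pc * ((d:ℝ) - 1) * max ρ 0)) := by
      have : Continuous (fun e : ℝ => (pc + e) * (((d:ℝ) - 1) * (max ρ 0 + e))) := by fun_prop
      have h := this.tendsto 0
      simp only [add_zero, ← mul_assoc] at h ⊢
      exact h.mono_left nhdsWithin_le_nhds
    have hcont2 : Filter.Tendsto (fun e : ℝ => max ρ 0 + e)
        (nhdsWithin 0 (Set.Ioi 0)) (nhds (max ρ 0)) := by
      have : Continuous (fun e : ℝ => max ρ 0 + e) := by fun_prop
      have h := this.tendsto 0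
      simp only [add_zero] at h
      exact h.mono_left nhdsWithin_le_nhds
    obtain ⟨e, ⟨h1, h2⟩, h3⟩ := (((hcont.eventually_lt_const hm).and
      (hcont2.eventually_lt_const hm1)).and self_mem_nhdsWithin).exists
    have h3 : 0 < e := h3
    exact ⟨pc + e, max ρ 0 + e, by linarith, by linarith [le_max_right ρ 0], h2,
      by linarith [le_max_left ρ 0], h1⟩
  obtain ⟨p, hp0, hpa, ε, hε, hlow⟩ := SawAux.sawCount_lower G hconn htrans x₀ P hP a ha
  obtain ⟨K, hK, hup⟩ := SawAux.saw_bound G htrans d hd hreg x₀ r hr0 hr1 (hρ ▸ hrρ)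
  set θ : ℝ := p * ((d - 1) * r) with hθ
  have hB0 : 0 < ((d:ℝ) - 1) * r := by positivity
  have hθ0 : 0 ≤ θ := by positivity
  have hθ1 : θ < 1 := lt_of_le_of_lt (mul_le_mul_of_nonneg_right hpa.le hB0.le) har
  have hratio : ∀ n x, (G.sawCountTo x₀ x n : ℝ) / (G.sawCount x₀ n : ℝ) ≤ K / ε * θ ^ n := by
    intro n x
    have hc : (0:ℝ) < G.sawCount x₀ n := by
      rcases (Nat.cast_nonneg (α := ℝ) (G.sawCount x₀ n)).eq_or_lt with h | h
      · have := hlow n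
        rw [← h, zero_mul] at this
        linarith
      · exact h
    rw [div_le_iff₀ hc]
    calc _ ≤ K * ((d - 1) * r) ^ n := hup n x₀ x
      _ = K / ε * ((d - 1) * r) ^ n * ε := by field_simp
      _ ≤ K / ε * ((d - 1) * r) ^ n * (G.sawCount x₀ n * p ^ n) := by gcongr; exact hlow n
      _ = _ := by rw [hθ, mul_pow p]; ring
  -- choose an intermediate rate
  obtain ⟨η, hη1, hη2⟩ := exists_between hθ1
  have hη0 : 0 < η := lt_of_le_of_lt hθ0 hη1
  have hlim : Filter.Tendsto (fun n : ℕ => K / ε * (θ / η) ^ n) Filter.atTop (nhds 0) := by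
    have := (tendsto_pow_atTop_nhds_zero_of_lt_one (div_nonneg hθ0 hη0.le)
      ((div_lt_one hη0).2 hη1)).const_mul (K / ε)
    simpa using this
  obtain ⟨N, hN⟩ := Filter.eventually_atTop.1 (hlim.eventually_lt_const one_pos)
  have hlarge : ∀ n ≥ N, ∀ x,
      (G.sawCountTo x₀ x n : ℝ) / (G.sawCount x₀ n : ℝ) ≤ Real.exp (-(-Real.log η) * n) := by
    intro n hn x
    refine (hratio n x).trans ?_
    have : Real.exp (-(-Real.log η) * n) = η ^ n := by
      rw [neg_neg, mul_comm, Real.exp_nat_mul, Real.exp_log hη0]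
    rw [this]
    have h := (hN n hn).le
    rw [div_pow, ← mul_div_assoc, div_le_one (by positivity)] at h
    exact h
  -- finitely many small n
  have hsmall : ∀ n : ℕ, ∃ c : ℝ, 0 < c ∧ ∀ x,
      (G.sawCountTo x₀ x n : ℝ) / (G.sawCount x₀ n : ℝ) ≤ Real.exp (-c * n) := by
    intro n
    rcases Nat.eq_zero_or_pos n with rfl | hn
    · refine ⟨1, one_pos, fun x => ?_⟩
      simp only [Nat.cast_zero, mul_zero, Real.exp_zero]
      refine div_le_one_of_le₀ ?_ (by positivity)
      have h1 : G.sawCountTo x₀ x 0 ≤ 1 := by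
        refine (SawAux.saw_le_nbB G 0 x₀ x).trans ?_
        simp only [SawAux.nbB]; split <;> simp
      have h2 : 1 ≤ G.sawCount x₀ 0 := SawAux.sawCount_pos_of G x₀ 0 ⟨x₀, .nil⟩ (by simp)
      exact_mod_cast h1.trans h2
    · set q : ℝ := 1 - 1 / ((G.sawCount x₀ n : ℝ) + 1) with hq
      have hc : (1:ℝ) ≤ G.sawCount x₀ n := by
        exact_mod_cast (Nat.zero_le _).trans_lt (SawAux.sawCountTo_lt G hconn htrans x₀ x₀ n hn)
      have hq1 : q < 1 := by rw [hq]; have : 0 < 1 / ((G.sawCount x₀ n : ℝ) + 1) := by positivity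
                             linarith
      have hq0 : 0 < q := by
        rw [hq, sub_pos, div_lt_one (by positivity)]; linarith
      have hn' : (0:ℝ) < n := by exact_mod_cast hn
      refine ⟨-Real.log q / n, div_pos (neg_pos.2 (Real.log_neg hq0 hq1)) hn', fun x => ?_⟩
      have : Real.exp (-(-Real.log q / n) * n) = q := by
        rw [← neg_div, neg_neg, div_mul_cancel₀ _ hn'.ne', Real.exp_log hq0]
      rw [this]
      have hlt : (G.sawCountTo x₀ x n : ℝ) + 1 ≤ G.sawCount x₀ n := by
        exact_mod_cast SawAux.sawCountTo_lt G hconn htrans x₀ x n hn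
      have hq' : 1 - 1 / (G.sawCount x₀ n : ℝ) ≤ q := by
        rw [hq]; gcongr; linarith
      refine le_trans ?_ hq'
      rw [div_le_iff₀ (by linarith), sub_mul, div_mul_cancel₀ _ (by linarith)]
      linarith
  choose c hc0 hc using hsmall
  have hη3 : 0 < -Real.log η := neg_pos.2 (Real.log_neg hη0 hη2)
  have hfin : ∀ M : ℕ, ∃ e : ℝ, 0 < e ∧ e ≤ -Real.log η ∧ ∀ n < M, e ≤ c n := by
    intro M
    induction M with
    | zero => exact ⟨_, hη3, le_refl _, by simp⟩
    | succ M ih =>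
      obtain ⟨e, h1, h2, h3⟩ := ih
      refine ⟨min e (c M), lt_min h1 (hc0 M), (min_le_left _ _).trans h2, fun n hn => ?_⟩
      rcases Nat.lt_succ_iff_lt_or_eq.1 hn with h | rfl
      · exact (min_le_left _ _).trans (h3 n h)
      · exact min_le_right _ _
  obtain ⟨e, he0, he1, he2⟩ := hfin N
  refine ⟨e, he0, fun n x => ?_⟩
  by_cases hn : n < N
  · refine (hc n x).trans (Real.exp_le_exp.2 ?_)
    have := he2 n hn
    gcongr
  · refine (hlarge n (not_lt.1 hn) x).trans (Real.exp_le_exp.2 ?_)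
    gcongr
end

section
/- Let G be a d-regular transitive graph with spectral radius ρ < 1 and suppose p_c(d-1)ρ < 1. Then the self-avoiding walk bubble condition holds at the critical point: Σ_x G_{μ^{-1}}(x)² < ∞, where μ is the connective constant. -/
open MeasureTheory Filter Set
open scoped ENNReal

namespace Bub

variable {V : Type*}

/-- number of walks -/
def wk (G : SimpleGraph V) [DecidableEq V] [∀ v, Fintype (G.neighborSet v)] :
    ℕ → V → V → ℕ
  | 0, x, y => if x = y then 1 else 0
  | n + 1, x, y => ∑ z ∈ G.neighborFinset x, wk G n z y

/-- number of non-backtracking walks from `c`, first step not to `p` -/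
def dd (G : SimpleGraph V) [DecidableEq V] [∀ v, Fintype (G.neighborSet v)] :
    ℕ → V → V → V → ℕ
  | 0, _, c, y => if c = y then 1 else 0
  | n + 1, p, c, y => ∑ z ∈ (G.neighborFinset c).erase p, dd G n c z y

/-- number of non-backtracking walks -/
def ak (G : SimpleGraph V) [DecidableEq V] [∀ v, Fintype (G.neighborSet v)] :
    ℕ → V → V → ℕ
  | 0, x, y => if x = y then 1 else 0
  | n + 1, x, y => ∑ z ∈ G.neighborFinset x, dd G n x z y

/-- weighted count of nonnegative lattice paths -/
def aa (v : ℕ) : ℕ → ℕ → ℕ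
  | 0, k => if k = 0 then 1 else 0
  | n + 1, 0 => v * aa v n 1
  | n + 1, k + 1 => aa v n k + v * aa v n (k + 2)

section comb
variable (G : SimpleGraph V) [DecidableEq V] [∀ v, Fintype (G.neighborSet v)]

lemma dd_sum {v : ℕ} (hreg : G.IsRegularOfDegree (v + 1)) (k : ℕ) (x y : V) :
    v * ak G k x y ≤ ∑ w ∈ G.neighborFinset x, dd G k w x y := by
  have hc : (G.neighborFinset x).card = v + 1 := by
    rw [G.card_neighborFinset_eq_degree]; exact hreg x
  cases k with
  | zero =>
    simp only [ak, dd, Finset.sum_const, hc, smul_eq_mul]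
    gcongr; omega
  | succ j =>
    simp only [ak, dd]
    have h : ∀ w ∈ G.neighborFinset x, ∑ z ∈ (G.neighborFinset x).erase w, dd G j x z y
        + dd G j x w y = ∑ z ∈ G.neighborFinset x, dd G j x z y := fun w hw =>
      Finset.sum_erase_add _ _ hw
    have h2 := Finset.sum_congr rfl h
    rw [Finset.sum_add_distrib, Finset.sum_const, hc, smul_eq_mul] at h2
    linarith

lemma ak_rec {v : ℕ} (hreg : G.IsRegularOfDegree (v + 1)) (k : ℕ) (x y : V) :
    ak G (k + 2) x y + v * ak G k x y ≤ ∑ w ∈ G.neighborFinset x, ak G (k + 1) w y := by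
  have h : ∀ w ∈ G.neighborFinset x, ak G (k + 1) w y = dd G (k + 1) x w y + dd G k w x y := by
    intro w hw
    have hx : x ∈ G.neighborFinset w := by
      rw [SimpleGraph.mem_neighborFinset] at hw ⊢; exact hw.symm
    simp only [ak, dd]
    exact (Finset.sum_erase_add _ _ hx).symm
  rw [Finset.sum_congr rfl h, Finset.sum_add_distrib]
  have := dd_sum G hreg k x y
  simp only [ak] at this ⊢
  linarith

lemma ak_one (x y : V) : ak G 1 x y = ∑ w ∈ G.neighborFinset x, ak G 0 w y := by
  simp [ak, dd]

lemma aa_zero_of_lt (v n : ℕ) : ∀ k, n < k → aa v n k = 0 := by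
  induction n with
  | zero => intro k hk; simp [aa]; omega
  | succ n ih =>
    intro k hk
    cases k with
    | zero => omega
    | succ k => simp [aa, ih k (by omega), ih (k + 2) (by omega)]

lemma wk_ge {v : ℕ} (hreg : G.IsRegularOfDegree (v + 1)) (n : ℕ) : ∀ x y : V,
    ∑' k, (aa v n k : ℝ≥0∞) * (ak G k x y : ℝ≥0∞) ≤ (wk G n x y : ℝ≥0∞) := by
  induction n with
  | zero =>
    intro x y
    rw [tsum_eq_single 0]
    · simp [aa, ak, wk]
    · intro k hk; simp [aa, hk]
  | succ n ih =>
    intro x y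
    have h1 : ((wk G (n + 1) x y : ℕ) : ℝ≥0∞) = ∑ z ∈ G.neighborFinset x, (wk G n z y : ℝ≥0∞) := by
      simp [wk]
    rw [h1]
    refine le_trans ?_ (Finset.sum_le_sum fun z _ => ih z y)
    rw [← Summable.tsum_finsetSum (fun _ _ => ENNReal.summable)]
    simp_rw [← Finset.mul_sum]
    rw [tsum_eq_zero_add' ENNReal.summable, tsum_eq_zero_add' (f := fun k => (aa v n k : ℝ≥0∞) * _) ENNReal.summable]
    have h2 : ∑ z ∈ G.neighborFinset x, (ak G 0 z y : ℝ≥0∞) = (ak G 1 x y : ℝ≥0∞) := by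
      rw [ak_one]; push_cast; rfl
    rw [h2]
    have h3 : ∑' k, (aa v n (k + 1) : ℝ≥0∞) * ((ak G (k + 2) x y : ℝ≥0∞) + v * ak G k x y) ≤
      ∑' k, (aa v n (k + 1) : ℝ≥0∞) * ∑ z ∈ G.neighborFinset x, (ak G (k + 1) z y : ℝ≥0∞) := by
      refine ENNReal.tsum_le_tsum fun k => ?_
      gcongr
      exact_mod_cast ak_rec G hreg k x y
    refine le_trans (le_of_eq ?_) (add_le_add le_rfl h3)
    simp_rw [mul_add]
    rw [ENNReal.tsum_add]
    rw [tsum_eq_zero_add' (f := fun k => (aa v n (k + 1) : ℝ≥0∞) * (v * ak G k x y)) ENNReal.summable]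
    simp only [aa]
    push_cast
    simp_rw [add_mul]
    rw [ENNReal.tsum_add, tsum_eq_zero_add' (f := fun k => (aa v n k : ℝ≥0∞) * (ak G (k + 1) x y)) ENNReal.summable]
    have : ∀ k, (v : ℝ≥0∞) * aa v n (k + 2) * ak G (k + 1) x y
        = aa v n (k + 1 + 1) * (v * ak G (k + 1) x y) := by
      intro k; ring
    simp_rw [this]
    ring

lemma wk_ge' {v : ℕ} (hreg : G.IsRegularOfDegree (v + 1)) (n k : ℕ) (x y : V) :
    aa v n k * ak G k x y ≤ wk G n x y := by
  have := (ENNReal.le_tsum k).trans (wk_ge G hreg n x y)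
  exact_mod_cast this

lemma wk_succ_right (n : ℕ) : ∀ x y, wk G (n + 1) x y = ∑ z ∈ G.neighborFinset y, wk G n x z := by
  induction n with
  | zero =>
    intro x y
    simp only [wk, Finset.sum_ite_eq, Finset.sum_ite_eq']
    refine if_congr ?_ rfl rfl
    rw [SimpleGraph.mem_neighborFinset, SimpleGraph.mem_neighborFinset, SimpleGraph.adj_comm]
  | succ n ih =>
    intro x y
    rw [wk]
    simp_rw [ih]
    rw [Finset.sum_comm]
    refine Finset.sum_congr rfl fun z _ => ?_
    rw [← ih]
    rfl

lemma wk_symm (n : ℕ) : ∀ x y, wk G n x y = wk G n y x := by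
  induction n with
  | zero => intro x y; simp [wk, eq_comm]
  | succ n ih =>
    intro x y
    rw [wk_succ_right, wk]
    exact Finset.sum_congr rfl fun z _ => ih _ _

lemma wk_add (n m : ℕ) : ∀ x y, (wk G (n + m) x y : ℝ≥0∞) = ∑' z, (wk G n x z : ℝ≥0∞) * wk G m y z := by
  induction n with
  | zero =>
    intro x y
    rw [tsum_eq_single x]
    · simp [wk, wk_symm G m x y]
    · intro z hz; simp [wk, hz.symm]
  | succ n ih =>
    intro x y
    rw [show n + 1 + m = (n + m) + 1 by ring]
    simp only [wk]
    push_cast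
    simp_rw [ih, Finset.sum_mul]
    rw [Summable.tsum_finsetSum (fun _ _ => ENNReal.summable)]

lemma wk_two (n : ℕ) (x : V) : (wk G (2 * n) x x : ℝ≥0∞) = ∑' z, (wk G n x z : ℝ≥0∞) ^ 2 := by
  rw [two_mul, wk_add]; simp_rw [sq]

lemma wk_le {d : ℕ} (hreg : G.IsRegularOfDegree d) (n : ℕ) : ∀ x y, wk G n x y ≤ d ^ n := by
  induction n with
  | zero => intro x y; simp [wk]; split_ifs <;> simp
  | succ n ih =>
    intro x y
    simp only [wk]
    refine (Finset.sum_le_card_nsmul _ _ _ fun z _ => ih z y).trans ?_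
    rw [G.card_neighborFinset_eq_degree, hreg x, smul_eq_mul, pow_succ, mul_comm]

lemma srw_eq {d : ℕ} (hreg : G.IsRegularOfDegree d) (n : ℕ) : ∀ x y,
    G.srw n x y = (wk G n x y : ℝ) / (d : ℝ) ^ n := by
  induction n with
  | zero => intro x y; simp [wk, SimpleGraph.srw]
  | succ n ih =>
    intro x y
    simp only [wk, SimpleGraph.srw]
    push_cast
    rw [Finset.sum_div]
    refine Finset.sum_congr rfl fun z _ => ?_
    rw [ih, hreg x, pow_succ, div_eq_mul_inv, div_eq_mul_inv, mul_inv]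
    ring

lemma dd_total {v : ℕ} (hreg : G.IsRegularOfDegree (v + 1)) (k : ℕ) : ∀ p c : V,
    (v : ℝ≥0∞) ^ k ≤ ∑' y, (dd G k p c y : ℝ≥0∞) := by
  induction k with
  | zero =>
    intro p c
    rw [tsum_eq_single c]
    · simp [dd]
    · intro z hz; simp [dd, hz.symm]
  | succ k ih =>
    intro p c
    simp only [dd]
    push_cast
    rw [Summable.tsum_finsetSum (fun _ _ => ENNReal.summable)]
    refine le_trans ?_ (Finset.card_nsmul_le_sum _ _ _ fun z _ => ih c z)
    have hc : (G.neighborFinset c).card = v + 1 := by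
      rw [G.card_neighborFinset_eq_degree]; exact hreg c
    have := Finset.pred_card_le_card_erase (s := G.neighborFinset c) (a := p)
    rw [hc] at this
    rw [nsmul_eq_mul, pow_succ']
    gcongr
    simpa using this

lemma dd_le_ak (k : ℕ) (p c y : V) : dd G k p c y ≤ ak G k c y := by
  cases k with
  | zero => simp [dd, ak]
  | succ k =>
    simp only [dd, ak]
    exact Finset.sum_le_sum_of_subset (Finset.erase_subset _ _)

/-- squared ℓ² norm -/
noncomputable def FF (x : V) (k : ℕ) : ℝ≥0∞ := ∑' y, (ak G k x y : ℝ≥0∞) ^ 2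

lemma FF_ge {v : ℕ} (hreg : G.IsRegularOfDegree (v + 1)) (k : ℕ) (x : V) :
    (v : ℝ≥0∞) ^ k ≤ FF G x k := by
  refine (dd_total G hreg k x x).trans (ENNReal.tsum_le_tsum fun y => ?_)
  have h1 := dd_le_ak G k x x y
  have h2 : ak G k x y ≤ ak G k x y ^ 2 := Nat.le_self_pow (by norm_num) _
  exact_mod_cast h1.trans h2

lemma FF_le {v : ℕ} (hreg : G.IsRegularOfDegree (v + 1)) (n k : ℕ) (x : V) :
    (aa v n k : ℝ≥0∞) ^ 2 * FF G x k ≤ wk G (2 * n) x x := by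
  rw [wk_two, FF, ← ENNReal.tsum_mul_left]
  refine ENNReal.tsum_le_tsum fun y => ?_
  rw [← mul_pow]
  gcongr
  exact_mod_cast wk_ge' G hreg n k x y

lemma aa_self (v k : ℕ) : aa v k k = 1 := by
  induction k with
  | zero => simp [aa]
  | succ k ih => simp [aa, ih, aa_zero_of_lt v k (k + 2) (by omega)]

/-- flux identity -/
lemma flux (v : ℕ) (l : ℝ) (h : ℕ → ℝ) (h0 : l * h 0 = h 1)
    (hs : ∀ k, l * h (k + 1) = h (k + 2) + v * h k) (n K : ℕ) :
    l * ∑ k ∈ Finset.range (K + 1), (aa v n k : ℝ) * h k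
      - ∑ k ∈ Finset.range (K + 1), (aa v (n + 1) k : ℝ) * h k
    = aa v n K * h (K + 1) - v * aa v n (K + 1) * h K := by
  induction K with
  | zero =>
    simp [aa]
    linear_combination (aa v n 0 : ℝ) * h0
  | succ K ih =>
    rw [Finset.sum_range_succ, Finset.sum_range_succ _ (K + 1)]
    have : (aa v (n + 1) (K + 1) : ℝ) = aa v n K + v * aa v n (K + 2) := by
      simp [aa]
    rw [this]
    linear_combination ih + (aa v n (K + 1) : ℝ) * hs K

end comb

end Bub

namespace Bub

lemma aa_total (v : ℕ) (n : ℕ) :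
    ∑ k ∈ Finset.range (n + 1), (aa v n k : ℝ) * ((k + 1) * √v ^ k) = (2 * √v) ^ n := by
  have hv : √(v : ℝ) ^ 2 = v := Real.sq_sqrt (by positivity)
  have key : ∀ n K, n < K → ∑ k ∈ Finset.range K, (aa v n k : ℝ) * ((k + 1) * √v ^ k)
      = (2 * √v) ^ n := by
    intro n
    induction n with
    | zero =>
      intro K hK
      rw [Finset.sum_eq_single_of_mem 0 (by simpa using hK)]
      · simp [aa]
      · intro k _ hk; simp [aa, hk]
    | succ n ih =>
      intro K hK
      obtain ⟨K, rfl⟩ : ∃ K', K = K' + 1 := ⟨K - 1, by omega⟩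
      have := flux v (2 * √v) (fun k => (k + 1) * √v ^ k) (by norm_num)
        (by intro k; push_cast; rw [pow_succ, pow_succ, pow_succ]
            linear_combination ((k : ℝ) + 1) * √v ^ k * hv) n K
      rw [ih (K + 1) (by omega), aa_zero_of_lt v n K (by omega), aa_zero_of_lt v n (K + 1) (by omega)] at this
      simp only [Nat.cast_zero, zero_mul, mul_zero, sub_zero] at this
      rw [pow_succ]; linarith
  exact key n _ (Nat.lt_succ_self n)

lemma growth (v : ℕ) (f : ℕ → ℝ) (hf : ∀ k, √v ^ k ≤ f k) (R C : ℝ) (hR : 0 < R)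
    (h : ∀ n k, (aa v n k : ℝ) * f k ≤ C * R ^ n) : 2 * √v ≤ R := by
  by_contra! hlt
  have h1 : ∀ n : ℕ, (2 * √v) ^ n ≤ (n + 1) ^ 2 * (C * R ^ n) := by
    intro n
    rw [← aa_total]
    have : ∀ k ∈ Finset.range (n + 1), (aa v n k : ℝ) * ((k + 1) * √v ^ k) ≤ (n + 1) * (C * R ^ n) := by
      intro k hk
      have hk' : (k : ℝ) + 1 ≤ n + 1 := by
        have := Finset.mem_range.1 hk
        exact_mod_cast this
      have h2 : (aa v n k : ℝ) * √v ^ k ≤ C * R ^ n :=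
        (mul_le_mul_of_nonneg_left (hf k) (by positivity)).trans (h n k)
      calc (aa v n k : ℝ) * ((k + 1) * √v ^ k) = (k + 1) * ((aa v n k : ℝ) * √v ^ k) := by ring
        _ ≤ (n + 1) * (C * R ^ n) := by gcongr
    refine (Finset.sum_le_card_nsmul _ _ _ this).trans (le_of_eq ?_)
    simp; ring
  set s := 2 * √(v : ℝ)
  have hs : 0 < s := hR.trans hlt
  have hq : |R / s| < 1 := by rw [abs_of_pos (by positivity), div_lt_one hs]; exact hlt
  have t1 := tendsto_pow_const_mul_const_pow_of_abs_lt_one 2 hq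
  have t2 := tendsto_pow_const_mul_const_pow_of_abs_lt_one 1 hq
  have t3 := tendsto_pow_const_mul_const_pow_of_abs_lt_one 0 hq
  have t4 : Tendsto (fun n : ℕ => C * (((n : ℝ) ^ 2 * (R / s) ^ n) + 2 * ((n : ℝ) ^ 1 * (R / s) ^ n)
    + (n : ℝ) ^ 0 * (R / s) ^ n)) atTop (nhds (C * (0 + 2 * 0 + 0))) :=
    ((t1.add (t2.const_mul 2)).add t3).const_mul C
  have := ge_of_tendsto' (b := (1 : ℝ)) t4 (by
    intro n
    have h2 := h1 n
    have h3 : (n + 1 : ℝ) ^ 2 * (C * R ^ n) / s ^ n = C * (((n : ℝ) ^ 2 * (R / s) ^ n) + 2 * ((n : ℝ) ^ 1 * (R / s) ^ n)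
      + (n : ℝ) ^ 0 * (R / s) ^ n) := by
      rw [div_pow]; field_simp; ring
    rw [← h3, le_div_iff₀ (by positivity)]
    linarith)
  norm_num at this

lemma green (v : ℕ) (f : ℕ → ℝ) (hf : ∀ k, 1 ≤ f k) (z t R C : ℝ) (hz : 0 < z)
    (hzv : v * z ^ 2 < 1) (ht : t = z / (1 + v * z ^ 2)) (hR : 0 < R) (htR : t * R < 1)
    (h : ∀ n k, (aa v n k : ℝ) * f k ≤ C * R ^ n) (K : ℕ) :
    f K * z ^ K ≤ C / (1 - t * R) / (1 - v * z ^ 2) := by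
  set r := (v : ℝ) * z ^ 2 with hr
  have hr0 : 0 ≤ r := by positivity
  have ht0 : 0 < t := by rw [ht]; positivity
  set hh : ℕ → ℝ := fun k => z⁻¹ ^ k * (1 - r ^ (k + 1)) with hhh
  have hh0 : ∀ k, 0 ≤ hh k := fun k => by
    have : r ^ (k + 1) ≤ 1 := pow_le_one₀ hr0 hzv.le
    have : 0 ≤ 1 - r ^ (k + 1) := by linarith
    simp only [hhh]; positivity
  have hhle : ∀ k, hh k ≤ z⁻¹ ^ k := fun k => by
    have : 0 ≤ r ^ (k + 1) := by positivity
    simp only [hhh]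
    have h2 : 0 ≤ z⁻¹ ^ k := by positivity
    nlinarith
  have hC : 0 ≤ C := by
    have := h 0 0
    simp [aa] at this
    linarith [hf 0]
  have fl := flux v t⁻¹ hh (by
      simp only [hhh, ht]; field_simp; ring) (by
      intro k
      simp only [hhh, ht]
      have : (v : ℝ) = r * z⁻¹ ^ 2 := by rw [hr]; field_simp
      rw [this, inv_div, pow_succ, pow_succ z⁻¹ (k+1), pow_succ z⁻¹ k, div_eq_mul_inv]
      ring)
  -- telescoping
  set S : ℕ → ℝ := fun n => ∑ k ∈ Finset.range (K + 1), (aa v n k : ℝ) * hh k with hS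
  have step : ∀ n, t ^ n * S n - t ^ (n + 1) * S (n + 1) ≤ t ^ n * aa v n K * z⁻¹ ^ K := by
    intro n
    have h1 := fl n K
    have h2 : t⁻¹ * S n - S (n + 1) ≤ aa v n K * z⁻¹ ^ (K + 1) := by
      have h3 : 0 ≤ (v : ℝ) * aa v n (K + 1) * hh K := by
        have := hh0 K; positivity
      have h4 : (aa v n K : ℝ) * hh (K + 1) ≤ aa v n K * z⁻¹ ^ (K + 1) := by
        have := hhle (K + 1); gcongr
      linarith
    have h5 : t ≤ z := by
      rw [ht]; exact div_le_self hz.le (by linarith)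
    calc t ^ n * S n - t ^ (n + 1) * S (n + 1) = t ^ (n + 1) * (t⁻¹ * S n - S (n + 1)) := by
          field_simp; ring
      _ ≤ t ^ (n + 1) * (aa v n K * z⁻¹ ^ (K + 1)) := by gcongr
      _ = t ^ n * aa v n K * z⁻¹ ^ K * (t * z⁻¹) := by ring
      _ ≤ t ^ n * aa v n K * z⁻¹ ^ K * 1 := by
          gcongr
          rw [← div_eq_mul_inv]; exact (div_le_one hz).2 h5
      _ = _ := mul_one _
  have tel : ∀ N, S 0 - t ^ N * S N ≤ ∑ n ∈ Finset.range N, t ^ n * aa v n K * z⁻¹ ^ K := by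
    intro N
    have := Finset.sum_le_sum fun n (_ : n ∈ Finset.range N) => step n
    rw [Finset.sum_range_sub'] at this
    simpa using this
  have hS0 : S 0 = 1 - r := by
    simp only [hS]
    rw [Finset.sum_eq_single_of_mem 0 (by simp)]
    · simp [aa, hhh]
    · intro k _ hk; simp [aa, hk]
  have htR0 : 0 ≤ t * R := by positivity
  have lim0 : Tendsto (fun n => (t * R) ^ n) atTop (nhds 0) := tendsto_pow_atTop_nhds_zero_of_lt_one htR0 htR
  have aabd : ∀ n k, t ^ n * (aa v n k : ℝ) ≤ C * (t * R) ^ n := by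
    intro n k
    have h1 : (aa v n k : ℝ) ≤ C * R ^ n := by
      refine le_trans ?_ (h n k)
      exact le_mul_of_one_le_right (by positivity) (hf k)
    calc t ^ n * (aa v n k : ℝ) ≤ t ^ n * (C * R ^ n) := by gcongr
      _ = _ := by rw [mul_pow]; ring
  have hlim : Tendsto (fun N => t ^ N * S N) atTop (nhds 0) := by
    have : Tendsto (fun N => ∑ k ∈ Finset.range (K + 1), (C * (t * R) ^ N) * hh k) atTop (nhds 0) := by
      have := tendsto_finsetSum (Finset.range (K + 1)) (fun k _ => (lim0.const_mul C).mul_const (hh k))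
      simpa using this
    refine squeeze_zero (fun N => ?_) (fun N => ?_) this
    · refine mul_nonneg (by positivity) (Finset.sum_nonneg fun k _ => ?_)
      have := hh0 k; positivity
    · simp only [hS]
      rw [Finset.mul_sum]
      refine Finset.sum_le_sum fun k _ => ?_
      rw [← mul_assoc]
      exact mul_le_mul_of_nonneg_right (aabd N k) (hh0 k)
  have fK : 0 < f K := lt_of_lt_of_le one_pos (hf K)
  have hsum : ∀ N, (S 0 - t ^ N * S N) * (f K * z ^ K) ≤ C / (1 - t * R) := by
    intro N
    calc (S 0 - t ^ N * S N) * (f K * z ^ K)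
        ≤ (∑ n ∈ Finset.range N, t ^ n * aa v n K * z⁻¹ ^ K) * (f K * z ^ K) := by
          gcongr; exact tel N
      _ = ∑ n ∈ Finset.range N, t ^ n * (aa v n K * f K) := by
          rw [Finset.sum_mul]
          refine Finset.sum_congr rfl fun n _ => ?_
          rw [inv_pow]; field_simp
      _ ≤ ∑ n ∈ Finset.range N, C * (t * R) ^ n := by
          refine Finset.sum_le_sum fun n _ => ?_
          calc t ^ n * (aa v n K * f K) ≤ t ^ n * (C * R ^ n) := by
                exact mul_le_mul_of_nonneg_left (h n K) (by positivity)
            _ = _ := by rw [mul_pow]; ring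
      _ = C * ∑ n ∈ Finset.range N, (t * R) ^ n := by rw [Finset.mul_sum]
      _ ≤ C * (1 - t * R)⁻¹ := by
          gcongr
          rw [← tsum_geometric_of_lt_one htR0 htR]
          exact (summable_geometric_of_lt_one htR0 htR).sum_le_tsum _ (fun _ _ => by positivity)
      _ = _ := by rw [div_eq_mul_inv]
  have hfin := le_of_tendsto' ((tendsto_const_nhds.sub hlim).mul_const (f K * z ^ K)) hsum
  rw [sub_zero, hS0] at hfin
  rw [le_div_iff₀ (by linarith)]
  linarith

lemma core (v : ℕ) (hv : 1 ≤ v) (ρ : ℝ) (hρ0 : 0 ≤ ρ) (hρ1 : ρ < 1) (f : ℕ → ℝ)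
    (hf : ∀ k, √v ^ k ≤ f k)
    (h : ∀ R, (v + 1) * ρ < R → ∃ C, ∀ n k, (aa v n k : ℝ) * f k ≤ C * R ^ n)
    (z : ℝ) (hz0 : 0 ≤ z) (hz : z * v * ρ < 1) :
    ∃ z', z < z' ∧ ∃ C, ∀ k, f k * z' ^ k ≤ C := by
  have hv1 : (1 : ℝ) ≤ v := by exact_mod_cast hv
  have hsv : √(v : ℝ) ^ 2 = v := Real.sq_sqrt (by positivity)
  have hs1 : 1 ≤ √(v : ℝ) := Real.one_le_sqrt.2 hv1
  have hf1 : ∀ k, 1 ≤ f k := fun k => (one_le_pow₀ hs1).trans (hf k)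
  have hA : 2 * √(v : ℝ) ≤ (v + 1) * ρ := by
    refine le_of_forall_gt_imp_ge_of_dense fun R hR => ?_
    obtain ⟨C, hC⟩ := h R hR
    exact growth v f hf R C (lt_of_le_of_lt (by positivity) hR) hC
  have hρs : 1 ≤ √(v : ℝ) * ρ := by
    nlinarith
  have hzs : z * √(v : ℝ) < 1 := by
    by_contra! hc
    have : 1 ≤ (z * √(v : ℝ)) * (√(v : ℝ) * ρ) := one_le_mul_of_one_le_of_one_le hc hρs
    nlinarith
  have hzv : v * z ^ 2 < 1 := by
    have : (z * √(v : ℝ)) ^ 2 < 1 := pow_lt_one₀ (by positivity) hzs (by norm_num)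
    rw [mul_pow, hsv] at this; linarith
  obtain ⟨z', hzz', hz'1, hz'2⟩ : ∃ z', z < z' ∧ z' * v * ρ < 1 ∧ v * z' ^ 2 < 1 := by
    have c0 : ∀ᶠ y : ℝ in nhdsWithin z (Ioi z), z < y := self_mem_nhdsWithin
    have c1 : ∀ᶠ y : ℝ in nhdsWithin z (Ioi z), y * v * ρ < 1 :=
      (((by fun_prop : Continuous fun y : ℝ => y * v * ρ).tendsto z).mono_left nhdsWithin_le_nhds).eventually_lt_const hz
    have c2 : ∀ᶠ y : ℝ in nhdsWithin z (Ioi z), v * y ^ 2 < 1 :=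
      (((by fun_prop : Continuous fun y : ℝ => v * y ^ 2).tendsto z).mono_left nhdsWithin_le_nhds).eventually_lt_const hzv
    obtain ⟨y, h1, h2, h3⟩ := (c0.and (c1.and c2)).exists
    exact ⟨y, h1, h2, h3⟩
  have hz'0 : 0 < z' := lt_of_le_of_lt hz0 hzz'
  refine ⟨z', hzz', ?_⟩
  set t := z' / (1 + v * z' ^ 2) with ht
  have ht0 : 0 < t := by positivity
  have htρ : (v + 1) * ρ < t⁻¹ := by
    rw [ht, inv_div, lt_div_iff₀ hz'0]
    have h1 : z' * ρ < 1 := by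
      have : z' * ρ * 1 ≤ z' * ρ * v := by gcongr
      nlinarith
    have h2 : 0 < (1 - z' * v * ρ) * (1 - z' * ρ) := mul_pos (by linarith) (by linarith)
    have h3 : v * z' ^ 2 * ρ ^ 2 ≤ v * z' ^ 2 * 1 := by
      gcongr; exact pow_le_one₀ hρ0 hρ1.le
    nlinarith
  obtain ⟨R, hR1, hR2⟩ := exists_between htρ
  obtain ⟨C, hC⟩ := h R hR1
  have hR0 : 0 < R := lt_of_le_of_lt (by positivity) hR1
  have htR : t * R < 1 := by
    calc t * R < t * t⁻¹ := by gcongr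
      _ = 1 := mul_inv_cancel₀ ht0.ne'
  exact ⟨_, green v f hf1 z' t R C hz'0 hz'2 ht hR0 htR hC⟩

variable {V : Type*} (G : SimpleGraph V) [DecidableEq V] [∀ v, Fintype (G.neighborSet v)]

lemma rho_facts {v : ℕ} (hreg : G.IsRegularOfDegree (v + 1)) (x : V) (ρ : ℝ)
    (hρ : G.spectralRadius x = ρ) : 0 ≤ ρ ∧
    ∀ R, (v + 1) * ρ < R → ∃ C, 0 ≤ C ∧ ∀ n, (wk G (2 * n) x x : ℝ) ≤ C * R ^ (2 * n) := by
  have hd : (0 : ℝ) < v + 1 := by positivity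
  have heq := srw_eq G hreg
  have hn0 : ∀ n, 0 ≤ G.srw n x x := fun n => by rw [heq]; positivity
  have hn1 : ∀ n, G.srw n x x ≤ 1 := fun n => by
    rw [heq, div_le_one (by positivity)]
    exact_mod_cast wk_le G hreg n x x
  have hb : IsBoundedUnder (· ≤ ·) atTop (fun n : ℕ => (G.srw (2 * n) x x) ^ ((2 * n : ℝ))⁻¹) :=
    isBoundedUnder_of ⟨1, fun n => Real.rpow_le_one (hn0 _) (hn1 _) (by positivity)⟩
  have h0 : 0 ≤ ρ := by
    rw [← hρ, SimpleGraph.spectralRadius]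
    exact le_limsup_of_frequently_le (Frequently.of_forall fun n => Real.rpow_nonneg (hn0 _) _) hb
  refine ⟨h0, fun R hR => ?_⟩
  have hR0 : 0 < R := lt_of_le_of_lt (by positivity) hR
  have hlt : G.spectralRadius x < R / (v + 1) := by
    rw [hρ, lt_div_iff₀ hd]; linarith
  have hev := eventually_lt_of_limsup_lt hlt hb
  obtain ⟨N, hN⟩ := eventually_atTop.1 (hev.and (eventually_ge_atTop 1))
  have hsum0 : ∀ n, 0 ≤ (wk G (2 * n) x x : ℝ) / R ^ (2 * n) := fun n => by positivity
  refine ⟨1 + ∑ n ∈ Finset.range N, (wk G (2 * n) x x : ℝ) / R ^ (2 * n),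
    add_nonneg one_pos.le (Finset.sum_nonneg fun n _ => hsum0 n), fun n => ?_⟩
  rw [← div_le_iff₀ (by positivity)]
  by_cases hn : n < N
  · have := Finset.single_le_sum (fun n _ => hsum0 n) (Finset.mem_range.2 hn)
    linarith
  · obtain ⟨h1, h2⟩ := hN n (not_lt.1 hn)
    have h3 : G.srw (2 * n) x x ≤ (R / (v + 1)) ^ (2 * n) := by
      have hp : (0 : ℝ) < 2 * n := by
        have : (1 : ℝ) ≤ n := by exact_mod_cast h2
        linarith
      have := Real.rpow_le_rpow (Real.rpow_nonneg (hn0 _) _) h1.le hp.le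
      rw [← Real.rpow_mul (hn0 _), inv_mul_cancel₀ hp.ne', Real.rpow_one] at this
      refine this.trans (le_of_eq ?_)
      rw [← Real.rpow_natCast]; push_cast; rfl
    rw [heq, div_pow] at h3
    push_cast at h3
    have h4 : (wk G (2 * n) x x : ℝ) ≤ R ^ (2 * n) := by
      rwa [div_le_div_iff_of_pos_right (by positivity)] at h3
    have h5 : (wk G (2 * n) x x : ℝ) / R ^ (2 * n) ≤ 1 := (div_le_one (by positivity)).2 h4
    have := Finset.sum_nonneg fun n (_ : n ∈ Finset.range N) => hsum0 n
    linarith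

lemma FF_ne_top {v : ℕ} (hreg : G.IsRegularOfDegree (v + 1)) (x : V) (k : ℕ) : FF G x k ≠ ⊤ := by
  have := FF_le G hreg k k x
  rw [aa_self] at this
  simp only [Nat.cast_one, one_pow, one_mul] at this
  exact ne_top_of_le_ne_top (ENNReal.natCast_ne_top _) this

lemma FF_bound {v : ℕ} (hv : 1 ≤ v) (hreg : G.IsRegularOfDegree (v + 1)) (x : V) (ρ : ℝ)
    (hρ : G.spectralRadius x = ρ) (hρ1 : ρ < 1) (z : ℝ) (hz0 : 0 ≤ z) (hz : z * v * ρ < 1) :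
    ∃ z', z < z' ∧ ∃ C : ℝ, ∀ k, FF G x k * ENNReal.ofReal z' ^ (2 * k) ≤ ENNReal.ofReal C := by
  obtain ⟨hρ0, hR⟩ := rho_facts G hreg x ρ hρ
  have key := core v hv ρ hρ0 hρ1 (fun k => √(FF G x k).toReal) (fun k => by
      refine Real.le_sqrt_of_sq_le ?_
      rw [← pow_mul, mul_comm, pow_mul, Real.sq_sqrt (by positivity)]
      have := ENNReal.toReal_mono (FF_ne_top G hreg x k) (FF_ge G hreg k x)
      simpa using this) (fun R hR1 => by
      obtain ⟨C, hC0, hC⟩ := hR R hR1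
      have hR0 : 0 < R := lt_of_le_of_lt (by positivity) hR1
      refine ⟨√C, fun n k => ?_⟩
      have h1 := ENNReal.toReal_mono (ENNReal.natCast_ne_top _) (FF_le G hreg n k x)
      simp only [ENNReal.toReal_mul, ENNReal.toReal_pow, ENNReal.toReal_natCast] at h1
      have h2 := Real.sqrt_le_sqrt (h1.trans (hC n))
      rw [Real.sqrt_mul (by positivity), Real.sqrt_sq (by positivity), Real.sqrt_mul hC0,
        mul_comm 2 n, pow_mul, Real.sqrt_sq (by positivity)] at h2
      exact h2) z hz0 hz
  obtain ⟨z', hz', C, hC⟩ := key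
  have hz'0 : 0 ≤ z' := hz0.trans hz'.le
  refine ⟨z', hz', C ^ 2, fun k => ?_⟩
  have h1 := hC k
  have h2 : ((√(FF G x k).toReal) * z' ^ k) ^ 2 ≤ C ^ 2 := by
    have : 0 ≤ (√(FF G x k).toReal) * z' ^ k := by positivity
    gcongr
  rw [mul_pow, Real.sq_sqrt (by positivity), ← pow_mul, mul_comm k 2] at h2
  rw [← ENNReal.ofReal_toReal (FF_ne_top G hreg x k), ← ENNReal.ofReal_pow hz'0, ← ENNReal.ofReal_mul (by positivity)]
  exact ENNReal.ofReal_le_ofReal h2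

lemma cs (u : ℕ → ℝ≥0∞) (w : ℕ → ℝ≥0∞) (hw : ∀ k, w k ≠ 0) (hw' : ∀ k, w k ≠ ⊤) :
    (∑' k, u k) ^ 2 ≤ (∑' k, w k) * ∑' k, (u k) ^ 2 * (w k)⁻¹ := by
  have h := ENNReal.lintegral_mul_le_Lp_mul_Lq (Measure.count (α := ℕ)) (p := 2) (q := 2)
    (by constructor <;> norm_num) (f := fun k => (w k) ^ (1/2 : ℝ)) (g := fun k => u k * (w k)⁻¹ ^ (1/2 : ℝ))
    (by fun_prop) (by fun_prop)
  simp only [Pi.mul_apply, lintegral_count] at h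
  have e1 : ∀ k, w k ^ (1/2 : ℝ) * (u k * (w k)⁻¹ ^ (1/2 : ℝ)) = u k := by
    intro k
    rw [mul_left_comm, ← ENNReal.mul_rpow_of_nonneg _ _ (by norm_num), ENNReal.mul_inv_cancel (hw k) (hw' k)]
    simp
  have e2 : ∀ k, (w k ^ (1/2 : ℝ)) ^ (2 : ℝ) = w k := by
    intro k; rw [← ENNReal.rpow_mul]; norm_num
  have e3 : ∀ k, (u k * (w k)⁻¹ ^ (1/2 : ℝ)) ^ (2 : ℝ) = u k ^ 2 * (w k)⁻¹ := by
    intro k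
    rw [ENNReal.mul_rpow_of_nonneg _ _ (by norm_num), ← ENNReal.rpow_mul]
    norm_num
  simp_rw [e1, e2, e3] at h
  refine (pow_le_pow_left' h 2).trans (le_of_eq ?_)
  rw [mul_pow, ← ENNReal.rpow_natCast, ← ENNReal.rpow_natCast, ← ENNReal.rpow_mul, ← ENNReal.rpow_mul]
  norm_num

lemma bubble {v : ℕ} (hv : 1 ≤ v) (hreg : G.IsRegularOfDegree (v + 1)) (x : V) (ρ : ℝ)
    (hρ : G.spectralRadius x = ρ) (hρ1 : ρ < 1) (z : ℝ) (hz0 : 0 ≤ z) (hz : z * v * ρ < 1) :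
    ∑' y, (∑' k, (ak G k x y : ℝ≥0∞) * ENNReal.ofReal z ^ k) ^ 2 < ⊤ := by
  obtain ⟨z', hz', C, hC⟩ := FF_bound G hv hreg x ρ hρ hρ1 z hz0 hz
  obtain ⟨z₁, h1, h2⟩ := exists_between hz'
  have hz1 : 0 < z₁ := lt_of_le_of_lt hz0 h1
  have hz'0 : 0 < z' := hz1.trans h2
  set Z := ENNReal.ofReal z with hZ
  set Z1 := ENNReal.ofReal z₁ with hZ1
  set Z' := ENNReal.ofReal z' with hZ'
  have n1 : Z1 ≠ 0 := by simpa [hZ1] using hz1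
  have n1' : Z1 ≠ ⊤ := ENNReal.ofReal_ne_top
  have n' : Z' ≠ 0 := by simpa [hZ'] using hz'0
  have n'' : Z' ≠ ⊤ := ENNReal.ofReal_ne_top
  have hZZ1 : Z ≤ Z1 := ENNReal.ofReal_le_ofReal h1.le
  have hq : Z1 / Z' < 1 := by
    rw [ENNReal.div_lt_iff (Or.inl n') (Or.inl n''), one_mul]
    exact (ENNReal.ofReal_lt_ofReal_iff hz'0).2 h2
  set θ := Z1 / Z' with hθ
  have hθ0 : θ ≠ 0 := (ENNReal.div_pos n1 n'').ne'
  have hθt : θ ≠ ⊤ := ne_top_of_lt hq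
  have hgeo : ∑' k, θ ^ k ≠ ⊤ := by
    rw [ENNReal.tsum_geometric]
    exact ENNReal.inv_ne_top.2 (tsub_pos_of_lt hq).ne'
  calc ∑' y, (∑' k, (ak G k x y : ℝ≥0∞) * Z ^ k) ^ 2
      ≤ ∑' y, ((∑' k, θ ^ k) * ∑' k, ((ak G k x y : ℝ≥0∞) * Z ^ k) ^ 2 * (θ ^ k)⁻¹) :=
        ENNReal.tsum_le_tsum fun y => cs _ _ (fun k => pow_ne_zero _ hθ0) (fun k => ENNReal.pow_ne_top hθt)
    _ = (∑' k, θ ^ k) * ∑' k, ∑' y, ((ak G k x y : ℝ≥0∞) * Z ^ k) ^ 2 * (θ ^ k)⁻¹ := by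
        rw [ENNReal.tsum_mul_left, ENNReal.tsum_comm]
    _ ≤ (∑' k, θ ^ k) * ∑' k, ENNReal.ofReal C * θ ^ k := by
        gcongr with k
        have e : ∀ y, ((ak G k x y : ℝ≥0∞) * Z ^ k) ^ 2 * (θ ^ k)⁻¹ = (ak G k x y : ℝ≥0∞) ^ 2 * (Z ^ (2 * k) * (θ ^ k)⁻¹) := by
          intro y; ring
        simp_rw [e]
        rw [ENNReal.tsum_mul_right]
        have e2 : Z1 ^ (2 * k) * (θ ^ k)⁻¹ = Z' ^ (2 * k) * θ ^ k := by
          have e3 : Z1 = Z' * θ := by rw [hθ, ENNReal.mul_div_cancel n' n'']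
          have e4 : θ ^ k * (θ ^ k)⁻¹ = 1 := ENNReal.mul_inv_cancel (pow_ne_zero _ hθ0) (ENNReal.pow_ne_top hθt)
          rw [e3]
          calc (Z' * θ) ^ (2 * k) * (θ ^ k)⁻¹ = Z' ^ (2 * k) * θ ^ k * (θ ^ k * (θ ^ k)⁻¹) := by ring
            _ = _ := by rw [e4, mul_one]
        calc FF G x k * (Z ^ (2 * k) * (θ ^ k)⁻¹) ≤ FF G x k * (Z1 ^ (2 * k) * (θ ^ k)⁻¹) := by gcongr
          _ = (FF G x k * Z' ^ (2 * k)) * θ ^ k := by rw [e2, mul_assoc]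
          _ ≤ ENNReal.ofReal C * θ ^ k := by gcongr; exact hC k
    _ < ⊤ := by
        rw [ENNReal.tsum_mul_left]
        exact ENNReal.mul_lt_top hgeo.lt_top (ENNReal.mul_lt_top ENNReal.ofReal_lt_top hgeo.lt_top)

end Bub

namespace Bub

section saw
variable {V : Type*} (G : SimpleGraph V)

lemma step_finset [DecidableEq V] (c y : V) (T : Finset V) (hT : ∀ z ∈ T, G.Adj c z) (Q : (z : V) → G.Walk z y → Prop)
    (n : V → ℕ) (h : ∀ z ∈ T, ∃ s : Finset (G.Walk z y), s.card ≤ n z ∧ ∀ w, Q z w → w ∈ s) :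
    ∃ s : Finset (G.Walk c y), s.card ≤ ∑ z ∈ T, n z ∧
      ∀ z ∈ T, ∀ (a : G.Adj c z) (w : G.Walk z y), Q z w → SimpleGraph.Walk.cons a w ∈ s := by
  classical
  choose! s hs1 hs2 using h
  refine ⟨T.attach.biUnion fun z => (s z.1).image (SimpleGraph.Walk.cons (hT z.1 z.2)), ?_, ?_⟩
  · refine Finset.card_biUnion_le.trans ?_
    rw [← Finset.sum_attach T n]
    exact Finset.sum_le_sum fun z _ => Finset.card_image_le.trans (hs1 z.1 z.2)
  · intro z hz a w hw
    rw [Finset.mem_biUnion]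
    exact ⟨⟨z, hz⟩, Finset.mem_attach _ _, Finset.mem_image_of_mem _ (hs2 z hz w hw)⟩

variable [DecidableEq V] [∀ v, Fintype (G.neighborSet v)]

lemma dd_finset (k : ℕ) : ∀ p c y : V, ∃ s : Finset (G.Walk c y), s.card ≤ dd G k p c y ∧
    ∀ w : G.Walk c y, w.IsPath ∧ w.length = k ∧ p ∉ w.support → w ∈ s := by
  induction k with
  | zero =>
    intro p c y
    by_cases h : c = y
    · subst h
      refine ⟨{SimpleGraph.Walk.nil}, by simp [dd], ?_⟩
      rintro w ⟨_, h2, _⟩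
      simpa using SimpleGraph.Walk.length_eq_zero_iff.1 h2
    · refine ⟨∅, by simp, ?_⟩
      rintro w ⟨_, h2, _⟩
      exact absurd (SimpleGraph.Walk.eq_of_length_eq_zero h2) h
  | succ k ih =>
    intro p c y
    obtain ⟨s, hs1, hs2⟩ := step_finset G c y ((G.neighborFinset c).erase p)
      (fun z hz => (G.mem_neighborFinset c z).1 (Finset.mem_of_mem_erase hz))
      (fun z w => w.IsPath ∧ w.length = k ∧ c ∉ w.support) (fun z => dd G k c z y) (fun z _ => ih c z y)
    refine ⟨s, hs1, ?_⟩
    rintro w ⟨h1, h2, h3⟩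
    cases w with
    | nil => simp at h2
    | @cons _ z _ a q =>
      rw [SimpleGraph.Walk.cons_isPath_iff] at h1
      simp only [SimpleGraph.Walk.support_cons, List.mem_cons, not_or] at h3
      simp only [SimpleGraph.Walk.length_cons, Nat.add_right_cancel_iff] at h2
      refine hs2 z (Finset.mem_erase.2 ⟨?_, (G.mem_neighborFinset c z).2 a⟩) a q ⟨h1.1, h2, h1.2⟩
      rintro rfl
      exact h3.2 q.start_mem_support

lemma ak_finset (k : ℕ) : ∀ c y : V, ∃ s : Finset (G.Walk c y), s.card ≤ ak G k c y ∧
    ∀ w : G.Walk c y, w.IsPath ∧ w.length = k → w ∈ s := by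
  intro c y
  cases k with
  | zero =>
    obtain ⟨s, h1, h2⟩ := dd_finset G 0 c c y
    by_cases h : c = y
    · subst h
      refine ⟨{SimpleGraph.Walk.nil}, by simp [ak], ?_⟩
      rintro w ⟨_, h2⟩
      simpa using SimpleGraph.Walk.length_eq_zero_iff.1 h2
    · refine ⟨∅, by simp, ?_⟩
      rintro w ⟨_, h2⟩
      exact absurd (SimpleGraph.Walk.eq_of_length_eq_zero h2) h
  | succ k =>
    obtain ⟨s, hs1, hs2⟩ := step_finset G c y (G.neighborFinset c)
      (fun z hz => (G.mem_neighborFinset c z).1 hz)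
      (fun z w => w.IsPath ∧ w.length = k ∧ c ∉ w.support) (fun z => dd G k c z y)
      (fun z _ => dd_finset G k c z y)
    refine ⟨s, hs1, ?_⟩
    rintro w ⟨h1, h2⟩
    cases w with
    | nil => simp at h2
    | @cons _ z _ a q =>
      rw [SimpleGraph.Walk.cons_isPath_iff] at h1
      simp only [SimpleGraph.Walk.length_cons, Nat.add_right_cancel_iff] at h2
      exact hs2 z ((G.mem_neighborFinset c z).2 a) a q ⟨h1.1, h2, h1.2⟩

lemma sawCountTo_le (x y : V) (k : ℕ) : G.sawCountTo x y k ≤ ak G k x y := by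
  obtain ⟨s, h1, h2⟩ := ak_finset G k x y
  refine le_trans ?_ h1
  rw [SimpleGraph.sawCountTo]
  have := Nat.card_le_card_of_injective (β := s) (fun w : {w : G.Walk x y // w.IsPath ∧ w.length = k} => ⟨w.1, h2 _ w.2⟩)
    (fun a b hab => Subtype.ext (by simpa using hab))
  simpa using this

end saw

section perc
variable {V : Type*} (G : SimpleGraph V)

/-- self-avoiding walks -/
abbrev SAW (x : V) (n : ℕ) := {w : (y : V) × G.Walk x y // w.2.IsPath ∧ w.2.length = n}

lemma fin_walks [∀ v, Fintype (G.neighborSet v)] (n : ℕ) :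
    ∀ x : V, Finite {w : (y : V) × G.Walk x y // w.2.length = n} := by
  induction n with
  | zero =>
    intro x
    refine Finite.of_surjective (α := Unit) (fun _ => ⟨⟨x, SimpleGraph.Walk.nil⟩, rfl⟩) ?_
    rintro ⟨⟨y, w⟩, h⟩
    cases w with
    | nil => exact ⟨(), rfl⟩
    | cons a q => simp at h
  | succ n ih =>
    intro x
    have := ih
    refine Finite.of_surjective
      (α := (z : G.neighborSet x) × {w : (y : V) × G.Walk z.1 y // w.2.length = n})
      (fun q => ⟨⟨q.2.1.1, SimpleGraph.Walk.cons q.1.2 q.2.1.2⟩, congrArg (· + 1) q.2.2⟩) ?_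
    rintro ⟨⟨y, w⟩, h⟩
    cases w with
    | nil => simp at h
    | @cons _ z _ a q => exact ⟨⟨⟨z, a⟩, ⟨⟨y, q⟩, by simpa using h⟩⟩, rfl⟩

lemma fin_saw [∀ v, Fintype (G.neighborSet v)] (x : V) (n : ℕ) : Finite (SAW G x n) := by
  have := fin_walks G n x
  exact Finite.of_injective (β := {w : (y : V) × G.Walk x y // w.2.length = n})
    (fun w => ⟨w.1, w.2.2⟩) (fun a b h => Subtype.ext (by simpa using h))

lemma countable_V [∀ v, Fintype (G.neighborSet v)] (hconn : G.Connected) (x : V) : Countable V := by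
  have := fun n => fin_walks G n x
  refine Function.Surjective.countable
    (α := (n : ℕ) × {w : (y : V) × G.Walk x y // w.2.length = n}) (f := fun q => q.2.1.1) ?_
  intro y
  obtain ⟨w⟩ := hconn.preconnected x y
  exact ⟨⟨w.length, ⟨⟨y, w⟩, rfl⟩⟩, rfl⟩

lemma take_append_drop {u v : V} (p : G.Walk u v) : ∀ n, (p.take n).append (p.drop n) = p := by
  induction p with
  | nil => intro n; cases n <;> simp [SimpleGraph.Walk.take, SimpleGraph.Walk.drop]
  | cons a q ih =>
    intro n
    cases n with
    | zero => simp [SimpleGraph.Walk.take, SimpleGraph.Walk.drop]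
    | succ n => simp [SimpleGraph.Walk.take, SimpleGraph.Walk.drop, ih]

lemma sawCount_le_of_iso [∀ v, Fintype (G.neighborSet v)] (φ : G ≃g G) (x : V) (n : ℕ) :
    G.sawCount x n ≤ G.sawCount (φ x) n := by
  have := fin_saw G (φ x) n
  have hinj : Function.Injective (φ.toHom : V → V) := φ.injective
  refine Nat.card_le_card_of_injective (α := SAW G x n) (β := SAW G (φ x) n)
    (fun w => ⟨⟨φ w.1.1, w.1.2.map φ.toHom⟩, w.2.1.map hinj, by simpa using w.2.2⟩) ?_
  rintro ⟨⟨y, w⟩, h⟩ ⟨⟨y', w'⟩, h'⟩ heq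
  simp only [Subtype.mk.injEq, Sigma.mk.injEq] at heq
  obtain ⟨e1, e2⟩ := heq
  have e1 : y = y' := φ.injective e1
  subst e1
  have := SimpleGraph.Walk.map_injective_of_injective hinj x y (eq_of_heq e2)
  subst this
  rfl

lemma sawCount_const [∀ v, Fintype (G.neighborSet v)] (htrans : G.IsVertexTransitive) (x y : V)
    (n : ℕ) : G.sawCount x n = G.sawCount y n := by
  obtain ⟨φ, rfl⟩ := htrans x y
  refine le_antisymm (sawCount_le_of_iso G φ x n) ?_
  obtain ⟨ψ, hψ⟩ := htrans (φ x) x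
  have := sawCount_le_of_iso G ψ (φ x) n
  rwa [hψ] at this

lemma sawCount_add [∀ v, Fintype (G.neighborSet v)] (htrans : G.IsVertexTransitive) (x : V)
    (n m : ℕ) : G.sawCount x (n + m) ≤ G.sawCount x n * G.sawCount x m := by
  have := fin_saw G
  have := Fintype.ofFinite (SAW G x n)
  have h1 : Nat.card ((u : SAW G x n) × SAW G u.1.1 m) = G.sawCount x n * G.sawCount x m := by
    rw [Nat.card_sigma]
    have : ∀ u : SAW G x n, Nat.card (SAW G u.1.1 m) = G.sawCount x m := fun u =>
      sawCount_const G htrans _ _ _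
    simp_rw [this]
    rw [Finset.sum_const, Finset.card_univ, smul_eq_mul, ← Nat.card_eq_fintype_card]
    rfl
  rw [← h1]
  let f : SAW G x (n + m) → ((u : SAW G x n) × SAW G u.1.1 m) := fun w =>
    ⟨⟨⟨w.1.2.getVert n, w.1.2.take n⟩, w.2.1.take n, by
        have := w.2.2
        rw [SimpleGraph.Walk.take_length, this]; omega⟩,
      ⟨⟨w.1.1, w.1.2.drop n⟩, w.2.1.drop n, by
        have := w.2.2
        rw [SimpleGraph.Walk.drop_length, this]; omega⟩⟩
  let g : ((u : SAW G x n) × SAW G u.1.1 m) → ((y : V) × G.Walk x y) := fun q =>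
    ⟨q.2.1.1, q.1.1.2.append q.2.1.2⟩
  have hgf : ∀ w, g (f w) = w.1 := by
    rintro ⟨⟨y, w⟩, h⟩
    simp only [g, f, take_append_drop]
  refine Nat.card_le_card_of_injective f (fun a b hab => Subtype.ext ?_)
  rw [← hgf a, ← hgf b, hab]

lemma sawCount_mul [∀ v, Fintype (G.neighborSet v)] (htrans : G.IsVertexTransitive) (x : V)
    (n k : ℕ) : G.sawCount x (n * (k + 1)) ≤ G.sawCount x n ^ (k + 1) := by
  induction k with
  | zero => simp
  | succ k ih =>
    rw [Nat.mul_succ, pow_succ]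
    exact (sawCount_add G htrans x _ n).trans (Nat.mul_le_mul_right _ ih)

lemma open_le (p : ℝ) (P : Measure (G.edgeSet → Bool)) (hP : G.IsBernoulliPercolation p P)
    {x y : V} (w : G.Walk x y) (hw : w.IsPath) :
    P {ω | G.openWalk ω w} ≤ ENNReal.ofReal p ^ w.length := by
  classical
  set l : List G.edgeSet := w.edges.attach.map (fun e => ⟨e.1, w.edges_subset_edgeSet e.2⟩) with hl
  have hnd : l.Nodup := by
    refine List.Nodup.map ?_ (List.nodup_attach.2 hw.isTrail.edges_nodup)
    intro a b h
    exact Subtype.ext (by simpa using h)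
  have h := hP.2 l.toFinset (fun _ => true)
  simp only [if_true, Finset.prod_const] at h
  rw [List.toFinset_card_of_nodup hnd] at h
  have hlen : l.length = w.length := by simp [hl]
  rw [hlen] at h
  rw [← h]
  refine measure_mono fun ω hω e he => ?_
  rw [List.mem_toFinset, hl, List.mem_map] at he
  obtain ⟨e', _, rfl⟩ := he
  exact hω e'.1 e'.2

lemma inf_open [∀ v, Fintype (G.neighborSet v)] (ω : G.edgeSet → Bool) (x : V)
    (h : (G.percCluster ω x).Infinite) (m : ℕ) : ∃ w : SAW G x m, G.openWalk ω w.1.2 := by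
  classical
  have hfin : (⋃ n ∈ Finset.range m, Set.range
      (fun w : {w : (y : V) × G.Walk x y // w.2.length = n} => w.1.1)).Finite := by
    refine Set.Finite.biUnion (Finset.finite_toSet _) fun n _ => ?_
    have := fin_walks G n x
    exact Set.finite_range _
  obtain ⟨y, hy, hy'⟩ := (h.sdiff hfin).nonempty
  obtain ⟨w, hw⟩ := hy
  have hlen : m ≤ w.bypass.length := by
    by_contra! hlt
    refine hy' (Set.mem_biUnion (Finset.mem_coe.2 (Finset.mem_range.2 hlt)) ?_)
    exact ⟨⟨⟨y, w.bypass⟩, rfl⟩, rfl⟩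
  refine ⟨⟨⟨_, w.bypass.take m⟩, w.bypass_isPath.take m, ?_⟩, ?_⟩
  · rw [SimpleGraph.Walk.take_length]; omega
  · intro e he
    exact hw e (w.edges_bypass_subset_edges ((w.bypass.isSubwalk_take m).edges_subset he))

lemma cluster_le [∀ v, Fintype (G.neighborSet v)] (p : ℝ) (P : Measure (G.edgeSet → Bool))
    (hP : G.IsBernoulliPercolation p P) (x : V) (m : ℕ) :
    P {ω | (G.percCluster ω x).Infinite} ≤ G.sawCount x m * ENNReal.ofReal p ^ m := by
  have := fin_saw G x m
  have := Fintype.ofFinite (SAW G x m)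
  calc P {ω | (G.percCluster ω x).Infinite} ≤ P (⋃ w ∈ (Finset.univ : Finset (SAW G x m)), {ω | G.openWalk ω w.1.2}) := by
        refine measure_mono fun ω hω => ?_
        obtain ⟨w, hw⟩ := inf_open G ω x hω m
        exact Set.mem_biUnion (Finset.mem_coe.2 (Finset.mem_univ w)) hw
    _ ≤ ∑ w : SAW G x m, P {ω | G.openWalk ω w.1.2} := measure_biUnion_finset_le _ _
    _ ≤ ∑ w : SAW G x m, ENNReal.ofReal p ^ m := by
        refine Finset.sum_le_sum fun w _ => ?_
        have := open_le G p P hP w.1.2 w.2.1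
        rwa [w.2.2] at this
    _ = _ := by
        rw [Finset.sum_const, Finset.card_univ, nsmul_eq_mul, ← Nat.card_eq_fintype_card]
        rfl

lemma conn_nonneg (x : V) : 0 ≤ G.connectiveConstant x :=
  Real.iInf_nonneg fun n => by positivity

lemma perc_lower [∀ v, Fintype (G.neighborSet v)] (hconn : G.Connected)
    (htrans : G.IsVertexTransitive) (x₀ : V) (p : ℝ) (hp : p ∈ Set.Icc (0 : ℝ) 1)
    (P : Measure (G.edgeSet → Bool)) (hP : G.IsBernoulliPercolation p P)
    (hpos : 0 < P {ω | ∃ x, (G.percCluster ω x).Infinite}) :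
    (G.connectiveConstant x₀)⁻¹ ≤ p := by
  by_contra! hlt
  have hcV := countable_V G hconn x₀
  have hμ0 : 0 < G.connectiveConstant x₀ := by
    rcases (conn_nonneg G x₀).eq_or_lt with h | h
    · rw [← h, inv_zero] at hlt; linarith [hp.1]
    · exact h
  obtain ⟨n, hn⟩ : ∃ n : ℕ+, (G.sawCount x₀ n : ℝ) * p ^ (n : ℕ) < 1 := by
    rcases hp.1.eq_or_lt with h | h
    · exact ⟨1, by simp [← h]⟩
    · have h1 : G.connectiveConstant x₀ < p⁻¹ := (lt_inv_comm₀ h hμ0).1 hlt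
      obtain ⟨n, hn⟩ := exists_lt_of_ciInf_lt h1
      refine ⟨n, ?_⟩
      have hn0 : ((n : ℕ) : ℝ) ≠ 0 := by exact_mod_cast n.ne_zero
      have h2 := pow_lt_pow_left₀ hn (by positivity) n.ne_zero
      rw [← Real.rpow_natCast, ← Real.rpow_mul (by positivity), inv_mul_cancel₀ hn0, Real.rpow_one,
        inv_pow] at h2
      rwa [← one_div, lt_div_iff₀ (by positivity)] at h2
  have hz : ∀ x, P {ω | (G.percCluster ω x).Infinite} = 0 := by
    intro x
    have hb : ∀ k : ℕ, P {ω | (G.percCluster ω x).Infinite}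
        ≤ ENNReal.ofReal (((G.sawCount x₀ n : ℝ) * p ^ (n : ℕ)) ^ (k + 1)) := by
      intro k
      refine (cluster_le G p P hP x ((n : ℕ) * (k + 1))).trans ?_
      rw [sawCount_const G htrans x x₀]
      have : (G.sawCount x₀ ((n : ℕ) * (k + 1)) : ℝ) ≤ (G.sawCount x₀ n : ℝ) ^ (k + 1) := by
        exact_mod_cast sawCount_mul G htrans x₀ n k
      rw [← ENNReal.ofReal_natCast, ← ENNReal.ofReal_pow hp.1, ← ENNReal.ofReal_mul (by positivity)]
      refine ENNReal.ofReal_le_ofReal ?_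
      have hp0 := hp.1
      rw [mul_pow, ← pow_mul]
      gcongr
    have hp0 := hp.1
    have ht : Tendsto (fun k : ℕ => ENNReal.ofReal (((G.sawCount x₀ n : ℝ) * p ^ (n : ℕ)) ^ (k + 1)))
        atTop (nhds (ENNReal.ofReal 0)) :=
      ENNReal.tendsto_ofReal ((tendsto_pow_atTop_nhds_zero_of_lt_one (by positivity) hn).comp (tendsto_add_atTop_nat 1))
    rw [ENNReal.ofReal_zero] at ht
    exact le_antisymm (ge_of_tendsto' ht hb) bot_le
  have : P {ω | ∃ x, (G.percCluster ω x).Infinite} = 0 := by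
    rw [Set.ofPred_exists]
    exact measure_iUnion_null hz
  exact hpos.ne' this

lemma perc_one [∀ v, Fintype (G.neighborSet v)] [Infinite V] (hconn : G.Connected) (x₀ : V)
    (P : Measure (G.edgeSet → Bool)) (hP : G.IsBernoulliPercolation 1 P) :
    0 < P {ω | ∃ x, (G.percCluster ω x).Infinite} := by
  have hcV := countable_V G hconn x₀
  have hprob := hP.1
  have hcE : Countable G.edgeSet := by
    have : Countable (Sym2 V) := Quot.mk_surjective.countable
    infer_instance
  have h0 : ∀ e : G.edgeSet, P {ω | ω e = false} = 0 := by
    intro e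
    have := hP.2 {e} (fun _ => false)
    simpa using this
  have h1 : P (⋃ e : G.edgeSet, {ω | ω e = false}) = 0 := measure_iUnion_null h0
  have h2 : P {ω | ∃ x, (G.percCluster ω x).Infinite}ᶜ = 0 := by
    refine measure_mono_null (fun ω hω => ?_) h1
    by_contra hc
    simp only [Set.mem_iUnion, Set.mem_ofPred_eq, not_exists, Bool.not_eq_false] at hc
    apply hω
    refine ⟨x₀, ?_⟩
    have : G.percCluster ω x₀ = Set.univ := by
      ext y
      obtain ⟨w⟩ := hconn.preconnected x₀ y
      simp only [Set.mem_univ, iff_true]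
      exact ⟨w, fun e he => hc _⟩
    rw [this]
    exact Set.infinite_univ
  by_contra hc
  have h3 : P {ω | ∃ x, (G.percCluster ω x).Infinite} = 0 := by simpa using hc
  have h4 := measure_union_null h3 h2
  rw [Set.union_compl_self] at h4
  simp at h4

lemma pc_lower [∀ v, Fintype (G.neighborSet v)] [Infinite V] (hconn : G.Connected)
    (htrans : G.IsVertexTransitive) (x₀ : V) (P : ℝ → Measure (G.edgeSet → Bool))
    (hP : ∀ q ∈ Set.Icc (0:ℝ) 1, G.IsBernoulliPercolation q (P q)) :
    (G.connectiveConstant x₀)⁻¹ ≤ G.percCritical P := by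
  refine le_csInf ⟨1, by simp, perc_one G hconn x₀ _ (hP 1 (by simp))⟩ ?_
  rintro p ⟨hp, hpos⟩
  exact perc_lower G hconn htrans x₀ p hp (P p) (hP p hp) hpos

end perc

end Bub

/-- on a d-regular transitive graph with spectral radius `ρ < 1` and
`p_c (d-1) ρ < 1`, the bubble condition holds at the critical point `z = μ⁻¹`:
`Σ_x G_{μ⁻¹}(x)² < ∞`. -/
theorem stmt_15 {V : Type*} [DecidableEq V] (G : SimpleGraph V)
    [∀ v, Fintype (G.neighborSet v)] [Infinite V] (hconn : G.Connected)
    (htrans : G.IsVertexTransitive)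
    (d : ℕ) (hd : 2 ≤ d) (hreg : G.IsRegularOfDegree d)
    (x₀ : V) (ρ : ℝ) (hρ : G.spectralRadius x₀ = ρ) (hρ1 : ρ < 1)
    (P : ℝ → MeasureTheory.Measure (G.edgeSet → Bool))
    (hP : ∀ q ∈ Set.Icc (0:ℝ) 1, G.IsBernoulliPercolation q (P q))
    (hpc : G.percCritical P * ((d : ℝ) - 1) * ρ < 1) :
    (∑' x : V, (G.sawGen x₀ (G.connectiveConstant x₀)⁻¹ x) ^ 2) < ⊤ := by
  obtain ⟨v, rfl⟩ : ∃ v, d = v + 1 := ⟨d - 1, by omega⟩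
  have hv : 1 ≤ v := by omega
  have hz0 : 0 ≤ (G.connectiveConstant x₀)⁻¹ := inv_nonneg.2 (Bub.conn_nonneg G x₀)
  have hρ0 := (Bub.rho_facts G hreg x₀ ρ hρ).1
  have hle := Bub.pc_lower G hconn htrans x₀ P hP
  have hz : (G.connectiveConstant x₀)⁻¹ * v * ρ < 1 := by
    refine lt_of_le_of_lt ?_ hpc
    push_cast
    rw [add_sub_cancel_right]
    gcongr
  refine lt_of_le_of_lt ?_ (Bub.bubble G hv hreg x₀ ρ hρ hρ1 _ hz0 hz)
  refine ENNReal.tsum_le_tsum fun y => ?_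
  rw [SimpleGraph.sawGen]
  gcongr with k
  exact_mod_cast Bub.sawCountTo_le G x₀ y k
end
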